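/- arXiv:2510.27670 — 2 statements merged into one kernel-verified Lean document; each statement's English description precedes it below -/
import Mathlib

section
/- Let A₁, A₂, A₃ be hermitian 4×4 complex matrices whose joint numerical range W = W(A₁,A₂,A₃) has dimension 3. If W has three mutually distinct triangular faces, then W is a tetrahedron, i.e., W is the convex hull of four affinely independent points of ℝ³. -/
open Matrix ComplexOrder

noncomputable section

/-- A density matrix: positive semidefinite with unit trace. -/
def IsDensity {n : Type*} [Fintype n] (ρ : Matrix n n ℂ) : Prop :=
  ρ.PosSemidef ∧ ρ.trace = 1

/-- The measurement map `ρ ↦ (tr ρA₁, …, tr ρA_k)` (the traces are real for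
hermitian matrices). -/
def wpt {n : Type*} [Fintype n] {k : ℕ} (A : Fin k → Matrix n n ℂ)
    (ρ : Matrix n n ℂ) : Fin k → ℝ :=
  fun i => ((ρ * A i).trace).re

/-- The joint numerical range of `k` matrices. -/
def JNR {n : Type*} [Fintype n] {k : ℕ} (A : Fin k → Matrix n n ℂ) :
    Set (Fin k → ℝ) :=
  wpt A '' {ρ | IsDensity ρ}

/-- `F` is a face of the convex set `C`: a convex subset such that whenever an
open segment between two points of `C` meets `F`, both endpoints lie in `F`. -/
def IsFaceOf {E : Type*} [AddCommGroup E] [Module ℝ E] (C F : Set E) : Prop :=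
  Convex ℝ F ∧ IsExtreme ℝ C F

/-- The dimension of a convex set: the dimension of its affine hull. -/
def convDim {E : Type*} [AddCommGroup E] [Module ℝ E] (F : Set E) : ℕ :=
  Module.finrank ℝ (affineSpan ℝ F).direction

/-- Euclidean dot product on `Fin d → ℝ`. -/
def dotR {d : ℕ} (u v : Fin d → ℝ) : ℝ := ∑ i, u i * v i

/-- `F` is an exposed face of `C`: the set of minimizers of a linear functional. -/
def IsExposedFace {d : ℕ} (C F : Set (Fin d → ℝ)) : Prop :=
  ∃ u : Fin d → ℝ, F = {x ∈ C | ∀ y ∈ C, dotR u x ≤ dotR u y}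

/-- The normal cone of `C` at `p`. -/
def normalConeAt {d : ℕ} (C : Set (Fin d → ℝ)) (p : Fin d → ℝ) :
    Set (Fin d → ℝ) :=
  {u | ∀ y ∈ C, 0 ≤ dotR (y - p) u}

/-- `p` is a corner point of `C` if the normal cone of `C` at `p` spans `ℝ^d`. -/
def IsCornerPoint {d : ℕ} (C : Set (Fin d → ℝ)) (p : Fin d → ℝ) : Prop :=
  p ∈ C ∧ Submodule.span ℝ (normalConeAt C p) = ⊤

/-- The closed unit disk of `ℝ²`. -/
def unitDisk2 : Set (Fin 2 → ℝ) := {v | v 0 ^ 2 + v 1 ^ 2 ≤ 1}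

/-- An elliptic disk in `ℝ³`: the image of the closed unit disk of `ℝ²` under an
injective affine map. -/
def IsEllipticDisk (F : Set (Fin 3 → ℝ)) : Prop :=
  ∃ f : (Fin 2 → ℝ) →ᵃ[ℝ] (Fin 3 → ℝ), Function.Injective f ∧ F = f '' unitDisk2

/-- A non-elliptic face of `W`: a two-dimensional face that is not an elliptic
disk. -/
def IsNonEllipticFace (W F : Set (Fin 3 → ℝ)) : Prop :=
  IsFaceOf W F ∧ convDim F = 2 ∧ ¬ IsEllipticDisk F

/-- A rank-3 face of the joint numerical range of `A`. -/
def IsRank3Face {k : ℕ} (A : Fin k → Matrix (Fin 4) (Fin 4) ℂ)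
    (F : Set (Fin k → ℝ)) : Prop :=
  F.Nonempty ∧ IsFaceOf (JNR A) F ∧
    ∃ P : Matrix (Fin 4) (Fin 4) ℂ, Pᴴ = P ∧ P * P = P ∧ P.rank = 3 ∧
      ∀ ρ : Matrix (Fin 4) (Fin 4) ℂ, IsDensity ρ → (wpt A ρ ∈ F ↔ P * ρ * P = ρ)

/-- A triangular face: a face that is the convex hull of three affinely
independent points. -/
def IsTriangularFace (W F : Set (Fin 3 → ℝ)) : Prop :=
  IsFaceOf W F ∧ ∃ x y z : Fin 3 → ℝ, AffineIndependent ℝ ![x, y, z] ∧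
    F = convexHull ℝ {x, y, z}

/-!
Write `q v = (‖v‖², ⟨v, A₁v⟩, …, ⟨v, A_kv⟩)`, so that `W` is the convex hull of the points over
which the values of `q` lie on rays. Let `u` and `v` be pure states over two vertices of a simplex
that is a face of `W`. The parallelogram law keeps all values `q (u + r v)` in the cone over the
simplex; their barycentric coordinates are then nonnegative quadratic polynomials in `r` with no
constant or no leading term, so their linear coefficients vanish. Hence `q` is diagonal in the
vertex vectors of a simplex face.

The vertex vectors of two simplex faces together are linearly independent, so two facets with
`n - 1` vertices have at most `n` vertices between them. Three such facets either share `n - 2`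
vertices and have three further ones, or use only `n` vertices altogether. In the first case the
`n + 1` vertices would be affinely independent, which is impossible in dimension `n - 1`. In the
second case any two vertices lie in a common facet, so `q` is diagonal in a basis of `ℂⁿ` and `W`
is the simplex on the `n` vertices.
-/

section Homogenize

variable {E ι κ : Type*} [AddCommGroup E] [Module ℝ E] {W F : Set E} {X : Finset E}

/-- The lift of `x` to height one over `E`; it turns affine relations into linear ones. -/
def homogenize (x : E) : ℝ × E := (1, x)

lemma sum_smul_homogenize (s : Finset ι) (w : ι → ℝ) (z : ι → E) :
    ∑ i ∈ s, w i • homogenize (z i) = (∑ i ∈ s, w i, ∑ i ∈ s, w i • z i) := by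
  ext <;> simp [homogenize, Prod.fst_sum, Prod.snd_sum]

lemma affineIndependent_iff_linearIndependent_homogenize {p : ι → E} :
    AffineIndependent ℝ p ↔ LinearIndependent ℝ fun i ↦ homogenize (p i) := by
  rw [affineIndependent_iff, linearIndependent_iff']
  simp only [sum_smul_homogenize, Prod.mk_eq_zero, and_imp]

lemma affineIndependent_coe_finset_iff :
    AffineIndependent ℝ ((↑) : X → E) ↔
      ∀ w : E → ℝ, ∑ x ∈ X, w x • homogenize x = 0 → ∀ x ∈ X, w x = 0 :=
  affineIndependent_iff_linearIndependent_homogenize.trans linearIndepOn_finset_iff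

lemma mem_convexHull_iff_homogenize {g : E} :
    g ∈ convexHull ℝ (X : Set E) ↔
      ∃ w : E → ℝ, (∀ x ∈ X, 0 ≤ w x) ∧ ∑ x ∈ X, w x • homogenize x = homogenize g := by
  rw [Finset.mem_convexHull']
  refine exists_congr fun w ↦ and_congr_right fun _ ↦ ?_
  rw [sum_smul_homogenize X w fun x ↦ x, homogenize, Prod.mk.injEq]

lemma exists_smul_homogenize_of_sum (hF : Convex ℝ F) {s : Finset ι} {w : ι → ℝ} {z : ι → E}
    (hw : ∀ i ∈ s, 0 ≤ w i) (hs : 0 < ∑ i ∈ s, w i) (hz : ∀ i ∈ s, z i ∈ F) :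
    ∃ g ∈ F, ∑ i ∈ s, w i • homogenize (z i) = (∑ i ∈ s, w i) • homogenize g := by
  refine ⟨s.centerMass w z, hF.centerMass_mem hw hs hz, ?_⟩
  rw [sum_smul_homogenize, homogenize, Prod.smul_mk, smul_eq_mul, mul_one, Finset.centerMass,
    smul_inv_smul₀ hs.ne']

lemma mem_of_add_smul_homogenize_eq (hF : IsExtreme ℝ W F) {x y g : E} {a b c : ℝ}
    (hx : x ∈ W) (hy : y ∈ W) (hg : g ∈ F) (ha : 0 < a) (hb : 0 < b)
    (h : a • homogenize x + b • homogenize y = c • homogenize g) : x ∈ F := by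
  obtain ⟨hc, hsum⟩ : a + b = c ∧ a • x + b • y = c • g := by
    simpa [homogenize, Prod.ext_iff] using h
  subst hc
  refine hF.left_mem_of_mem_openSegment hx hy hg
    ⟨a / (a + b), b / (a + b), by positivity, by positivity, by field_simp, ?_⟩
  rw [div_eq_inv_mul, div_eq_inv_mul, mul_smul, mul_smul, ← smul_add, hsum,
    inv_smul_smul₀ (by positivity)]

lemma mem_of_sum_smul_homogenize_eq (hW : Convex ℝ W) (hFc : Convex ℝ F) (hF : IsExtreme ℝ W F)
    {s : Finset ι} {t : Finset κ} {w : ι → ℝ} {v : κ → ℝ} {z : ι → E} {y : κ → E}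
    (hw : ∀ i ∈ s, 0 ≤ w i) (hv : ∀ j ∈ t, 0 ≤ v j) (hz : ∀ i ∈ s, z i ∈ W)
    (hy : ∀ j ∈ t, y j ∈ F)
    (h : ∑ i ∈ s, w i • homogenize (z i) = ∑ j ∈ t, v j • homogenize (y j))
    {i : ι} (hi : i ∈ s) (hwi : 0 < w i) : z i ∈ F := by
  classical
  have hmass : ∑ i ∈ s, w i = ∑ j ∈ t, v j := by
    simpa only [sum_smul_homogenize] using congrArg Prod.fst h
  have hpos : 0 < ∑ j ∈ t, v j := hmass ▸ Finset.sum_pos' hw ⟨i, hi, hwi⟩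
  obtain ⟨g, hg, hgt⟩ := exists_smul_homogenize_of_sum hFc hv hpos hy
  rw [hgt, ← Finset.add_sum_erase s _ hi] at h
  have hw' : ∀ k ∈ s.erase i, 0 ≤ w k := fun k hk ↦ hw k (Finset.mem_of_mem_erase hk)
  rcases (Finset.sum_nonneg hw').eq_or_lt with hzero | hrest
  · -- all the other weights vanish; split the single remaining term into two halves
    refine mem_of_add_smul_homogenize_eq (c := ∑ j ∈ t, v j) hF (hz i hi) (hz i hi) hg
      (half_pos hwi) (half_pos hwi) ?_
    have hvanish := (Finset.sum_eq_zero_iff_of_nonneg hw').1 hzero.symm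
    rw [← h, Finset.sum_eq_zero fun k hk ↦ by rw [hvanish k hk, zero_smul], add_zero, ← add_smul,
      add_halves]
  · obtain ⟨y', hy', hrest'⟩ := exists_smul_homogenize_of_sum hW hw' hrest
      fun k hk ↦ hz k (Finset.mem_of_mem_erase hk)
    exact mem_of_add_smul_homogenize_eq hF (hz i hi) hy' hg hwi hrest (hrest' ▸ h)

lemma mem_of_pos_of_neg_mem (hW : Convex ℝ W) (hFc : Convex ℝ F) (hF : IsExtreme ℝ W F)
    {U : Finset E} (hU : (U : Set E) ⊆ W) {c : E → ℝ} (h : ∑ x ∈ U, c x • homogenize x = 0)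
    (hneg : ∀ x ∈ U, c x < 0 → x ∈ F) : ∀ x ∈ U, 0 < c x → x ∈ F := by
  intro x hx hcx
  have hbal : ∑ y ∈ U with 0 < c y, c y • homogenize y =
      ∑ y ∈ U with c y < 0, (-c y) • homogenize y := by
    have hdrop : ∑ y ∈ U with c y < 0, c y • homogenize y =
        ∑ y ∈ U with ¬ 0 < c y, c y • homogenize y := by
      refine Finset.sum_subset (Finset.monotone_filter_right U fun y _ hy ↦ hy.not_gt) ?_
      intro y hy hy'
      have : c y = 0 := by grind
      rw [this, zero_smul]
    rw [← Finset.sum_filter_add_sum_filter_not U (0 < c ·), ← hdrop] at h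
    simpa only [neg_smul, Finset.sum_neg_distrib] using eq_neg_of_add_eq_zero_left h
  refine mem_of_sum_smul_homogenize_eq (z := id) (y := id) hW hFc hF ?_ ?_ ?_ ?_ hbal
    (Finset.mem_filter.2 ⟨hx, hcx⟩) hcx <;>
    intro y hy <;> obtain ⟨hyU, hcy⟩ := Finset.mem_filter.1 hy
  · exact hcy.le
  · exact (neg_pos.2 hcy).le
  · exact hU hyU
  · exact hneg y hyU hcy

end Homogenize

section SimplexFaces

variable {E : Type*} [AddCommGroup E] [Module ℝ E] {W : Set E} {X : Finset E}

/-- The points of `X` are the vertices of a simplex that is a face of `W`. -/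
structure IsSimplexFace (W : Set E) (X : Finset E) : Prop where
  affineIndependent : AffineIndependent ℝ ((↑) : X → E)
  isExtreme : IsExtreme ℝ W (convexHull ℝ (X : Set E))

lemma subset_extremePoints_convexHull (hX : AffineIndependent ℝ ((↑) : X → E)) :
    (X : Set E) ⊆ (convexHull ℝ (X : Set E)).extremePoints ℝ := by
  classical
  intro x hx
  refine mem_extremePoints_iff_left.2 ⟨subset_convexHull ℝ _ hx, ?_⟩
  rintro y hy z hz ⟨a, b, ha, hb, hab, hxyz⟩
  obtain ⟨u, hu, huy⟩ := mem_convexHull_iff_homogenize.1 hy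
  obtain ⟨v, hv, hvz⟩ := mem_convexHull_iff_homogenize.1 hz
  have hrel : ∑ p ∈ X, (a * u p + b * v p - if p = x then 1 else 0) • homogenize p = 0 := by
    have hcomb : a • homogenize y + b • homogenize z = homogenize x := by
      simp [homogenize, hab, hxyz]
    simp only [sub_smul, add_smul, mul_smul, Finset.sum_sub_distrib, Finset.sum_add_distrib,
      ← Finset.smul_sum, huy, hvz, hcomb, ite_smul, one_smul, zero_smul]
    rw [Finset.sum_ite_eq' X x homogenize, if_pos (Finset.mem_coe.1 hx), sub_self]
  have hu_zero : ∀ p ∈ X, p ≠ x → u p = 0 := by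
    intro p hp hpx
    have := affineIndependent_coe_finset_iff.1 hX _ hrel p hp
    rw [if_neg hpx, sub_zero] at this
    nlinarith [hu p hp, hv p hp, mul_nonneg hb.le (hv p hp), mul_nonneg ha.le (hu p hp)]
  rw [Finset.sum_eq_single_of_mem x hx fun p hp hpx ↦ by rw [hu_zero p hp hpx, zero_smul]] at huy
  simp only [homogenize, Prod.smul_mk, Prod.mk.injEq, smul_eq_mul, mul_one] at huy
  rw [← huy.2, huy.1, one_smul]

lemma IsSimplexFace.subset_extremePoints (hX : IsSimplexFace W X) :
    (X : Set E) ⊆ W.extremePoints ℝ :=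
  (subset_extremePoints_convexHull hX.affineIndependent).trans
    hX.isExtreme.extremePoints_subset_extremePoints

lemma IsSimplexFace.mem_of_mem_convexHull (hX : IsSimplexFace W X) {x : E}
    (hx : x ∈ W.extremePoints ℝ) (hxX : x ∈ convexHull ℝ (X : Set E)) : x ∈ X :=
  extremePoints_convexHull_subset
    (inter_extremePoints_subset_extremePoints_of_subset hX.isExtreme.subset ⟨hxX, hx⟩)

lemma IsSimplexFace.mem_of_pos_of_neg_mem (hW : Convex ℝ W) (hX : IsSimplexFace W X)
    {U : Finset E} (hU : (U : Set E) ⊆ W.extremePoints ℝ) {c : E → ℝ}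
    (h : ∑ x ∈ U, c x • homogenize x = 0) (hneg : ∀ x ∈ U, c x < 0 → x ∈ X) :
    ∀ x ∈ U, 0 < c x → x ∈ X := fun x hx hcx ↦
  hX.mem_of_mem_convexHull (hU hx) <| _root_.mem_of_pos_of_neg_mem hW (convex_convexHull ℝ _)
    hX.isExtreme (hU.trans extremePoints_subset) h
    (fun y hy hcy ↦ subset_convexHull ℝ _ (hneg y hy hcy)) x hx hcx

end SimplexFaces

section Sunflower

variable {E : Type*} [AddCommGroup E] [Module ℝ E] {W : Set E} {D : Finset E} [DecidableEq E]
  {r : Fin 3 → E}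

lemma petal_coeff_eq_zero_of_nonneg (hW : Convex ℝ W) (hr : Function.Injective r)
    (hface : ∀ j, IsSimplexFace W (insert (r j) D)) (hrD : ∀ j, r j ∉ D) {c : E → ℝ}
    (hc : ∑ x ∈ D ∪ Finset.univ.image r, c x • homogenize x = 0) {j : Fin 3}
    (hj : ∀ k, k ≠ j → 0 ≤ c (r k)) : ∀ k, k ≠ j → c (r k) = 0 := by
  intro k hk
  by_contra hne
  have hU : ((D ∪ Finset.univ.image r : Finset E) : Set E) ⊆ W.extremePoints ℝ := by
    intro x hx
    obtain hx | ⟨i, rfl⟩ : x ∈ D ∨ ∃ i, r i = x := by simpa using hx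
    · exact (hface j).subset_extremePoints (Finset.mem_insert_of_mem hx)
    · exact (hface i).subset_extremePoints (Finset.mem_insert_self _ _)
  have hmem : r k ∈ insert (r j) D := by
    refine (hface j).mem_of_pos_of_neg_mem hW hU hc ?_ (r k) (by simp)
      ((hj k hk).lt_of_ne' hne)
    intro x hx hneg
    obtain hx | ⟨i, rfl⟩ : x ∈ D ∨ ∃ i, r i = x := by simpa using hx
    · exact Finset.mem_insert_of_mem hx
    · obtain rfl : i = j := by_contra fun hij ↦ hneg.not_ge (hj i hij)
      exact Finset.mem_insert_self _ _
  exact (Finset.mem_insert.1 hmem).elim (hr.ne hk) (hrD k)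

lemma exists_index_weakly_same_sign (s : Fin 3 → ℝ) :
    ∃ j, (∀ k, k ≠ j → 0 ≤ s k) ∨ ∀ k, k ≠ j → 0 ≤ -s k := by
  simp only [Fin.exists_fin_succ, Fin.forall_fin_succ, neg_nonneg]
  grind

lemma affineIndependent_union_petals (hW : Convex ℝ W) (hr : Function.Injective r)
    (hrD : ∀ j, r j ∉ D) (hface : ∀ j, IsSimplexFace W (insert (r j) D)) :
    AffineIndependent ℝ ((↑) : (D ∪ Finset.univ.image r : Finset E) → E) := by
  refine affineIndependent_coe_finset_iff.2 fun c hc ↦ ?_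
  obtain ⟨j, hj⟩ : ∃ j, ∀ k, k ≠ j → c (r k) = 0 := by
    obtain ⟨j, hj | hj⟩ := exists_index_weakly_same_sign fun k ↦ c (r k)
    · exact ⟨j, petal_coeff_eq_zero_of_nonneg hW hr hface hrD hc hj⟩
    · have hc' : ∑ x ∈ D ∪ Finset.univ.image r, (-c x) • homogenize x = 0 := by
        simp only [neg_smul, Finset.sum_neg_distrib, hc, neg_zero]
      exact ⟨j, fun k hk ↦ neg_eq_zero.1
        (petal_coeff_eq_zero_of_nonneg (c := fun x ↦ -c x) hW hr hface hrD hc' hj k hk)⟩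
  have hout : ∀ x ∈ D ∪ Finset.univ.image r, x ∉ insert (r j) D → c x = 0 := by
    intro x hx hxj
    obtain hx | ⟨i, rfl⟩ : x ∈ D ∨ ∃ i, r i = x := by simpa using hx
    · exact absurd (Finset.mem_insert_of_mem hx) hxj
    · exact hj i fun hij ↦ hxj (hij ▸ Finset.mem_insert_self _ _)
  have hsub : insert (r j) D ⊆ D ∪ Finset.univ.image r := by
    grind
  rw [← Finset.sum_subset hsub fun x hx hxj ↦ by rw [hout x hx hxj, zero_smul]] at hc
  have hin := affineIndependent_coe_finset_iff.1 (hface j).affineIndependent c hc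
  exact fun x hx ↦ if hxj : x ∈ insert (r j) D then hin x hxj else hout x hx hxj

end Sunflower

section AlmostEqualFinsets

variable {α : Type*} {X : Fin 3 → Finset α}

lemma exists_mem_mem_of_card_union_eq (hX : Function.Injective X) {U : Finset α}
    (hXU : ∀ j, X j ⊆ U) (hcard : ∀ j, (X j).card + 1 = U.card) :
    ∀ x ∈ U, ∀ y ∈ U, ∃ j, x ∈ X j ∧ y ∈ X j := by
  classical
  choose a ha using fun j ↦ Finset.exists_eq_insert_iff.2 ⟨hXU j, hcard j⟩
  have ha_inj : Function.Injective a := fun i j hij ↦ hX <| by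
    rw [← Finset.erase_insert (ha i).1, ← Finset.erase_insert (ha j).1, (ha i).2, (ha j).2, hij]
  intro x hx y hy
  obtain ⟨j, hjx, hjy⟩ : ∃ j, a j ≠ x ∧ a j ≠ y := by
    have h01 := ha_inj.ne (show (0 : Fin 3) ≠ 1 by decide)
    have h02 := ha_inj.ne (show (0 : Fin 3) ≠ 2 by decide)
    have h12 := ha_inj.ne (show (1 : Fin 3) ≠ 2 by decide)
    simp only [Fin.exists_fin_succ]
    grind
  have hmem {z} (hz : z ∈ U) (hjz : a j ≠ z) : z ∈ X j :=
    Finset.mem_of_mem_insert_of_ne ((ha j).2 ▸ hz) hjz.symm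
  exact ⟨j, hmem hx hjx, hmem hy hjy⟩

variable [DecidableEq α] {N : ℕ}

lemma exists_common_kernel_of_not_subset (hX : Function.Injective X)
    (hcard : ∀ j, (X j).card + 1 = N) (hunion : ∀ i j, (X i ∪ X j).card ≤ N)
    (hsub : ¬ X 2 ⊆ X 0 ∪ X 1) :
    ∃ D r, Function.Injective r ∧ ∀ j, r j ∉ D ∧ insert (r j) D = X j := by
  obtain ⟨p, hp, hp01⟩ := Finset.not_subset.1 hsub
  have hp' : ∀ j, j ≠ 2 → p ∉ X j := by
    simpa [Fin.forall_fin_succ] using hp01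
  have hkernel : ∀ j, (X 2).erase p ⊆ X j := by
    intro j
    rcases eq_or_ne j 2 with rfl | hj
    · exact Finset.erase_subset _ _
    intro x hx
    by_contra hxj
    have hpair : ({x, p} : Finset α) ⊆ X 2 \ X j := by grind
    have hpair_card := Finset.card_le_card hpair
    rw [Finset.card_pair (Finset.ne_of_mem_erase hx)] at hpair_card
    have hsdiff := Finset.card_sdiff_add_card (X 2) (X j)
    have := hunion 2 j
    have := hcard j
    omega
  have hcard_erase (j) : ((X 2).erase p).card + 1 = (X j).card := by
    rw [Finset.card_erase_add_one hp]
    linarith [hcard 2, hcard j]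
  choose r hr using fun j ↦ Finset.exists_eq_insert_iff.2 ⟨hkernel j, hcard_erase j⟩
  exact ⟨_, r, fun i j hij ↦ hX (by rw [← (hr i).2, ← (hr j).2, hij]), hr⟩

lemma card_union_eq_of_ne {s t : Finset α} (hst : s ≠ t) (hs : s.card + 1 = N)
    (ht : t.card + 1 = N) (hunion : (s ∪ t).card ≤ N) : (s ∪ t).card = N := by
  by_contra hne
  have hle : (s ∪ t).card ≤ s.card := by omega
  have hs_eq := Finset.eq_of_subset_of_card_le Finset.subset_union_left hle
  have hts : t ⊆ s := Finset.union_eq_left.1 hs_eq.symm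
  exact hst (Finset.eq_of_subset_of_card_le hts (by omega)).symm

end AlmostEqualFinsets

section MomentMap

variable {n : Type*} [Fintype n] {k : ℕ} (A : Fin k → Matrix n n ℂ)

/-- The real linear map `ρ ↦ (Re tr ρ, wpt A ρ)`. It takes the density matrices to the copy of
`JNR A` at height one. -/
def traceWpt : Matrix n n ℂ →ₗ[ℝ] ℝ × (Fin k → ℝ) where
  toFun ρ := (ρ.trace.re, wpt A ρ)
  map_add' ρ σ := by ext <;> simp [wpt, add_mul]
  map_smul' c ρ := by ext <;> simp [wpt]

/-- The quadratic map `v ↦ (‖v‖², Re ⟨v, A₁v⟩, …, Re ⟨v, A_kv⟩)`, that is, `traceWpt A` at the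
rank-one matrix `vv*`. Up to scaling, its values are the lifts of the points of pure states. -/
def momentMap : QuadraticMap ℝ (n → ℂ) (ℝ × (Fin k → ℝ)) :=
  (traceWpt A).compQuadraticMap <| LinearMap.BilinMap.toQuadraticMap <|
    LinearMap.mk₂ ℝ (fun u v : n → ℂ ↦ vecMulVec u (star v))
      (fun u v w ↦ add_vecMulVec u v (star w)) (fun c u v ↦ smul_vecMulVec c u (star v))
      (fun u v w ↦ by rw [star_add, vecMulVec_add])
      (fun c u v ↦ by rw [star_smul, star_trivial, vecMulVec_smul])

lemma momentMap_apply (v : n → ℂ) : momentMap A v = traceWpt A (vecMulVec v (star v)) := rfl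

lemma fst_momentMap (v : n → ℂ) : (momentMap A v).1 = ∑ i, Complex.normSq (v i) := by
  simp [momentMap_apply, traceWpt, trace, vecMulVec, Complex.mul_conj]

lemma fst_momentMap_nonneg (v : n → ℂ) : 0 ≤ (momentMap A v).1 := by
  rw [fst_momentMap]
  exact Finset.sum_nonneg fun i _ ↦ Complex.normSq_nonneg _

lemma eq_zero_of_fst_momentMap_eq_zero {v : n → ℂ} (hv : (momentMap A v).1 = 0) : v = 0 := by
  rw [fst_momentMap, Finset.sum_eq_zero_iff_of_nonneg fun i _ ↦ Complex.normSq_nonneg _] at hv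
  exact funext fun i ↦ Complex.normSq_eq_zero.1 (hv i (Finset.mem_univ i))

lemma momentMap_smul (c : ℂ) (v : n → ℂ) :
    momentMap A (c • v) = Complex.normSq c • momentMap A v := by
  have hrank : vecMulVec (c • v) (star (c • v)) = Complex.normSq c • vecMulVec v (star v) := by
    rw [star_smul, smul_vecMulVec, vecMulVec_smul, smul_smul, Complex.star_def, Complex.mul_conj,
      Complex.coe_smul]
  rw [momentMap_apply, momentMap_apply, ← map_smul, hrank]

lemma mem_JNR_iff {x : Fin k → ℝ} :
    x ∈ JNR A ↔ ∃ ρ : Matrix n n ℂ, ρ.PosSemidef ∧ traceWpt A ρ = homogenize x := by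
  simp only [JNR, IsDensity, Set.mem_image, Set.mem_ofPred_eq, and_assoc, traceWpt, homogenize,
    LinearMap.coe_mk, AddHom.coe_mk, Prod.mk.injEq]
  refine exists_congr fun ρ ↦ and_congr_right fun hρ ↦ and_congr_left fun _ ↦ ?_
  rw [Complex.ext_iff, Complex.one_re, Complex.one_im, and_iff_left_iff_imp]
  exact fun _ ↦ (Complex.nonneg_iff.1 hρ.trace_nonneg).2.symm

lemma convex_JNR : Convex ℝ (JNR A) := by
  intro x hx y hy a b ha hb hab
  obtain ⟨ρ, hρ, hρx⟩ := (mem_JNR_iff A).1 hx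
  obtain ⟨σ, hσ, hσy⟩ := (mem_JNR_iff A).1 hy
  refine (mem_JNR_iff A).2 ⟨a • ρ + b • σ, (hρ.smul ha).add (hσ.smul hb), ?_⟩
  simp [hρx, hσy, homogenize, hab]

/-- The points of `JNR A` given by pure states, that is, by rank-one density matrices. -/
def purePoints : Set (Fin k → ℝ) := {x | ∃ v, momentMap A v = homogenize x}

lemma exists_momentMap_eq_smul_of_ne_zero {v : n → ℂ} (hv : v ≠ 0) :
    ∃ x ∈ purePoints A, momentMap A v = (momentMap A v).1 • homogenize x := by
  set t := (momentMap A v).1 with ht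
  have ht0 : 0 < t := (fst_momentMap_nonneg A v).lt_of_ne' fun h ↦
    hv (eq_zero_of_fst_momentMap_eq_zero A h)
  have hlift : homogenize (t⁻¹ • (momentMap A v).2) = t⁻¹ • momentMap A v := by
    ext <;> simp [homogenize, ← ht, ht0.ne']
  refine ⟨t⁻¹ • (momentMap A v).2, ⟨(√t)⁻¹ • v, ?_⟩, ?_⟩
  · rw [QuadraticMap.map_smul, ← mul_inv, Real.mul_self_sqrt ht0.le, hlift]
  · rw [hlift, smul_inv_smul₀ ht0.ne']

lemma exists_momentMap_eq_smul [Nonempty n] (v : n → ℂ) :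
    ∃ t : ℝ, 0 ≤ t ∧ ∃ x ∈ purePoints A, momentMap A v = t • homogenize x := by
  rcases eq_or_ne v 0 with rfl | hv
  · obtain ⟨x, hx, -⟩ := exists_momentMap_eq_smul_of_ne_zero A (one_ne_zero (α := n → ℂ))
    exact ⟨0, le_rfl, x, hx, by rw [QuadraticMap.map_zero, zero_smul]⟩
  · exact ⟨_, fst_momentMap_nonneg A v, exists_momentMap_eq_smul_of_ne_zero A hv⟩

lemma purePoints_subset_JNR : purePoints A ⊆ JNR A := by
  rintro x ⟨v, hv⟩
  exact (mem_JNR_iff A).2 ⟨_, posSemidef_vecMulVec_self_star v, hv⟩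

lemma JNR_eq_convexHull_purePoints [Nonempty n] : JNR A = convexHull ℝ (purePoints A) := by
  refine subset_antisymm (fun x hx ↦ ?_) (convexHull_min (purePoints_subset_JNR A) (convex_JNR A))
  obtain ⟨ρ, hρ, hρx⟩ := (mem_JNR_iff A).1 hx
  obtain ⟨m, v, rfl⟩ := posSemidef_iff_eq_sum_vecMulVec.1 hρ
  choose t ht y hy hty using fun i ↦ exists_momentMap_eq_smul A (v i)
  have hsum : ∑ i, t i • homogenize (y i) = homogenize x := by
    simp_rw [← hρx, map_sum, ← momentMap_apply, hty]
  rw [sum_smul_homogenize, homogenize, Prod.mk.injEq] at hsum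
  rw [← hsum.2]
  exact (convex_convexHull ℝ _).sum_mem (fun i _ ↦ ht i) hsum.1
    fun i _ ↦ subset_convexHull ℝ _ (hy i)

lemma extremePoints_JNR_subset_purePoints [Nonempty n] :
    (JNR A).extremePoints ℝ ⊆ purePoints A := by
  rw [JNR_eq_convexHull_purePoints]
  exact extremePoints_convexHull_subset

end MomentMap

section Decoupling

lemma polar_eq_zero_of_nonneg_combination {V M ι : Type*} [AddCommGroup V] [Module ℝ V]
    [AddCommGroup M] [Module ℝ M] [Fintype ι] {q : QuadraticMap ℝ V M} {Z : ι → M}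
    (hZ : LinearIndependent ℝ Z) {u v : V} {i j : ι} (hij : i ≠ j) {a b : ℝ}
    (hu : q u = a • Z i) (hv : q v = b • Z j)
    (h : ∀ r : ℝ, ∃ w : ι → ℝ, (∀ m, 0 ≤ w m) ∧ q (u + r • v) = ∑ m, w m • Z m) :
    QuadraticMap.polar q u v = 0 := by
  classical
  choose w hw hwq using h
  set L := Fintype.linearCombination ℝ Z
  replace hwq (r : ℝ) : q (u + r • v) = L (w r) := hwq r
  replace hu : q u = L (Pi.single i a) := by rw [hu, Fintype.linearCombination_apply_single]
  replace hv : q v = L (Pi.single j b) := by rw [hv, Fintype.linearCombination_apply_single]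
  have hexpand (r : ℝ) : L (w r) = q u + (r * r) • q v + r • QuadraticMap.polar q u v := by
    rw [← hwq, QuadraticMap.map_add q, QuadraticMap.map_smul, QuadraticMap.polar_smul_right]
  obtain ⟨α, hα⟩ : ∃ α, QuadraticMap.polar q u v = L α := by
    refine ⟨w 1 - Pi.single i a - Pi.single j b, ?_⟩
    rw [map_sub, map_sub, hexpand, ← hu, ← hv]
    module
  have hcoeff (r : ℝ) (m : ι) :
      w r m = (Pi.single j b : ι → ℝ) m * (r * r) + α m * r + (Pi.single i a : ι → ℝ) m := by
    have hw_eq : w r = Pi.single i a + (r * r) • Pi.single j b + r • α :=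
      hZ.fintypeLinearCombination_injective <| by
        rw [map_add, map_add, map_smul, map_smul]
        exact (hexpand r).trans (by rw [hu, hv, hα])
    simp only [hw_eq, Pi.add_apply, Pi.smul_apply, smul_eq_mul]
    ring
  have hα_zero (m : ι) : α m = 0 := by
    have hdiscrim := discrim_le_zero fun r ↦ (hw r m).trans_eq (hcoeff r m)
    have hprod : (Pi.single j b : ι → ℝ) m * (Pi.single i a : ι → ℝ) m = 0 := by
      rcases eq_or_ne m j with rfl | hm
      · rw [Pi.single_eq_of_ne hij.symm, mul_zero]
      · rw [Pi.single_eq_of_ne hm, zero_mul]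
    rw [discrim, mul_assoc, hprod] at hdiscrim
    nlinarith
  rw [hα, show α = 0 from funext hα_zero, map_zero]

variable {n : Type*} [Fintype n] [Nonempty n] {k : ℕ} {A : Fin k → Matrix n n ℂ}
  {F : Set (Fin k → ℝ)} {X : Finset (Fin k → ℝ)} {x y : Fin k → ℝ} {u v : n → ℂ}

lemma exists_momentMap_add_eq_smul_of_face (hFc : Convex ℝ F)
    (hF : IsExtreme ℝ (JNR A) F) (hx : x ∈ F) (hy : y ∈ F) {a b : ℝ} (ha : 0 ≤ a) (hb : 0 ≤ b)
    (hu : momentMap A u = a • homogenize x) (hv : momentMap A v = b • homogenize y) :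
    ∃ s : ℝ, 0 ≤ s ∧ ∃ g ∈ F, momentMap A (u + v) = s • homogenize g := by
  obtain ⟨s, hs, g, hg, hsum⟩ := exists_momentMap_eq_smul A (u + v)
  obtain ⟨t, ht, g', hg', hdiff⟩ := exists_momentMap_eq_smul A (u - v)
  have hparallelogram : s • homogenize g + t • homogenize g' =
      (2 * a) • homogenize x + (2 * b) • homogenize y := by
    rw [← hsum, ← hdiff, sub_eq_add_neg, QuadraticMap.map_add (momentMap A),
      QuadraticMap.map_add (momentMap A), QuadraticMap.polar_neg_right, QuadraticMap.map_neg,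
      hu, hv]
    module
  rcases hs.eq_or_lt with rfl | hs
  · exact ⟨0, le_rfl, x, hx, by rw [hsum, zero_smul, zero_smul]⟩
  refine ⟨s, hs.le, g, ?_, hsum⟩
  have hW := purePoints_subset_JNR A
  refine mem_of_sum_smul_homogenize_eq (s := Finset.univ) (t := Finset.univ) (i := (0 : Fin 2))
    (w := ![s, t]) (z := ![g, g']) (v := ![2 * a, 2 * b]) (y := ![x, y])
    (convex_JNR A) hFc hF ?_ ?_ ?_ ?_ ?_ (Finset.mem_univ 0) hs
  all_goals simp [Fin.forall_fin_two, Fin.sum_univ_two, *, hs.le, hW hg, hW hg']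

/-- The quadratic map `momentMap A` is orthogonally additive on the complex lines through `u`
and `v`: no matrix of `A` has a cross term between them. -/
def Decoupled (A : Fin k → Matrix n n ℂ) (u v : n → ℂ) : Prop :=
  ∀ a b : ℂ, QuadraticMap.polar (momentMap A) (a • u) (b • v) = 0

lemma IsSimplexFace.decoupled (hX : IsSimplexFace (JNR A) X) (hx : x ∈ X) (hy : y ∈ X)
    (hxy : x ≠ y) (hu : momentMap A u = homogenize x) (hv : momentMap A v = homogenize y) :
    Decoupled A u v := by
  intro a b
  have hau : momentMap A (a • u) = Complex.normSq a • homogenize x := by rw [momentMap_smul, hu]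
  have hbv : momentMap A (b • v) = Complex.normSq b • homogenize y := by rw [momentMap_smul, hv]
  have hindep := affineIndependent_iff_linearIndependent_homogenize.1 hX.affineIndependent
  refine polar_eq_zero_of_nonneg_combination hindep (i := ⟨x, hx⟩) (j := ⟨y, hy⟩)
    (fun h ↦ hxy (congrArg Subtype.val h)) hau hbv fun r ↦ ?_
  have hrbv : momentMap A (r • b • v) = (r * r * Complex.normSq b) • homogenize y := by
    rw [QuadraticMap.map_smul, hbv, smul_smul]
  obtain ⟨s, hs, g, hg, hsg⟩ := exists_momentMap_add_eq_smul_of_face (convex_convexHull ℝ _)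
    hX.isExtreme (subset_convexHull ℝ _ hx) (subset_convexHull ℝ _ hy)
    (Complex.normSq_nonneg a) (mul_nonneg (mul_self_nonneg r) (Complex.normSq_nonneg b))
    hau hrbv
  obtain ⟨w, hw, hwg⟩ := mem_convexHull_iff_homogenize.1 hg
  refine ⟨fun m ↦ s * w m, fun m ↦ mul_nonneg hs (hw m m.2), ?_⟩
  simp only [hsg, ← hwg, Finset.smul_sum, smul_smul]
  exact (Finset.sum_coe_sort X fun m ↦ (s * w m) • homogenize m).symm

end Decoupling

section Frames

variable {n : Type*} [Fintype n] {k : ℕ} {A : Fin k → Matrix n n ℂ}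
  {U X Y : Finset (Fin k → ℝ)} {e : (Fin k → ℝ) → n → ℂ}

/-- The vectors `e x`, for `x ∈ U`, are pure states over the points of `U` and are pairwise
decoupled, so that `momentMap A` is diagonal in them (`IsFrame.momentMap_sum`). -/
structure IsFrame (A : Fin k → Matrix n n ℂ) (U : Finset (Fin k → ℝ))
    (e : (Fin k → ℝ) → n → ℂ) : Prop where
  momentMap_eq : ∀ x ∈ U, momentMap A (e x) = homogenize x
  decoupled : (U : Set (Fin k → ℝ)).Pairwise fun x y ↦ Decoupled A (e x) (e y)

lemma IsFrame.momentMap_sum (he : IsFrame A U e) (c : (Fin k → ℝ) → ℂ) :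
    momentMap A (∑ x ∈ U, c x • e x) = ∑ x ∈ U, Complex.normSq (c x) • homogenize x := by
  classical
  have hcross : ∑ ij ∈ U.sym2 with ¬ ij.IsDiag,
      QuadraticMap.polarSym2 (momentMap A) (ij.map fun x ↦ c x • e x) = 0 := by
    refine Finset.sum_eq_zero fun ij hij ↦ ?_
    obtain ⟨hij, hdiag⟩ := Finset.mem_filter.1 hij
    induction ij with | _ x y
    rw [Finset.mk_mem_sym2_iff] at hij
    exact he.decoupled hij.1 hij.2 hdiag (c x) (c y)
  rw [QuadraticMap.map_sum, hcross, add_zero]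
  exact Finset.sum_congr rfl fun x hx ↦ by rw [momentMap_smul, he.momentMap_eq x hx]

lemma IsFrame.mono (he : IsFrame A U e) (hXU : X ⊆ U) : IsFrame A X e :=
  ⟨fun x hx ↦ he.momentMap_eq x (hXU hx), he.decoupled.mono hXU⟩

lemma IsSimplexFace.isFrame [Nonempty n] (hX : IsSimplexFace (JNR A) X)
    (he : ∀ x ∈ X, momentMap A (e x) = homogenize x) : IsFrame A X e :=
  ⟨he, fun x hx y hy hxy ↦ hX.decoupled hx hy hxy (he x hx) (he y hy)⟩

-- A vanishing combination would equate a mixture of `Y \ X` with a mixture in the face over `X`.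
lemma IsSimplexFace.linearIndepOn_union [DecidableEq (Fin k → ℝ)]
    (hX : IsSimplexFace (JNR A) X) (hY : (Y : Set (Fin k → ℝ)) ⊆ (JNR A).extremePoints ℝ)
    (heX : IsFrame A X e) (heY : IsFrame A Y e) :
    LinearIndepOn ℂ e ((X ∪ Y : Finset (Fin k → ℝ)) : Set (Fin k → ℝ)) := by
  refine linearIndepOn_finset_iff.2 fun c hc ↦ ?_
  rw [← Finset.union_sdiff_self_eq_union, Finset.sum_union Finset.disjoint_sdiff] at hc
  have hmix : ∑ x ∈ Y \ X, Complex.normSq (c x) • homogenize x =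
      ∑ x ∈ X, Complex.normSq (c x) • homogenize x := by
    rw [← heX.momentMap_sum, ← (heY.mono Finset.sdiff_subset).momentMap_sum,
      eq_neg_of_add_eq_zero_left hc, QuadraticMap.map_neg]
  have hY_zero : ∀ x ∈ Y \ X, c x = 0 := by
    intro x hx
    obtain ⟨hxY, hxX⟩ := Finset.mem_sdiff.1 hx
    by_contra hcx
    refine hxX (hX.mem_of_mem_convexHull (hY hxY) ?_)
    exact mem_of_sum_smul_homogenize_eq (z := id) (y := id) (convex_JNR A) (convex_convexHull ℝ _)
      hX.isExtreme (fun _ _ ↦ Complex.normSq_nonneg _) (fun _ _ ↦ Complex.normSq_nonneg _)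
      (fun y hy ↦ extremePoints_subset (hY (Finset.mem_sdiff.1 hy).1))
      (fun y hy ↦ subset_convexHull ℝ _ hy) hmix hx (Complex.normSq_pos.2 hcx)
  have hX_zero : ∀ x ∈ X, Complex.normSq (c x) = 0 := by
    refine affineIndependent_coe_finset_iff.1 hX.affineIndependent _ (hmix ▸ ?_)
    exact Finset.sum_eq_zero fun x hx ↦ by rw [hY_zero x hx, Complex.normSq_zero, zero_smul]
  intro x hx
  by_cases hxX : x ∈ X
  · exact Complex.normSq_eq_zero.1 (hX_zero x hxX)
  · exact hY_zero x (by grind)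

lemma IsFrame.JNR_eq_convexHull [Nonempty n] (he : IsFrame A U e)
    (hspan : Submodule.span ℂ (e '' U) = ⊤) : JNR A = convexHull ℝ (U : Set (Fin k → ℝ)) := by
  rw [JNR_eq_convexHull_purePoints]
  refine subset_antisymm (convexHull_min ?_ (convex_convexHull ℝ _))
    (convexHull_mono fun x hx ↦ ⟨e x, he.momentMap_eq x hx⟩)
  rintro x ⟨v, hv⟩
  have hv_span : v ∈ Submodule.span ℂ (e '' U) := hspan ▸ Submodule.mem_top
  obtain ⟨c, rfl⟩ := Submodule.mem_span_image_finset_iff_exists_fun' ℂ |>.1 hv_span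
  exact mem_convexHull_iff_homogenize.2
    ⟨_, fun x _ ↦ Complex.normSq_nonneg (c x), (he.momentMap_sum c).symm.trans hv⟩

end Frames

section Dimension

variable {E : Type*} [AddCommGroup E] [Module ℝ E] {W : Set E} {X : Finset E}

lemma card_le_convDim_add_one [FiniteDimensional ℝ E] (hX : AffineIndependent ℝ ((↑) : X → E))
    (hXW : (X : Set E) ⊆ W) : X.card ≤ convDim W + 1 := by
  have hcard := hX.card_le_finrank_succ
  rw [Subtype.range_coe_subtype, Fintype.card_coe] at hcard
  rw [convDim, direction_affineSpan]
  exact hcard.trans (Nat.succ_le_succ (Submodule.finrank_mono (vectorSpan_mono ℝ hXW)))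

lemma affineIndependent_of_card_eq_convDim_add_one
    (hX : X.card = convDim (convexHull ℝ (X : Set E)) + 1) :
    AffineIndependent ℝ ((↑) : X → E) := by
  rw [convDim, affineSpan_convexHull, direction_affineSpan] at hX
  rw [affineIndependent_iff_finrank_vectorSpan_eq ℝ _ (by rw [Fintype.card_coe, hX]),
    Subtype.range_coe_subtype]
  rfl

lemma card_add_two_le_convDim_of_common_kernel [FiniteDimensional ℝ E] [DecidableEq E]
    (hW : Convex ℝ W) {D : Finset E} {r : Fin 3 → E} (hr : Function.Injective r)
    (hrD : ∀ j, r j ∉ D) (hface : ∀ j, IsSimplexFace W (insert (r j) D)) :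
    D.card + 2 ≤ convDim W := by
  have hsub : ((D ∪ Finset.univ.image r : Finset E) : Set E) ⊆ W := by
    intro x hx
    obtain hx | ⟨j, rfl⟩ : x ∈ D ∨ ∃ j, r j = x := by simpa using hx
    · exact extremePoints_subset ((hface 0).subset_extremePoints (Finset.mem_insert_of_mem hx))
    · exact extremePoints_subset ((hface j).subset_extremePoints (Finset.mem_insert_self _ _))
  have hcard : (D ∪ Finset.univ.image r).card = D.card + 3 := by
    rw [Finset.card_union_of_disjoint (by simpa [Finset.disjoint_right] using hrD),
      Finset.card_image_of_injective _ hr, Finset.card_univ, Fintype.card_fin]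
  have := card_le_convDim_add_one (affineIndependent_union_petals hW hr hrD hface) hsub
  omega

end Dimension

section Main

lemma IsFrame.exists_affineIndependent {n : Type*} [Fintype n] [Nonempty n] {k : ℕ}
    {A : Fin k → Matrix n n ℂ} {U : Finset (Fin k → ℝ)} {e : (Fin k → ℝ) → n → ℂ}
    (hdim : convDim (JNR A) + 1 = Fintype.card n) (he : IsFrame A U e)
    (hindep : LinearIndepOn ℂ e (U : Set (Fin k → ℝ))) (hcard : U.card = Fintype.card n) :
    ∃ v : n → (Fin k → ℝ), AffineIndependent ℝ v ∧ JNR A = convexHull ℝ (Set.range v) := by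
  have hspan : Submodule.span ℂ (e '' U) = ⊤ := by
    rw [Set.image_eq_range]
    exact hindep.span_eq_top_of_card_eq_finrank' (by simp [hcard])
  have hhull := he.JNR_eq_convexHull hspan
  have hU := affineIndependent_of_card_eq_convDim_add_one (by rw [← hhull, hdim, hcard])
  let f : n ≃ U := Fintype.equivOfCardEq (by rw [Fintype.card_coe, hcard])
  refine ⟨(↑) ∘ f, hU.comp_embedding f.toEmbedding, ?_⟩
  rw [hhull, f.surjective.range_comp Subtype.val, Subtype.range_coe_subtype]
  rfl

lemma IsTriangularFace.exists_isSimplexFace {W F : Set (Fin 3 → ℝ)} (hF : IsTriangularFace W F) :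
    ∃ X : Finset (Fin 3 → ℝ), X.card = 3 ∧ IsSimplexFace W X ∧ F = convexHull ℝ X := by
  classical
  obtain ⟨⟨-, hext⟩, x, y, z, hxyz, rfl⟩ := hF
  have hrange : (({x, y, z} : Finset (Fin 3 → ℝ)) : Set (Fin 3 → ℝ)) = Set.range ![x, y, z] := by
    simp only [Finset.coe_insert, Finset.coe_singleton, Matrix.range_cons, Matrix.range_empty,
      Set.union_empty, Set.singleton_union]
  have hxy : x ≠ y := hxyz.injective.ne (a₁ := 0) (a₂ := 1) (by decide)
  have hxz : x ≠ z := hxyz.injective.ne (a₁ := 0) (a₂ := 2) (by decide)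
  have hyz : y ≠ z := hxyz.injective.ne (a₁ := 1) (a₂ := 2) (by decide)
  refine ⟨{x, y, z}, Finset.card_eq_three.2 ⟨x, y, z, hxy, hxz, hyz, rfl⟩, ⟨?_, ?_⟩, by simp⟩
  · have := hxyz.range
    rwa [← hrange] at this
  · simpa using hext

theorem stmt3_general {n : Type*} [Fintype n] {k : ℕ} (A : Fin k → Matrix n n ℂ)
    (hdim : convDim (JNR A) + 1 = Fintype.card n)
    {X : Fin 3 → Finset (Fin k → ℝ)} (hX : Function.Injective X)
    (hface : ∀ j, IsSimplexFace (JNR A) (X j)) (hcard : ∀ j, (X j).card + 1 = Fintype.card n) :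
    ∃ v : n → (Fin k → ℝ), AffineIndependent ℝ v ∧ JNR A = convexHull ℝ (Set.range v) := by
  classical
  have : Nonempty n := Fintype.card_pos_iff.1 (by omega)
  have hpure : ∀ x ∈ (JNR A).extremePoints ℝ, ∃ v, momentMap A v = homogenize x :=
    extremePoints_JNR_subset_purePoints A
  choose! e he using hpure
  have hframe j : IsFrame A (X j) e :=
    (hface j).isFrame fun x hx ↦ he x ((hface j).subset_extremePoints hx)
  have hindep i j : LinearIndepOn ℂ e ((X i ∪ X j : Finset (Fin k → ℝ)) : Set (Fin k → ℝ)) :=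
    (hface i).linearIndepOn_union (hface j).subset_extremePoints (hframe i) (hframe j)
  have hunion i j : (X i ∪ X j).card ≤ Fintype.card n := by
    simpa using (hindep i j).fintype_card_le_finrank
  by_cases hsub : X 2 ⊆ X 0 ∪ X 1
  · have hne : X 0 ≠ X 1 := hX.ne (by decide)
    have hU := card_union_eq_of_ne hne (hcard 0) (hcard 1) (hunion 0 1)
    have hXU : ∀ j, X j ⊆ X 0 ∪ X 1 := by
      simp [Fin.forall_fin_succ, hsub]
    have hcover := exists_mem_mem_of_card_union_eq hX hXU fun j ↦ (hcard j).trans hU.symm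
    refine IsFrame.exists_affineIndependent hdim ⟨?_, ?_⟩ (hindep 0 1) hU
    · intro x hx
      obtain ⟨j, hj, -⟩ := hcover x hx x hx
      exact (hframe j).momentMap_eq x hj
    · intro x hx y hy hxy
      obtain ⟨j, hxj, hyj⟩ := hcover x hx y hy
      exact (hframe j).decoupled hxj hyj hxy
  · obtain ⟨D, r, hr, hD⟩ := exists_common_kernel_of_not_subset hX hcard hunion hsub
    have hle := card_add_two_le_convDim_of_common_kernel (convex_JNR A) hr (fun j ↦ (hD j).1)
      fun j ↦ (hD j).2 ▸ hface j
    have hDcard := hcard 0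
    rw [← (hD 0).2, Finset.card_insert_of_notMem (hD 0).1] at hDcard
    omega

end Main

/-- If `W` has three mutually distinct triangular faces, then `W`
is a tetrahedron. -/
theorem stmt3 (A : Fin 3 → Matrix (Fin 4) (Fin 4) ℂ)
    (hA : ∀ i, (A i).IsHermitian)
    (hdim : convDim (JNR A) = 3)
    (F₁ F₂ F₃ : Set (Fin 3 → ℝ))
    (hF₁ : IsTriangularFace (JNR A) F₁)
    (hF₂ : IsTriangularFace (JNR A) F₂)
    (hF₃ : IsTriangularFace (JNR A) F₃)
    (h12 : F₁ ≠ F₂) (h13 : F₁ ≠ F₃) (h23 : F₂ ≠ F₃) :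
    ∃ v : Fin 4 → (Fin 3 → ℝ), AffineIndependent ℝ v ∧
      JNR A = convexHull ℝ (Set.range v) := by
  obtain ⟨X₁, hcard₁, hX₁, rfl⟩ := hF₁.exists_isSimplexFace
  obtain ⟨X₂, hcard₂, hX₂, rfl⟩ := hF₂.exists_isSimplexFace
  obtain ⟨X₃, hcard₃, hX₃, rfl⟩ := hF₃.exists_isSimplexFace
  have h12 : X₁ ≠ X₂ := fun h ↦ h12 (by rw [h])
  have h13 : X₁ ≠ X₃ := fun h ↦ h13 (by rw [h])
  have h23 : X₂ ≠ X₃ := fun h ↦ h23 (by rw [h])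
  refine stmt3_general A (by simp [hdim]) (X := ![X₁, X₂, X₃]) ?_ ?_ ?_
  · simp [Function.Injective, Fin.forall_fin_succ, h12, h13, h23, h12.symm, h13.symm, h23.symm]
  · simp [Fin.forall_fin_succ, hX₁, hX₂, hX₃]
  · simp [Fin.forall_fin_succ, hcard₁, hcard₂, hcard₃]
end
end

section
/- Let A₁, A₂, A₃ be hermitian 4×4 complex matrices whose joint numerical range W = W(A₁,A₂,A₃) has dimension 3. For each m ∈ {0,1,2,3} the set of non-elliptic faces of W of type m is finite; let aₘ denote its cardinality. Then (a₀,a₁,a₂,a₃) belongs to the set {(0,0,0,0),(1,0,0,0),(0,1,0,0),(0,2,0,0),(0,1,1,0),(0,1,0,1),(0,0,1,0),(0,0,2,0),(0,0,3,0),(0,0,1,1),(0,0,1,2),(0,0,2,1),(0,0,0,1),(0,0,0,2),(0,0,0,4)}. Moreover, if (a₀,a₁,a₂,a₃) is one of (0,0,3,0),(0,0,1,1),(0,0,1,2),(0,0,2,1),(0,0,0,2),(0,0,0,4), then W has a corner point. -/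
open Matrix ComplexOrder

noncomputable section

/-- A non-elliptic face of type `m`: a non-elliptic face having exactly `m`
one-dimensional faces. -/
def IsNonEllFaceOfType (W : Set (Fin 3 → ℝ)) (m : ℕ)
    (F : Set (Fin 3 → ℝ)) : Prop :=
  IsNonEllipticFace W F ∧
    {G | IsFaceOf F G ∧ convDim G = 1}.Finite ∧
    {G | IsFaceOf F G ∧ convDim G = 1}.ncard = m

/-
The joint numerical range is the convex hull of the image of the unit sphere under the quadratic
map `x ↦ (⟪x, A₁ x⟫, ⟪x, A₂ x⟫, ⟪x, A₃ x⟫)`. A two-dimensional face is cut out by a pencil element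
`∑ i, u i • A i - c • 1 ≥ 0` and is the numerical range of the compressions to its kernel. When
the face is not an ellipse the kernel has dimension three, so, up to a positive factor, the pencil
element is a rank-one operator `x ↦ ⟪v, x⟫ • v` and the face is the numerical range on `vᗮ`. In
the same way the edges of this plane numerical range come from the rank-one vectors of the
compressions to `vᗮ`; each further rank-one vector of the pencil projects to one of them.

Three non-elliptic faces give three linearly independent vectors `v i`, and their squares together
with the inner product span all forms of the pencil. Hence the Gram matrix of the `v i` determines
all rank-one vectors: there is at most a fourth one, and it exists exactly when every face has three
edges. The vector of `ℂ⁴` orthogonal to the `v i` is a common eigenvector of the `A i` and gives a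
corner point. The counting of the types is then elementary.
-/

open scoped InnerProductSpace ComplexConjugate

section Faces

variable {V : Type*} [AddCommGroup V] [Module ℝ V] {C F S : Set V}

lemma convDim_eq_finrank_vectorSpan (C : Set V) :
    convDim C = Module.finrank ℝ (vectorSpan ℝ C) := by
  rw [convDim, direction_affineSpan]

lemma convDim_eq_zero_iff [FiniteDimensional ℝ V] : convDim C = 0 ↔ C.Subsingleton := by
  rw [convDim_eq_finrank_vectorSpan, Submodule.finrank_eq_zero]
  refine ⟨fun h x hx y hy => ?_, vectorSpan_of_subsingleton ℝ⟩
  have hxy : x -ᵥ y ∈ vectorSpan ℝ C := vsub_mem_vectorSpan ℝ hx hy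
  rwa [h, Submodule.mem_bot, vsub_eq_zero_iff_eq] at hxy

lemma mem_dualAnnihilator_vectorSpan {φ : Module.Dual ℝ V} :
    φ ∈ (vectorSpan ℝ C).dualAnnihilator ↔ ∀ x ∈ C, ∀ y ∈ C, φ x = φ y := by
  rw [Submodule.mem_dualAnnihilator]
  refine ⟨fun h x hx y hy => ?_, fun h => ?_⟩
  · simpa [sub_eq_zero] using h _ (vsub_mem_vectorSpan ℝ hx hy)
  · have hle : vectorSpan ℝ C ≤ LinearMap.ker φ := by
      rw [vectorSpan_def, Submodule.span_le]
      rintro _ ⟨x, hx, y, hy, rfl⟩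
      simp [h x hx y hy]
    exact fun v hv => hle hv

lemma mem_of_isExtreme_of_add_smul_sub_mem (hF : IsExtreme ℝ C F) {x z : V} {ε : ℝ} (hx : x ∈ F)
    (hz : z ∈ C) (hε : 0 < ε) (hxz : x + ε • (x - z) ∈ C) : z ∈ F := by
  refine hF.left_mem_of_mem_openSegment hz hxz hx
    ⟨ε / (1 + ε), 1 / (1 + ε), by positivity, by positivity, by field_simp; ring, ?_⟩
  match_scalars
  · field_simp
    ring
  · field_simp

lemma isFaceOf_level (hC : Convex ℝ C) {φ : Module.Dual ℝ V} {c : ℝ} (hc : ∀ x ∈ C, c ≤ φ x) :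
    IsFaceOf C {x ∈ C | φ x = c} := by
  refine ⟨hC.inter (convex_hyperplane φ.isLinear c), fun x hx => hx.1, ?_⟩
  rintro x hx y hy z ⟨-, hz⟩ ⟨a, b, ha, hb, hab, rfl⟩
  refine ⟨hx, le_antisymm ?_ (hc x hx)⟩
  simp only [map_add, map_smul, smul_eq_mul] at hz
  have hy' : b * c ≤ b * φ y := mul_le_mul_of_nonneg_left (hc y hy) hb.le
  refine le_of_mul_le_mul_left ?_ ha
  linear_combination hz + hy' - c * hab

lemma isFaceOf_convexHull_eq (hF : IsFaceOf (convexHull ℝ S) F) : F = convexHull ℝ (S ∩ F) := by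
  refine Set.Subset.antisymm (fun x hx => ?_) (convexHull_min Set.inter_subset_right hF.1)
  have hconv : Convex ℝ {x ∈ convexHull ℝ S | x ∈ F → x ∈ convexHull ℝ (S ∩ F)} := by
    refine convex_iff_openSegment_subset.2 fun y hy z hz w hw => ?_
    refine ⟨(convex_convexHull ℝ S).openSegment_subset hy.1 hz.1 hw, fun hwF => ?_⟩
    exact (convex_convexHull ℝ _).openSegment_subset
      (hy.2 (hF.2.left_mem_of_mem_openSegment hy.1 hz.1 hwF hw))
      (hz.2 (hF.2.right_mem_of_mem_openSegment hy.1 hz.1 hwF hw)) hw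
  refine (convexHull_min (fun y hy => ?_) hconv (hF.2.subset hx)).2 hx
  exact ⟨subset_convexHull ℝ S hy, fun hyF => subset_convexHull ℝ _ ⟨hy, hyF⟩⟩

lemma exists_dual_eq_on_facet [FiniteDimensional ℝ V] (hFC : F ⊆ C) {x₀ : V} (hx₀ : x₀ ∈ F)
    (hdim : convDim C = convDim F + 1) :
    ∃ φ : Module.Dual ℝ V, (∀ x ∈ F, φ x = φ x₀) ∧ (∃ x ∈ C, φ x ≠ φ x₀) ∧
      ∀ x ∈ C, φ x = φ x₀ → x ∈ affineSpan ℝ F := by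
  rw [convDim_eq_finrank_vectorSpan, convDim_eq_finrank_vectorSpan] at hdim
  have hmono : vectorSpan ℝ F ≤ vectorSpan ℝ C := vectorSpan_mono ℝ hFC
  obtain ⟨φ, hφF, hφC⟩ : ∃ φ ∈ (vectorSpan ℝ F).dualAnnihilator,
      φ ∉ (vectorSpan ℝ C).dualAnnihilator := by
    by_contra! h
    have hle := Submodule.finrank_mono (Subspace.dualAnnihilator_le_dualAnnihilator_iff.1 h)
    omega
  have hspan : vectorSpan ℝ F = vectorSpan ℝ C ⊓ LinearMap.ker φ := by
    have hle : vectorSpan ℝ F ≤ vectorSpan ℝ C ⊓ LinearMap.ker φ :=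
      le_inf hmono fun v hv => (Submodule.mem_dualAnnihilator φ).1 hφF v hv
    have hlt : vectorSpan ℝ C ⊓ LinearMap.ker φ < vectorSpan ℝ C :=
      inf_lt_left.2 fun h => hφC ((Submodule.mem_dualAnnihilator φ).2 h)
    exact Submodule.eq_of_le_of_finrank_le hle
      (by have := Submodule.finrank_lt_finrank_of_lt hlt; omega)
  refine ⟨φ, fun x hx => mem_dualAnnihilator_vectorSpan.1 hφF x hx x₀ hx₀, ?_,
    fun x hx hxφ => ?_⟩
  · by_contra! h
    exact hφC (mem_dualAnnihilator_vectorSpan.2 fun x hx y hy => (h x hx).trans (h y hy).symm)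
  · have hv : x -ᵥ x₀ ∈ (affineSpan ℝ F).direction := by
      rw [direction_affineSpan, hspan]
      exact ⟨vsub_mem_vectorSpan ℝ hx (hFC hx₀), by simp [hxφ]⟩
    simpa using AffineSubspace.vadd_mem_of_mem_direction hv (mem_affineSpan ℝ hx₀)

end Faces

section Facets

variable {V : Type*} [NormedAddCommGroup V] [NormedSpace ℝ V] [FiniteDimensional ℝ V] {C F : Set V}

lemma mem_of_isFaceOf_of_mem_affineSpan (hF : IsFaceOf C F) {z : V} (hzC : z ∈ C)
    (hz : z ∈ affineSpan ℝ F) : z ∈ F := by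
  obtain ⟨_, x, hx, rfl⟩ :=
    ((affineSpan_nonempty ℝ).1 ⟨z, hz⟩).intrinsicInterior hF.1
  have hxF : (x : V) ∈ F := interior_subset (s := ((↑) ⁻¹' F : Set (affineSpan ℝ F))) hx
  let ray : ℝ → affineSpan ℝ F := fun t =>
    ⟨AffineMap.lineMap (x : V) z (-t), AffineMap.lineMap_mem (-t) x.2 hz⟩
  have hray : Continuous ray := by
    refine Continuous.subtype_mk ?_ _
    simp only [AffineMap.lineMap_apply]
    fun_prop
  have hnhds : ∀ᶠ t in nhds (0 : ℝ), ray t ∈ ((↑) ⁻¹' F : Set (affineSpan ℝ F)) := by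
    refine hray.continuousAt.eventually ?_
    rw [show ray 0 = x from Subtype.ext (by simp [ray])]
    exact mem_interior_iff_mem_nhds.1 hx
  obtain ⟨ε, hεF, hε⟩ := ((hnhds.filter_mono nhdsWithin_le_nhds).and
    (self_mem_nhdsWithin : Set.Ioi (0 : ℝ) ∈ nhdsWithin 0 (Set.Ioi 0))).exists
  refine mem_of_isExtreme_of_add_smul_sub_mem hF.2 hxF hzC hε (hF.2.subset ?_)
  convert (show (ray ε : V) ∈ F from hεF) using 1
  simp only [ray, AffineMap.lineMap_apply, vsub_eq_sub, vadd_eq_add]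
  module

lemma exists_isFaceOf_eq_level (hC : Convex ℝ C) (hF : IsFaceOf C F) (hne : F.Nonempty)
    (hdim : convDim C = convDim F + 1) :
    ∃ (φ : Module.Dual ℝ V) (c : ℝ), (∀ x ∈ C, c ≤ φ x) ∧ (∃ x ∈ C, c < φ x) ∧
      F = {x ∈ C | φ x = c} := by
  obtain ⟨x₀, hx₀⟩ := hne
  obtain ⟨φ, hφF, ⟨b, hbC, hb⟩, hφ⟩ := exists_dual_eq_on_facet hF.2.subset hx₀ hdim
  wlog hpos : φ x₀ < φ b generalizing φ
  · refine this (-φ) (fun x hx => by simp [hφF x hx]) (fun x hx h => hφ x hx (by simpa using h))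
      (by simpa using hb) ?_
    simpa using lt_of_le_of_ne (not_lt.1 hpos) hb
  have hF_eq : F = {x ∈ C | φ x = φ x₀} := Set.Subset.antisymm
    (fun x hx => ⟨hF.2.subset hx, hφF x hx⟩)
    fun x hx => mem_of_isFaceOf_of_mem_affineSpan hF hx.1 (hφ x hx.1 hx.2)
  refine ⟨φ, φ x₀, fun a ha => ?_, ⟨b, hbC, hpos⟩, hF_eq⟩
  by_contra! hneg
  obtain ⟨z, hz, hzφ⟩ : φ x₀ ∈ φ '' openSegment ℝ a b := by
    rw [← LinearMap.coe_toAffineMap φ, image_openSegment, openSegment_eq_Ioo]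
    · exact ⟨hneg, hpos⟩
    · exact hneg.trans hpos
  have hzF : z ∈ F := hF_eq ▸ ⟨hC.openSegment_subset ha hbC hz, hzφ⟩
  exact hneg.ne (hφF a (hF.2.left_mem_of_mem_openSegment ha hbC hzF hz))

end Facets

section EllipticDisks

lemma convex_unitDisk2 : Convex ℝ unitDisk2 := by
  have hsq : ConvexOn ℝ Set.univ (fun x : ℝ => x ^ 2) := even_two.convexOn_pow
  intro x hx y hy a b ha hb hab
  have h0 := hsq.2 (Set.mem_univ (x 0)) (Set.mem_univ (y 0)) ha hb hab
  have h1 := hsq.2 (Set.mem_univ (x 1)) (Set.mem_univ (y 1)) ha hb hab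
  simp only [unitDisk2, Set.mem_ofPred_eq, Pi.add_apply, Pi.smul_apply, smul_eq_mul] at *
  nlinarith

lemma unitDisk2_subset_convexHull : unitDisk2 ⊆ convexHull ℝ {v | v 0 ^ 2 + v 1 ^ 2 = 1} := by
  intro v hv
  simp only [unitDisk2, Set.mem_ofPred_eq] at hv
  set r := √(1 - v 1 ^ 2)
  have hr : r ^ 2 = 1 - v 1 ^ 2 := Real.sq_sqrt (by nlinarith [sq_nonneg (v 0)])
  have hvr : v 0 ∈ Set.Icc (-r) r :=
    abs_le.1 (abs_le_of_sq_le_sq (by linarith) (Real.sqrt_nonneg _))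
  have hleft : ![-r, v 1] ∈ {v : Fin 2 → ℝ | v 0 ^ 2 + v 1 ^ 2 = 1} := by simp [hr]
  have hright : ![r, v 1] ∈ {v : Fin 2 → ℝ | v 0 ^ 2 + v 1 ^ 2 = 1} := by simp [hr]
  refine segment_subset_convexHull hleft hright ?_
  rw [← segment_eq_Icc (hvr.1.trans hvr.2)] at hvr
  obtain ⟨a, b, ha, hb, hab, h⟩ := hvr
  refine ⟨a, b, ha, hb, hab, ?_⟩
  ext i
  fin_cases i
  · simpa using h
  · simp [← add_mul, hab]

lemma isFaceOf_unitDisk2_eq {G : Set (Fin 2 → ℝ)} (hG : IsFaceOf unitDisk2 G)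
    (hne : G.Nontrivial) : G = unitDisk2 := by
  obtain ⟨p, hp, q, hq, hpq⟩ := hne
  refine hG.2.subset.antisymm fun z hz => ?_
  have hmid : (2⁻¹ : ℝ) • p + (2⁻¹ : ℝ) • q ∈ G :=
    hG.1 hp hq (by norm_num) (by norm_num) (by norm_num)
  set m := (2⁻¹ : ℝ) • p + (2⁻¹ : ℝ) • q with hm
  have hm1 : m 0 ^ 2 + m 1 ^ 2 < 1 := by
    have hp1 : p 0 ^ 2 + p 1 ^ 2 ≤ 1 := hG.2.subset hp
    have hq1 : q 0 ^ 2 + q 1 ^ 2 ≤ 1 := hG.2.subset hq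
    have hdist : 0 < (p 0 - q 0) ^ 2 + (p 1 - q 1) ^ 2 := by
      by_contra! h
      refine hpq (funext (Fin.forall_fin_two.2 ⟨?_, ?_⟩)) <;>
        nlinarith [sq_nonneg (p 0 - q 0), sq_nonneg (p 1 - q 1)]
    simp only [hm, Pi.add_apply, Pi.smul_apply, smul_eq_mul]
    nlinarith
  have hcont : Continuous fun ε : ℝ => (m + ε • (m - z)) 0 ^ 2 + (m + ε • (m - z)) 1 ^ 2 := by
    fun_prop
  have hlt : ∀ᶠ ε in nhds (0 : ℝ), (m + ε • (m - z)) 0 ^ 2 + (m + ε • (m - z)) 1 ^ 2 < 1 :=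
    hcont.continuousAt.eventually_lt continuousAt_const (by simpa using hm1)
  obtain ⟨ε, hε1, hε⟩ := ((hlt.filter_mono nhdsWithin_le_nhds).and
    (self_mem_nhdsWithin : Set.Ioi (0 : ℝ) ∈ nhdsWithin 0 (Set.Ioi 0))).exists
  exact mem_of_isExtreme_of_add_smul_sub_mem hG.2 hmid hz hε hε1.le

lemma convDim_ne_one_of_isFaceOf_isEllipticDisk {F G : Set (Fin 3 → ℝ)} (hF : IsEllipticDisk F)
    (hdim : convDim F = 2) (hG : IsFaceOf F G) : convDim G ≠ 1 := by
  obtain ⟨f, hf, rfl⟩ := hF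
  intro hG1
  have hpre : IsFaceOf unitDisk2 (f ⁻¹' G) := by
    refine ⟨hG.1.affine_preimage f, fun x hx => ?_, fun x hx y hy z hz hxyz => ?_⟩
    · obtain ⟨y, hy, hyx⟩ := hG.2.subset hx
      rwa [← hf hyx]
    · refine hG.2.left_mem_of_mem_openSegment (Set.mem_image_of_mem f hx)
        (Set.mem_image_of_mem f hy) hz ?_
      rw [← image_openSegment]
      exact Set.mem_image_of_mem f hxyz
  have himage : f '' (f ⁻¹' G) = G :=
    Set.image_preimage_eq_of_subset (hG.2.subset.trans (Set.image_subset_range f _))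
  have hne : (f ⁻¹' G).Nontrivial := Set.not_subsingleton_iff.1 fun h => by
    rw [← himage, convDim_eq_zero_iff.2 (h.image f)] at hG1
    omega
  rw [← himage, isFaceOf_unitDisk2_eq hpre hne] at hG1
  omega

lemma isEllipticDisk_convexHull {S : Set (Fin 3 → ℝ)} {p a b : Fin 3 → ℝ}
    (hab : LinearIndependent ℝ ![a, b])
    (hS : ∀ x ∈ S, ∃ s t : ℝ, s ^ 2 + t ^ 2 ≤ 1 ∧ x = p + s • a + t • b)
    (hcircle : ∀ s t : ℝ, s ^ 2 + t ^ 2 = 1 → p + s • a + t • b ∈ S) :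
    IsEllipticDisk (convexHull ℝ S) := by
  let L : (Fin 2 → ℝ) →ₗ[ℝ] (Fin 3 → ℝ) := Fintype.linearCombination ℝ ![a, b]
  let f : (Fin 2 → ℝ) →ᵃ[ℝ] (Fin 3 → ℝ) := L.toAffineMap + AffineMap.const ℝ _ p
  have hf : ∀ v, f v = p + v 0 • a + v 1 • b := fun v => by
    simp only [f, L, AffineMap.coe_add, Pi.add_apply, LinearMap.coe_toAffineMap,
      AffineMap.coe_const, Function.const_apply, Fintype.linearCombination_apply,
      Fin.sum_univ_two, Matrix.cons_val_zero, Matrix.cons_val_one]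
    abel
  refine ⟨f, fun v w hvw => ?_, Set.Subset.antisymm ?_ ?_⟩
  · exact (linearIndependent_iff_injective_fintypeLinearCombination.1 hab) (by simpa [f] using hvw)
  · refine convexHull_min (fun x hx => ?_) (convex_unitDisk2.affine_image f)
    obtain ⟨s, t, hst, rfl⟩ := hS x hx
    exact ⟨![s, t], by simpa [unitDisk2] using hst, by simp [hf]⟩
  · refine (Set.image_mono unitDisk2_subset_convexHull).trans ?_
    rw [f.image_convexHull]
    refine convexHull_mono ?_
    rintro _ ⟨v, hv, rfl⟩
    rw [hf]
    exact hcircle _ _ hv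

end EllipticDisks

section ConstFunctionals

variable {d : ℕ} {C : Set (Fin d → ℝ)} {u : Fin d → ℝ}

/-- The coefficient vectors `u` of the linear functionals `x ↦ u ⬝ᵥ x` that are constant on `C`;
the dimension of this space is the codimension of `C`. -/
def constFunctionals (C : Set (Fin d → ℝ)) : Submodule ℝ (Fin d → ℝ) :=
  (vectorSpan ℝ C).dualAnnihilator.comap (dotProductEquiv ℝ (Fin d)).toLinearMap

lemma mem_constFunctionals :
    u ∈ constFunctionals C ↔ ∀ x ∈ C, ∀ y ∈ C, u ⬝ᵥ x = u ⬝ᵥ y :=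
  mem_dualAnnihilator_vectorSpan

lemma convDim_add_finrank_constFunctionals (C : Set (Fin d → ℝ)) :
    convDim C + Module.finrank ℝ (constFunctionals C) = d := by
  have h := Subspace.finrank_add_finrank_dualAnnihilator_eq (vectorSpan ℝ C)
  have hcomap : Module.finrank ℝ (constFunctionals C) =
      Module.finrank ℝ (vectorSpan ℝ C).dualAnnihilator := by
    rw [constFunctionals]
    exact ((dotProductEquiv ℝ (Fin d)).submoduleMap _).finrank_eq.trans
      (by rw [Submodule.map_comap_eq_of_surjective (dotProductEquiv ℝ (Fin d)).surjective])
  rwa [Module.finrank_fin_fun, ← hcomap, ← convDim_eq_finrank_vectorSpan] at h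

end ConstFunctionals

section Compressions

variable {E : Type*} [NormedAddCommGroup E] [InnerProductSpace ℂ E] {S : E →ₗ[ℂ] E}
  {K N : Submodule ℂ E}

/-- The kernel of the compression to `K` of the operator `S`, that is, the radical of the
sesquilinear form `⟪y, S x⟫` on `K`. -/
def compressionKer (S : E →ₗ[ℂ] E) (K : Submodule ℂ E) : Submodule ℂ E := K ⊓ Kᗮ.comap S

lemma mem_compressionKer {x : E} :
    x ∈ compressionKer S K ↔ x ∈ K ∧ ∀ y ∈ K, ⟪y, S x⟫_ℂ = 0 := by
  simp [compressionKer, Submodule.mem_orthogonal]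

lemma exists_smul_mem_norm_eq_one {x : E} (hx : x ∈ K) (hx0 : x ≠ 0) :
    ∃ a : ℂ, a ≠ 0 ∧ a • x ∈ K ∧ ‖a • x‖ = 1 :=
  ⟨(‖x‖⁻¹ : ℝ), by simpa using hx0, K.smul_mem _ hx, by simp [norm_smul, hx0]⟩

lemma re_inner_add_map_add (hS : S.IsSymmetric) (x y : E) :
    (⟪x + y, S (x + y)⟫_ℂ).re = (⟪x, S x⟫_ℂ).re + 2 * (⟪y, S x⟫_ℂ).re + (⟪y, S y⟫_ℂ).re := by
  have hsymm : ⟪x, S y⟫_ℂ = conj ⟪y, S x⟫_ℂ := by rw [inner_conj_symm, hS x y]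
  simp only [map_add, inner_add_left, inner_add_right, hsymm, Complex.add_re, Complex.conj_re]
  ring

lemma inner_eq_zero_of_forall_re_eq_zero {z : E} (h : ∀ y ∈ K, (⟪y, z⟫_ℂ).re = 0) :
    ∀ y ∈ K, ⟪y, z⟫_ℂ = 0 := fun y hy =>
  Complex.ext (h y hy) (by simpa [inner_smul_left] using h (Complex.I • y) (K.smul_mem _ hy))

lemma mem_compressionKer_of_re_inner_eq_zero (hS : S.IsSymmetric)
    (hpos : ∀ x ∈ K, 0 ≤ (⟪x, S x⟫_ℂ).re) {n : E} (hn : n ∈ K) (hn0 : (⟪n, S n⟫_ℂ).re = 0) :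
    n ∈ compressionKer S K := by
  refine mem_compressionKer.2 ⟨hn, inner_eq_zero_of_forall_re_eq_zero fun y hy => ?_⟩
  have hquad : ∀ t : ℝ,
      0 ≤ (⟪y, S y⟫_ℂ).re * (t * t) + 2 * (⟪y, S n⟫_ℂ).re * t + 0 := fun t => by
    have h := hpos _ (K.add_mem hn (K.smul_mem (t : ℂ) hy))
    rw [re_inner_add_map_add hS, hn0] at h
    simp only [map_smul, inner_smul_left, inner_smul_right, Complex.conj_ofReal,
      Complex.re_ofReal_mul] at h
    linarith
  have hdiscrim := discrim_le_zero hquad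
  rw [discrim] at hdiscrim
  nlinarith [sq_nonneg (⟪y, S n⟫_ℂ).re]

lemma inner_map_eq_zero_of_forall_re_inner_eq_zero (hS : S.IsSymmetric)
    (h : ∀ x ∈ K, (⟪x, S x⟫_ℂ).re = 0) : ∀ x ∈ K, ∀ y ∈ K, ⟪y, S x⟫_ℂ = 0 := fun x hx =>
  (mem_compressionKer.1
    (mem_compressionKer_of_re_inner_eq_zero hS (fun y hy => (h y hy).ge) hx (h x hx))).2

lemma exists_unit_orthogonal_of_finrank_add_one [FiniteDimensional ℂ E] (hNK : N ≤ K)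
    (hd : Module.finrank ℂ N + 1 = Module.finrank ℂ K) :
    ∃ w ∈ K, ‖w‖ = 1 ∧ w ∈ Nᗮ ∧ ∀ x ∈ K, x - ⟪w, x⟫_ℂ • w ∈ N := by
  have hcodim := Submodule.finrank_add_inf_finrank_orthogonal hNK
  obtain ⟨⟨w₁, hw₁⟩, hw₁0, hspan⟩ :=
    finrank_eq_one_iff'.1 (show Module.finrank ℂ (Nᗮ ⊓ K : Submodule ℂ E) = 1 by omega)
  obtain ⟨a, ha, hw, hnorm⟩ := exists_smul_mem_norm_eq_one hw₁ fun h => hw₁0 (Subtype.ext h)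
  refine ⟨a • w₁, hw.2, hnorm, hw.1, fun x hx => ?_⟩
  rw [← Submodule.sup_orthogonal_inf_of_hasOrthogonalProjection hNK] at hx
  obtain ⟨n, hn, m, hm, rfl⟩ := Submodule.mem_sup.1 hx
  obtain ⟨b, hb⟩ := hspan ⟨m, hm⟩
  obtain rfl : (b / a) • a • w₁ = m := by
    rw [smul_smul, div_mul_cancel₀ b ha]
    exact congrArg Subtype.val hb
  have hcoeff : ⟪a • w₁, n + (b / a) • a • w₁⟫_ℂ = b / a := by
    rw [inner_add_right, Submodule.inner_left_of_mem_orthogonal hn hw.1, inner_smul_right,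
      inner_self_eq_norm_sq_to_K, hnorm]
    simp
  rw [hcoeff, add_sub_cancel_right]
  exact hn

lemma exists_inner_map_eq_mul_of_finrank_compressionKer [FiniteDimensional ℂ E]
    (hS : S.IsSymmetric) (hpos : ∀ x ∈ K, 0 ≤ (⟪x, S x⟫_ℂ).re)
    (hd : Module.finrank ℂ (compressionKer S K) + 1 = Module.finrank ℂ K) :
    ∃ w ∈ K, w ≠ 0 ∧ ∀ x ∈ K, ∀ y ∈ K, ⟪y, S x⟫_ℂ = ⟪y, w⟫_ℂ * ⟪w, x⟫_ℂ := by
  obtain ⟨w, hwK, hw1, hwN, hw⟩ := exists_unit_orthogonal_of_finrank_add_one inf_le_left hd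
  set r := (⟪w, S w⟫_ℂ).re
  have hwr : ⟪w, S w⟫_ℂ = r :=
    (Complex.conj_eq_iff_re.1 (by rw [inner_conj_symm, hS w w])).symm
  have hw0 : w ≠ 0 := norm_ne_zero_iff.1 (by simp [hw1])
  have hr0 : 0 < r := (hpos w hwK).lt_of_ne' fun h0 => hw0 <| inner_self_eq_zero.1 <|
    Submodule.inner_left_of_mem_orthogonal
      (mem_compressionKer_of_re_inner_eq_zero hS hpos hwK h0) hwN
  have hright : ∀ x ∈ K, ∀ y ∈ K, ⟪y, S x⟫_ℂ = ⟪w, x⟫_ℂ * ⟪y, S w⟫_ℂ := fun x hx y hy => by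
    have h := (mem_compressionKer.1 (hw x hx)).2 y hy
    rwa [map_sub, inner_sub_right, sub_eq_zero, map_smul, inner_smul_right] at h
  have hSw : ∀ y ∈ K, ⟪y, S w⟫_ℂ = ⟪y, w⟫_ℂ * r := fun y hy => by
    rw [← hS y w, ← inner_conj_symm, hright y hy w hwK, hwr, map_mul, inner_conj_symm,
      Complex.conj_ofReal]
  have hsqrt : (r : ℂ) = (√r : ℂ) * (√r : ℂ) := by
    rw [← Complex.ofReal_mul, Real.mul_self_sqrt hr0.le]
  refine ⟨(√r : ℂ) • w, K.smul_mem _ hwK, smul_ne_zero ?_ hw0, fun x hx y hy => ?_⟩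
  · exact_mod_cast (Real.sqrt_pos.2 hr0).ne'
  · rw [hright x hx y hy, hSw y hy, hsqrt, inner_smul_right, inner_smul_left, Complex.conj_ofReal]
    ring

end Compressions

section NumericalRanges

variable {E : Type*} [NormedAddCommGroup E] [InnerProductSpace ℂ E] {d : ℕ}
  {T : Fin d → E →ₗ[ℂ] E} {K : Submodule ℂ E} {u : Fin d → ℝ} {c : ℝ} {x : E}

/-- The joint quadratic map `x ↦ (⟪x, T₁ x⟫, …, ⟪x, T_d x⟫)` of symmetric operators. -/
def quadMap (T : Fin d → E →ₗ[ℂ] E) (x : E) : Fin d → ℝ := fun i => (⟪x, T i x⟫_ℂ).re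

/-- The joint numerical range of the compressions of `T₁, …, T_d` to the subspace `K`: the convex
hull of the values of `quadMap T` at the unit vectors of `K`. -/
def numRange (T : Fin d → E →ₗ[ℂ] E) (K : Submodule ℂ E) : Set (Fin d → ℝ) :=
  convexHull ℝ (quadMap T '' {x | x ∈ K ∧ ‖x‖ = 1})

/-- The operator `∑ i, u i • T i - c • 1`, as a linear function of the pair `(u, c)`. -/
def pencil (T : Fin d → E →ₗ[ℂ] E) : (Fin d → ℝ) × ℝ →ₗ[ℝ] E →ₗ[ℂ] E :=
  (Fintype.linearCombination ℝ T).coprod (LinearMap.toSpanSingleton ℝ _ (-LinearMap.id))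

lemma pencil_apply (T : Fin d → E →ₗ[ℂ] E) (p : (Fin d → ℝ) × ℝ) (x : E) :
    pencil T p x = ∑ i, p.1 i • T i x - p.2 • x := by
  simp [pencil, Fintype.linearCombination_apply, LinearMap.sum_apply, sub_eq_add_neg]

lemma isSymmetric_pencil (hT : ∀ i, (T i).IsSymmetric) (p : (Fin d → ℝ) × ℝ) :
    (pencil T p).IsSymmetric := fun x y => by
  simp [pencil_apply, inner_sub_left, inner_sub_right, sum_inner, inner_sum, hT _ x y]

lemma re_inner_pencil (T : Fin d → E →ₗ[ℂ] E) (u : Fin d → ℝ) (c : ℝ) (x : E) :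
    (⟪x, pencil T (u, c) x⟫_ℂ).re = u ⬝ᵥ quadMap T x - c * ‖x‖ ^ 2 := by
  simp only [pencil_apply, inner_sub_right, inner_sum, dotProduct, quadMap, Complex.sub_re,
    Complex.re_sum, inner_smul_right_eq_smul, Complex.real_smul, Complex.re_ofReal_mul,
    inner_self_eq_norm_sq_to_K, Complex.coe_algebraMap, ← Complex.ofReal_pow, Complex.ofReal_re]

lemma quadMap_smul (T : Fin d → E →ₗ[ℂ] E) (a : ℂ) (x : E) :
    quadMap T (a • x) = ‖a‖ ^ 2 • quadMap T x := by
  ext i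
  simp only [quadMap, map_smul, inner_smul_left, inner_smul_right, Pi.smul_apply, smul_eq_mul]
  rw [← mul_assoc, Complex.mul_conj', ← Complex.ofReal_pow, Complex.re_ofReal_mul]

lemma convex_numRange (T : Fin d → E →ₗ[ℂ] E) (K : Submodule ℂ E) : Convex ℝ (numRange T K) :=
  convex_convexHull ℝ _

lemma quadMap_mem_numRange (hx : x ∈ K) (hx1 : ‖x‖ = 1) : quadMap T x ∈ numRange T K :=
  subset_convexHull ℝ _ ⟨x, ⟨hx, hx1⟩, rfl⟩

lemma forall_le_dotProduct_numRange_iff :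
    (∀ w ∈ numRange T K, c ≤ u ⬝ᵥ w) ↔ ∀ x ∈ K, 0 ≤ (⟪x, pencil T (u, c) x⟫_ℂ).re := by
  constructor
  · intro h x hx
    rcases eq_or_ne x 0 with rfl | hx0
    · simp
    obtain ⟨a, ha, hax, hnorm⟩ := exists_smul_mem_norm_eq_one hx hx0
    have hle := h _ (quadMap_mem_numRange hax hnorm)
    have ha2 : 0 < ‖a‖ ^ 2 := pow_pos (norm_pos_iff.2 ha) 2
    have hsq : ‖a‖ ^ 2 * ‖x‖ ^ 2 = 1 := by rw [← mul_pow, ← norm_smul, hnorm, one_pow]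
    rw [quadMap_smul, dotProduct_smul, smul_eq_mul] at hle
    rw [re_inner_pencil, sub_nonneg]
    refine le_of_mul_le_mul_left ?_ ha2
    linear_combination hle + c * hsq
  · intro h
    refine fun w hw => convexHull_min (t := {w | c ≤ dotProductEquiv ℝ (Fin d) u w}) ?_
      (convex_halfSpace_ge (dotProductEquiv ℝ (Fin d) u).isLinear c) hw
    rintro _ ⟨x, ⟨hx, hx1⟩, rfl⟩
    simpa [re_inner_pencil, hx1] using h x hx

lemma numRange_level_eq (hT : ∀ i, (T i).IsSymmetric)
    (h : ∀ x ∈ K, 0 ≤ (⟪x, pencil T (u, c) x⟫_ℂ).re) :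
    {w ∈ numRange T K | u ⬝ᵥ w = c} = numRange T (compressionKer (pencil T (u, c)) K) := by
  have hface : IsFaceOf (numRange T K) {w ∈ numRange T K | u ⬝ᵥ w = c} :=
    isFaceOf_level (φ := dotProductEquiv ℝ (Fin d) u) (convex_numRange T K)
      (forall_le_dotProduct_numRange_iff.2 h)
  rw [isFaceOf_convexHull_eq hface, numRange]
  congr 1
  ext w
  constructor
  · rintro ⟨⟨x, ⟨hx, hx1⟩, rfl⟩, -, hc⟩
    refine ⟨x, ⟨mem_compressionKer_of_re_inner_eq_zero (isSymmetric_pencil hT _) h hx ?_, hx1⟩, rfl⟩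
    simp [re_inner_pencil, hc, hx1]
  · rintro ⟨x, ⟨hx, hx1⟩, rfl⟩
    refine ⟨⟨x, ⟨hx.1, hx1⟩, rfl⟩, quadMap_mem_numRange hx.1 hx1, ?_⟩
    have hre := re_inner_pencil T u c x
    rw [(mem_compressionKer.1 hx).2 x hx.1, hx1] at hre
    simp only [Complex.zero_re] at hre
    linarith

lemma mem_constFunctionals_numRange_iff (hT : ∀ i, (T i).IsSymmetric) :
    u ∈ constFunctionals (numRange T K) ↔
      ∃ c, ∀ x ∈ K, ∀ y ∈ K, ⟪y, pencil T (u, c) x⟫_ℂ = 0 := by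
  have hneg : ∀ c x, (⟪x, pencil T (-u, -c) x⟫_ℂ).re = -(⟪x, pencil T (u, c) x⟫_ℂ).re := by
    simp only [re_inner_pencil, neg_dotProduct]
    intros
    ring
  rw [mem_constFunctionals]
  constructor
  · intro h
    obtain ⟨c, hc⟩ : ∃ c, ∀ w ∈ numRange T K, u ⬝ᵥ w = c := by
      rcases (numRange T K).eq_empty_or_nonempty with h0 | ⟨w₀, hw₀⟩
      · simp [h0]
      · exact ⟨u ⬝ᵥ w₀, fun w hw => h w hw w₀ hw₀⟩
    refine ⟨c, inner_map_eq_zero_of_forall_re_inner_eq_zero (isSymmetric_pencil hT _)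
      fun x hx => ?_⟩
    have hge := forall_le_dotProduct_numRange_iff.1 (fun w hw => (hc w hw).ge) x hx
    have hle : 0 ≤ (⟪x, pencil T (-u, -c) x⟫_ℂ).re :=
      forall_le_dotProduct_numRange_iff.1 (fun w hw => by simp [hc w hw]) x hx
    rw [hneg] at hle
    linarith
  · rintro ⟨c, h⟩ w hw w' hw'
    have hc : ∀ w ∈ numRange T K, u ⬝ᵥ w = c := fun w hw => by
      have hge : c ≤ u ⬝ᵥ w :=
        forall_le_dotProduct_numRange_iff.2 (fun x hx => by simp [h x hx x hx]) w hw
      have hle : -c ≤ -u ⬝ᵥ w :=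
        forall_le_dotProduct_numRange_iff.2 (fun x hx => by simp [hneg, h x hx x hx]) w hw
      rw [neg_dotProduct] at hle
      linarith
    rw [hc w hw, hc w' hw']

lemma subsingleton_numRange [FiniteDimensional ℂ E] (hd : Module.finrank ℂ K ≤ 1) :
    (numRange T K).Subsingleton := by
  have himage : (quadMap T '' {x | x ∈ K ∧ ‖x‖ = 1}).Subsingleton := by
    rintro _ ⟨x, ⟨hx, hx1⟩, rfl⟩ _ ⟨y, ⟨hy, hy1⟩, rfl⟩
    obtain ⟨⟨z, _⟩, hz⟩ := finrank_le_one_iff.1 hd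
    obtain ⟨a, ha⟩ := hz ⟨x, hx⟩
    obtain ⟨b, hb⟩ := hz ⟨y, hy⟩
    obtain rfl : a • z = x := congrArg Subtype.val ha
    obtain rfl : b • z = y := congrArg Subtype.val hb
    rw [norm_smul] at hx1 hy1
    have hz0 : ‖z‖ ≠ 0 := right_ne_zero_of_mul_eq_one hx1
    rw [quadMap_smul, quadMap_smul, mul_right_cancel₀ hz0 (hx1.trans hy1.symm)]
  rcases himage.eq_empty_or_singleton with h | ⟨p, h⟩
  · simp [numRange, h]
  · simp [numRange, h]

end NumericalRanges

section RankOneVectors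

variable {E : Type*} [NormedAddCommGroup E] [InnerProductSpace ℂ E] {d : ℕ}
  {T : Fin d → E →ₗ[ℂ] E} {K K' : Submodule ℂ E} {v w x : E}

lemma mem_inf_orthogonal_singleton : x ∈ K ⊓ (ℂ ∙ v)ᗮ ↔ x ∈ K ∧ ⟪v, x⟫_ℂ = 0 := by
  rw [Submodule.mem_inf, Submodule.mem_orthogonal_singleton_iff_inner_right]

lemma finrank_inf_orthogonal_singleton [FiniteDimensional ℂ E] (hv : v ∈ K) (hv0 : v ≠ 0) :
    Module.finrank ℂ (K ⊓ (ℂ ∙ v)ᗮ : Submodule ℂ E) + 1 = Module.finrank ℂ K := by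
  have h := Submodule.finrank_add_inf_finrank_orthogonal
    ((Submodule.span_singleton_le_iff_mem v K).2 hv)
  rw [finrank_span_singleton hv0] at h
  rw [inf_comm]
  omega

/-- The nonzero vectors `v` of `K` for which the rank-one operator `x ↦ ⟪v, x⟫ • v` of `K` is the
compression to `K` of an element of the pencil. They parametrize the facets of `numRange T K`. -/
def IsRankOneVec (T : Fin d → E →ₗ[ℂ] E) (K : Submodule ℂ E) (v : E) : Prop :=
  v ∈ K ∧ v ≠ 0 ∧
    ∃ p, ∀ x ∈ K, ∀ y ∈ K, ⟪y, pencil T p x⟫_ℂ = ⟪y, v⟫_ℂ * ⟪v, x⟫_ℂ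

namespace IsRankOneVec

lemma smul (hv : IsRankOneVec T K v) {a : ℂ} (ha : a ≠ 0) : IsRankOneVec T K (a • v) := by
  obtain ⟨hvK, hv0, p, hp⟩ := hv
  refine ⟨K.smul_mem _ hvK, smul_ne_zero ha hv0, ‖a‖ ^ 2 • p, fun x hx y hy => ?_⟩
  rw [map_smul, LinearMap.smul_apply, inner_smul_right_eq_smul, Complex.real_smul, hp x hx y hy,
    inner_smul_right, inner_smul_left, Complex.ofReal_pow, ← Complex.mul_conj']
  ring

lemma restrict (hv : IsRankOneVec T K v) (hK : K' ≤ K) (hw : w ∈ K') (hw0 : w ≠ 0)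
    (hvw : ∀ x ∈ K', ⟪w, x⟫_ℂ = ⟪v, x⟫_ℂ) : IsRankOneVec T K' w := by
  obtain ⟨-, -, p, hp⟩ := hv
  refine ⟨hw, hw0, p, fun x hx y hy => ?_⟩
  rw [hp x (hK hx) y (hK hy), hvw x hx, ← inner_conj_symm y w, hvw y hy, inner_conj_symm]

lemma exists_supporting (hT : ∀ i, (T i).IsSymmetric) (hv : IsRankOneVec T K v) :
    ∃ u c, (∀ x ∈ K, ∀ y ∈ K, ⟪y, pencil T (u, c) x⟫_ℂ = ⟪y, v⟫_ℂ * ⟪v, x⟫_ℂ) ∧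
      (∀ z ∈ numRange T K, c ≤ u ⬝ᵥ z) ∧
      ∀ K' ≤ K, {z ∈ numRange T K' | u ⬝ᵥ z = c} = numRange T (K' ⊓ (ℂ ∙ v)ᗮ) := by
  obtain ⟨-, -, ⟨u, c⟩, hp⟩ := hv
  have hpos : ∀ x ∈ K, 0 ≤ (⟪x, pencil T (u, c) x⟫_ℂ).re := fun x hx => by
    rw [hp x hx x hx, ← inner_conj_symm x v, Complex.conj_mul', ← Complex.ofReal_pow,
      Complex.ofReal_re]
    positivity
  refine ⟨u, c, hp, forall_le_dotProduct_numRange_iff.2 hpos, fun K' hK' => ?_⟩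
  rw [numRange_level_eq hT fun x hx => hpos x (hK' hx)]
  congr 1
  ext x
  rw [mem_compressionKer, mem_inf_orthogonal_singleton]
  refine and_congr_right fun hx =>
    ⟨fun h => ?_, fun h y hy => by rw [hp x (hK' hx) y (hK' hy), h, mul_zero]⟩
  have hxx := h x hx
  rwa [hp x (hK' hx) x (hK' hx), mul_eq_zero, inner_eq_zero_symm, or_self] at hxx

lemma isFaceOf_numRange (hT : ∀ i, (T i).IsSymmetric) (hv : IsRankOneVec T K v) :
    IsFaceOf (numRange T K) (numRange T (K ⊓ (ℂ ∙ v)ᗮ)) := by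
  obtain ⟨u, c, -, hle, hlevel⟩ := hv.exists_supporting hT
  rw [← hlevel K le_rfl]
  exact isFaceOf_level (φ := dotProductEquiv ℝ (Fin d) u) (convex_numRange T K) hle

end IsRankOneVec

lemma exists_isRankOneVec_of_finrank_compressionKer [FiniteDimensional ℂ E]
    (hT : ∀ i, (T i).IsSymmetric) {p : (Fin d → ℝ) × ℝ}
    (hpos : ∀ x ∈ K, 0 ≤ (⟪x, pencil T p x⟫_ℂ).re)
    (hd : Module.finrank ℂ (compressionKer (pencil T p) K) + 1 = Module.finrank ℂ K) :
    ∃ v, IsRankOneVec T K v ∧ compressionKer (pencil T p) K = K ⊓ (ℂ ∙ v)ᗮ := by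
  obtain ⟨v, hv, hv0, hp⟩ :=
    exists_inner_map_eq_mul_of_finrank_compressionKer (isSymmetric_pencil hT p) hpos hd
  refine ⟨v, ⟨hv, hv0, p, hp⟩, Submodule.eq_of_le_of_finrank_eq (fun x hx => ?_)
    (by have := finrank_inf_orthogonal_singleton hv hv0; omega) |>.symm⟩
  rw [mem_inf_orthogonal_singleton] at hx
  exact mem_compressionKer.2 ⟨hx.1, fun y hy => by rw [hp x hx.1 y hy, hx.2, mul_zero]⟩

lemma exists_lt_eq_numRange_of_isFaceOf [FiniteDimensional ℂ E] (hT : ∀ i, (T i).IsSymmetric)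
    {F : Set (Fin d → ℝ)} (hF : IsFaceOf (numRange T K) F) (hne : F.Nonempty)
    (hdim : convDim (numRange T K) = convDim F + 1) :
    ∃ N < K, F = numRange T N ∧ (Module.finrank ℂ N + 1 = Module.finrank ℂ K →
      ∃ v, IsRankOneVec T K v ∧ N = K ⊓ (ℂ ∙ v)ᗮ) := by
  obtain ⟨φ, c, hle, ⟨z, hz, hcz⟩, rfl⟩ :=
    exists_isFaceOf_eq_level (convex_numRange T K) hF hne hdim
  obtain ⟨u, rfl⟩ := (dotProductEquiv ℝ (Fin d)).surjective φ
  simp only [dotProductEquiv_apply_apply] at hcz ⊢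
  have hpos := forall_le_dotProduct_numRange_iff.1 hle
  have hlevel := numRange_level_eq hT hpos
  refine ⟨compressionKer (pencil T (u, c)) K, lt_of_le_of_ne inf_le_left fun h => ?_, hlevel,
    exists_isRankOneVec_of_finrank_compressionKer hT hpos⟩
  rw [h] at hlevel
  exact hcz.ne' (hlevel.ge hz).2

end RankOneVectors

section PlaneSets

variable {d : ℕ} {C S : Set (Fin d → ℝ)} {p a b u : Fin d → ℝ}

lemma linearIndependent_pair_of_convDim_eq_two (hdim : convDim (convexHull ℝ S) = 2)
    (hS : ∀ x ∈ S, ∃ s t : ℝ, x = p + s • a + t • b) : LinearIndependent ℝ ![a, b] := by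
  have hspan : vectorSpan ℝ (convexHull ℝ S) ≤ Submodule.span ℝ (Set.range ![a, b]) := by
    rw [← direction_affineSpan, affineSpan_convexHull, direction_affineSpan, vectorSpan_def,
      Submodule.span_le]
    rintro _ ⟨x, hx, y, hy, rfl⟩
    obtain ⟨s, t, rfl⟩ := hS x hx
    obtain ⟨s', t', rfl⟩ := hS y hy
    rw [Matrix.range_cons_cons_empty, SetLike.mem_coe, Submodule.mem_span_pair]
    exact ⟨s - s', t - t', by simp only [vsub_eq_sub]; module⟩
  rw [convDim_eq_finrank_vectorSpan] at hdim
  rw [linearIndependent_iff_card_le_finrank_span, Fintype.card_fin]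
  exact hdim.ge.trans (Submodule.finrank_mono hspan)

lemma exists_forall_eq_smul_of_dotProduct_eq_zero (hC : convDim C = 2)
    (hu : u ∉ constFunctionals C) :
    ∃ b, ∀ x, u ⬝ᵥ x = 0 → (∀ u' ∈ constFunctionals C, u' ⬝ᵥ x = 0) → ∃ s : ℝ, s • b = x := by
  set N : Submodule ℝ (Fin d → ℝ) := constFunctionals C ⊔ Submodule.span ℝ {u}
  have hN : Module.finrank ℝ N = Module.finrank ℝ (constFunctionals C) + 1 :=
    Submodule.finrank_sup_span_singleton hu
  have hd := convDim_add_finrank_constFunctionals C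
  have hd' := convDim_add_finrank_constFunctionals (N : Set (Fin d → ℝ))
  have hspan : vectorSpan ℝ (N : Set (Fin d → ℝ)) = N := by
    simp only [vectorSpan_eq_span_vsub_set_right ℝ (zero_mem N), vsub_eq_sub, sub_zero,
      Set.image_id', Submodule.span_eq]
  rw [convDim_eq_finrank_vectorSpan, hspan] at hd'
  obtain ⟨⟨b, _⟩, hb⟩ := finrank_le_one_iff.1
    (show Module.finrank ℝ (constFunctionals (N : Set (Fin d → ℝ))) ≤ 1 by omega)
  refine ⟨b, fun x hux hx => ?_⟩
  have hNx : ∀ n ∈ N, x ⬝ᵥ n = 0 := fun n hn => by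
    obtain ⟨u', hu', _, hr, rfl⟩ := Submodule.mem_sup.1 hn
    obtain ⟨r, rfl⟩ := Submodule.mem_span_singleton.1 hr
    rw [dotProduct_comm, add_dotProduct, smul_dotProduct, hx u' hu', hux, smul_zero, add_zero]
  obtain ⟨s, hs⟩ := hb ⟨x, mem_constFunctionals.2 fun n hn n' hn' => by rw [hNx n hn, hNx n' hn']⟩
  exact ⟨s, congrArg Subtype.val hs⟩

end PlaneSets

section EllipticFaces

variable {E : Type*} [NormedAddCommGroup E] [InnerProductSpace ℂ E] {d : ℕ}
  {T : Fin d → E →ₗ[ℂ] E} {K : Submodule ℂ E} {e g x y : E} {p b : Fin d → ℝ}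

lemma quadMap_add (hT : ∀ i, (T i).IsSymmetric) (x y : E) :
    quadMap T (x + y) = quadMap T x + quadMap T y + (2 : ℝ) • fun i => (⟪y, T i x⟫_ℂ).re := by
  ext i
  simp only [quadMap, Pi.add_apply, Pi.smul_apply, smul_eq_mul, re_inner_add_map_add (hT i)]
  ring

lemma inner_pencil_of_inner_eq_zero (u : Fin d → ℝ) (c : ℝ) (h : ⟪y, x⟫_ℂ = 0) :
    ⟪y, pencil T (u, c) x⟫_ℂ = ∑ i, (u i : ℂ) * ⟪y, T i x⟫_ℂ := by
  simp only [pencil_apply, inner_sub_right, inner_sum, inner_smul_right_eq_smul, h, smul_zero,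
    sub_zero, Complex.real_smul]

lemma quadMap_eq_smul_of_subsingleton (hK : (numRange T K).Subsingleton) :
    ∃ p, ∀ y ∈ K, quadMap T y = ‖y‖ ^ 2 • p := by
  have hunit : ∃ p, ∀ y ∈ K, ‖y‖ = 1 → quadMap T y = p := by
    rcases hK.eq_empty_or_singleton with h | ⟨p, h⟩
    · exact ⟨0, fun y hy hy1 => absurd (h ▸ quadMap_mem_numRange hy hy1) (Set.notMem_empty _)⟩
    · exact ⟨p, fun y hy hy1 => by simpa [h] using quadMap_mem_numRange (T := T) hy hy1⟩
  obtain ⟨p, hp⟩ := hunit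
  refine ⟨p, fun y hy => ?_⟩
  rcases eq_or_ne y 0 with rfl | hy0
  · ext i
    simp [quadMap]
  obtain ⟨a, -, hay, ha1⟩ := exists_smul_mem_norm_eq_one hy hy0
  rw [← hp _ hay ha1, quadMap_smul, smul_smul, ← mul_pow, mul_comm, ← norm_smul, ha1, one_pow,
    one_smul]

lemma IsRankOneVec.notMem_constFunctionals (hT : ∀ i, (T i).IsSymmetric)
    (he : IsRankOneVec T K e) (hK : K ⊓ (ℂ ∙ e)ᗮ ≠ ⊥) {u : Fin d → ℝ} {c : ℝ}
    (hp : ∀ x ∈ K, ∀ y ∈ K, ⟪y, pencil T (u, c) x⟫_ℂ = ⟪y, e⟫_ℂ * ⟪e, x⟫_ℂ) :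
    u ∉ constFunctionals (numRange T K) := fun hu => by
  obtain ⟨heK, he0, -⟩ := he
  obtain ⟨y, hy, hy0⟩ := Submodule.exists_mem_ne_zero_of_ne_bot hK
  rw [mem_inf_orthogonal_singleton] at hy
  obtain ⟨c', hc'⟩ := (mem_constFunctionals_numRange_iff hT).1 hu
  have hsmul : ∀ x ∈ K, ∀ z ∈ K, ⟪z, e⟫_ℂ * ⟪e, x⟫_ℂ = (c' - c : ℝ) * ⟪z, x⟫_ℂ := by
    intro x hx z hz
    have hpencil : pencil T (u, c) x = pencil T (u, c') x + (c' - c) • x := by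
      simp only [pencil_apply]
      module
    rw [← hp x hx z hz, hpencil, inner_add_right, hc' x hx z hz, zero_add,
      inner_smul_right_eq_smul, Complex.real_smul]
  have hc : ((c' - c : ℝ) : ℂ) = 0 := by
    have h := hsmul y hy.1 y hy.1
    rw [hy.2, mul_zero, eq_comm, mul_eq_zero] at h
    exact h.resolve_right (inner_self_ne_zero.2 hy0)
  have h := hsmul e heK e heK
  rw [hc, zero_mul, mul_self_eq_zero, inner_self_eq_zero] at h
  exact he0 h

lemma IsRankOneVec.exists_line_inner_map (hT : ∀ i, (T i).IsSymmetric)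
    (hdim : convDim (numRange T K) = 2) (he : IsRankOneVec T K e) (hK : K ⊓ (ℂ ∙ e)ᗮ ≠ ⊥) :
    ∃ b : Fin d → ℝ, ∀ y ∈ K ⊓ (ℂ ∙ e)ᗮ, ∃ z : ℂ, ∀ i, ⟪y, T i e⟫_ℂ = z * b i := by
  obtain ⟨u, c, hp, -⟩ := he.exists_supporting hT
  obtain ⟨b, hb⟩ :=
    exists_forall_eq_smul_of_dotProduct_eq_zero hdim (he.notMem_constFunctionals hT hK hp)
  refine ⟨b, fun y hy => ?_⟩
  have hye := (mem_inf_orthogonal_singleton.1 hy).2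
  rw [inner_eq_zero_symm] at hye
  have hu : ∑ i, (u i : ℂ) * ⟪y, T i e⟫_ℂ = 0 := by
    rw [← inner_pencil_of_inner_eq_zero u c hye, hp e he.1 y hy.1, hye, zero_mul]
  have hconst : ∀ u' ∈ constFunctionals (numRange T K), ∑ i, (u' i : ℂ) * ⟪y, T i e⟫_ℂ = 0 := by
    intro u' hu'
    obtain ⟨c', hc'⟩ := (mem_constFunctionals_numRange_iff hT).1 hu'
    rw [← inner_pencil_of_inner_eq_zero u' c' hye, hc' e he.1 y hy.1]
  obtain ⟨s, hs⟩ := hb (fun i => (⟪y, T i e⟫_ℂ).re)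
    (by simpa [dotProduct] using congrArg Complex.re hu)
    fun u' hu' => by simpa [dotProduct] using congrArg Complex.re (hconst u' hu')
  obtain ⟨t, ht⟩ := hb (fun i => (⟪y, T i e⟫_ℂ).im)
    (by simpa [dotProduct] using congrArg Complex.im hu)
    fun u' hu' => by simpa [dotProduct] using congrArg Complex.im (hconst u' hu')
  exact ⟨⟨s, t⟩, fun i => Complex.ext (by simpa using (congrFun hs i).symm)
    (by simpa using (congrFun ht i).symm)⟩

lemma IsRankOneVec.exists_inner_map_eq_mul [FiniteDimensional ℂ E] (hT : ∀ i, (T i).IsSymmetric)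
    (hdim : convDim (numRange T K) = 2) (he : IsRankOneVec T K e) (hK : K ⊓ (ℂ ∙ e)ᗮ ≠ ⊥) :
    ∃ g ∈ K ⊓ (ℂ ∙ e)ᗮ, ∃ b : Fin d → ℝ,
      ∀ y ∈ K ⊓ (ℂ ∙ e)ᗮ, ∀ i, ⟪y, T i e⟫_ℂ = ⟪y, g⟫_ℂ * b i := by
  obtain ⟨b, hline⟩ := he.exists_line_inner_map hT hdim hK
  by_cases hb0 : b = 0
  · refine ⟨0, zero_mem _, b, fun y hy i => ?_⟩
    obtain ⟨z, hz⟩ := hline y hy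
    rw [hz i, hb0]
    simp
  obtain ⟨j, hj⟩ := Function.ne_iff.1 hb0
  have hj' : (b j : ℂ) ≠ 0 := by exact_mod_cast hj
  refine ⟨(K ⊓ (ℂ ∙ e)ᗮ).starProjection ((b j : ℂ)⁻¹ • T j e),
    Submodule.starProjection_apply_mem _ _, b, fun y hy i => ?_⟩
  obtain ⟨z, hz⟩ := hline y hy
  rw [← Submodule.inner_starProjection_left_eq_right, Submodule.starProjection_eq_self_iff.2 hy,
    inner_smul_right, hz j, hz i, mul_comm z (b j), inv_mul_cancel_left₀ hj']

lemma norm_smul_add_sq (he : ‖e‖ = 1) (hy : ⟪e, y⟫_ℂ = 0) (α : ℂ) :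
    ‖α • e + y‖ ^ 2 = ‖α‖ ^ 2 + ‖y‖ ^ 2 := by
  rw [@norm_add_sq ℂ, inner_smul_left, hy, norm_smul, he]
  simp

lemma exists_eq_smul_add (he : e ∈ K) (he1 : ‖e‖ = 1) (hx : x ∈ K) :
    ∃ α : ℂ, ∃ y ∈ K ⊓ (ℂ ∙ e)ᗮ, x = α • e + y := by
  refine ⟨⟪e, x⟫_ℂ, x - ⟪e, x⟫_ℂ • e, mem_inf_orthogonal_singleton.2
    ⟨K.sub_mem hx (K.smul_mem _ he), ?_⟩, (add_sub_cancel _ _).symm⟩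
  rw [inner_sub_right, inner_smul_right, inner_self_eq_norm_sq_to_K, he1]
  simp

lemma exists_half_angle {s t : ℝ} (h : s ^ 2 + t ^ 2 = 1) :
    ∃ α β : ℝ, α ^ 2 + β ^ 2 = 1 ∧ 2 * α ^ 2 - 1 = s ∧ 2 * (α * β) = t := by
  obtain ⟨θ, hs, ht⟩ : ∃ θ, s = Real.cos θ ∧ t = Real.sin θ := by
    have hnorm : ‖(⟨s, t⟩ : ℂ)‖ = 1 := by
      rw [Complex.norm_def, Complex.normSq_mk, ← sq, ← sq, h, Real.sqrt_one]
    have hcos := Complex.norm_mul_cos_arg ⟨s, t⟩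
    have hsin := Complex.norm_mul_sin_arg ⟨s, t⟩
    rw [hnorm, one_mul] at hcos hsin
    exact ⟨_, hcos.symm, hsin.symm⟩
  refine ⟨Real.cos (θ / 2), Real.sin (θ / 2), Real.cos_sq_add_sin_sq _, ?_, ?_⟩
  · rw [hs, ← Real.cos_two_mul, mul_div_cancel₀ θ two_ne_zero]
  · rw [ht, ← mul_div_cancel₀ θ (two_ne_zero : (2 : ℝ) ≠ 0), Real.sin_two_mul]
    ring_nf

/-- The description of `quadMap T` on `K` in the decomposition `K = ℂ ∙ e ⊕ (K ⊓ (ℂ ∙ e)ᗮ)` when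
`numRange T (K ⊓ (ℂ ∙ e)ᗮ)` is the point `p` and the off-diagonal part has rank one: it is given by
a vector `g` and a direction `b`. -/
def HasConeForm (T : Fin d → E →ₗ[ℂ] E) (K : Submodule ℂ E) (e : E) (p : Fin d → ℝ) (g : E)
    (b : Fin d → ℝ) : Prop :=
  g ∈ K ⊓ (ℂ ∙ e)ᗮ ∧ ∀ α : ℂ, ∀ y ∈ K ⊓ (ℂ ∙ e)ᗮ,
    quadMap T (α • e + y) =
      ‖α‖ ^ 2 • quadMap T e + ‖y‖ ^ 2 • p + (2 * (α * ⟪y, g⟫_ℂ).re) • b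

lemma IsRankOneVec.exists_hasConeForm [FiniteDimensional ℂ E] (hT : ∀ i, (T i).IsSymmetric)
    (hdim : convDim (numRange T K) = 2) (he : IsRankOneVec T K e)
    (hK : K ⊓ (ℂ ∙ e)ᗮ ≠ ⊥) (hpt : (numRange T (K ⊓ (ℂ ∙ e)ᗮ)).Subsingleton) :
    ∃ p g b, HasConeForm T K e p g b := by
  obtain ⟨g, hg, b, hgb⟩ := he.exists_inner_map_eq_mul hT hdim hK
  obtain ⟨p, hp⟩ := quadMap_eq_smul_of_subsingleton hpt
  refine ⟨p, g, b, hg, fun α y hy => ?_⟩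
  rw [quadMap_add hT, quadMap_smul, hp y hy]
  congr 1
  ext i
  simp only [Pi.smul_apply, smul_eq_mul, map_smul, inner_smul_right, hgb y hy i, ← mul_assoc,
    Complex.re_mul_ofReal]

namespace HasConeForm

lemma exists_quadMap_eq (h : HasConeForm T K e p g b) (he : e ∈ K) (he1 : ‖e‖ = 1) (hx : x ∈ K)
    (hx1 : ‖x‖ = 1) :
    ∃ s t : ℝ, s ^ 2 + t ^ 2 ≤ 1 ∧ quadMap T x =
      (1 / 2 : ℝ) • (quadMap T e + p) + s • (1 / 2 : ℝ) • (quadMap T e - p) + t • ‖g‖ • b := by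
  obtain ⟨α, y, hy, rfl⟩ := exists_eq_smul_add he he1 hx
  have hy2 : ‖y‖ ^ 2 = 1 - ‖α‖ ^ 2 := by
    rw [eq_sub_iff_add_eq', ← norm_smul_add_sq he1 (mem_inf_orthogonal_singleton.1 hy).2, hx1,
      one_pow]
  have hle : |(α * ⟪y, g⟫_ℂ).re| ≤ ‖α‖ * ‖y‖ * ‖g‖ := by
    refine (Complex.abs_re_le_norm _).trans ?_
    rw [norm_mul, mul_assoc]
    exact mul_le_mul_of_nonneg_left (norm_inner_le_norm _ _) (norm_nonneg _)
  obtain ⟨t, ht, htg⟩ : ∃ t : ℝ, t ^ 2 ≤ 4 * ‖α‖ ^ 2 * ‖y‖ ^ 2 ∧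
      2 * (α * ⟪y, g⟫_ℂ).re = t * ‖g‖ := by
    rcases eq_or_ne g 0 with rfl | hg0
    · exact ⟨0, by rw [zero_pow two_ne_zero]; positivity, by simp⟩
    have hg : 0 < ‖g‖ := norm_pos_iff.2 hg0
    refine ⟨2 * (α * ⟪y, g⟫_ℂ).re / ‖g‖, ?_, (div_mul_cancel₀ _ hg.ne').symm⟩
    rw [div_pow, div_le_iff₀ (by positivity), ← sq_abs, abs_mul, abs_two]
    calc (2 * |(α * ⟪y, g⟫_ℂ).re|) ^ 2 ≤ (2 * (‖α‖ * ‖y‖ * ‖g‖)) ^ 2 := by gcongr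
      _ = 4 * ‖α‖ ^ 2 * ‖y‖ ^ 2 * ‖g‖ ^ 2 := by ring
  refine ⟨2 * ‖α‖ ^ 2 - 1, t, ?_, ?_⟩
  · rw [hy2] at ht
    linear_combination ht
  · rw [h.2 α y hy, htg, hy2]
    module

lemma exists_quadMap_eq_of_sq_add_sq_eq_one (h : HasConeForm T K e p g b) (he : e ∈ K)
    (he1 : ‖e‖ = 1) (hg : g ≠ 0) {s t : ℝ} (hst : s ^ 2 + t ^ 2 = 1) :
    ∃ x ∈ K, ‖x‖ = 1 ∧ quadMap T x =
      (1 / 2 : ℝ) • (quadMap T e + p) + s • (1 / 2 : ℝ) • (quadMap T e - p) + t • ‖g‖ • b := by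
  obtain ⟨α, β, hαβ, rfl, rfl⟩ := exists_half_angle hst
  have hg0 : ‖g‖ ≠ 0 := norm_ne_zero_iff.2 hg
  set y : E := ((β / ‖g‖ : ℝ) : ℂ) • g
  have hy : y ∈ K ⊓ (ℂ ∙ e)ᗮ := Submodule.smul_mem _ _ h.1
  have hy2 : ‖y‖ ^ 2 = 1 - α ^ 2 := by
    rw [norm_smul, Complex.norm_real, Real.norm_eq_abs, mul_pow, sq_abs, ← mul_pow,
      div_mul_cancel₀ β hg0]
    linarith
  have hyg : ((α : ℂ) * ⟪y, g⟫_ℂ).re = α * β * ‖g‖ := by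
    have hgg : ⟪g, g⟫_ℂ = (‖g‖ ^ 2 : ℝ) := by simp [inner_self_eq_norm_sq_to_K]
    rw [inner_smul_left, Complex.conj_ofReal, hgg, ← Complex.ofReal_mul, ← Complex.ofReal_mul,
      Complex.ofReal_re]
    field_simp
  have hα : ‖(α : ℂ)‖ ^ 2 = α ^ 2 := by rw [Complex.norm_real, Real.norm_eq_abs, sq_abs]
  refine ⟨(α : ℂ) • e + y, K.add_mem (K.smul_mem _ he) hy.1, ?_, ?_⟩
  · rw [← pow_eq_one_iff_of_nonneg (norm_nonneg _) two_ne_zero,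
      norm_smul_add_sq he1 (mem_inf_orthogonal_singleton.1 hy).2, hy2, hα]
    ring
  · rw [h.2 _ _ hy, hyg, hy2, hα]
    module

lemma isEllipticDisk {T : Fin 3 → E →ₗ[ℂ] E} {p b : Fin 3 → ℝ} (h : HasConeForm T K e p g b)
    (he : e ∈ K) (he1 : ‖e‖ = 1) (hdim : convDim (numRange T K) = 2) :
    IsEllipticDisk (numRange T K) := by
  have hdisk : ∀ z ∈ quadMap T '' {x | x ∈ K ∧ ‖x‖ = 1}, ∃ s t : ℝ, s ^ 2 + t ^ 2 ≤ 1 ∧ z =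
      (1 / 2 : ℝ) • (quadMap T e + p) + s • (1 / 2 : ℝ) • (quadMap T e - p) + t • ‖g‖ • b := by
    rintro _ ⟨x, hx, rfl⟩
    exact h.exists_quadMap_eq he he1 hx.1 hx.2
  have hli : LinearIndependent ℝ ![(1 / 2 : ℝ) • (quadMap T e - p), ‖g‖ • b] :=
    linearIndependent_pair_of_convDim_eq_two hdim fun z hz =>
      (hdisk z hz).imp fun _ => Exists.imp fun _ => And.right
  have hg : g ≠ 0 := by
    rintro rfl
    exact hli.ne_zero 1 (by simp)
  refine isEllipticDisk_convexHull hli hdisk fun s t hst => ?_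
  obtain ⟨x, hx, hx1, hz⟩ := h.exists_quadMap_eq_of_sq_add_sq_eq_one he he1 hg hst
  exact ⟨x, ⟨hx, hx1⟩, hz⟩

end HasConeForm

variable [FiniteDimensional ℂ E]

lemma IsRankOneVec.isEllipticDisk_numRange {T : Fin 3 → E →ₗ[ℂ] E}
    (hT : ∀ i, (T i).IsSymmetric) (hdim : convDim (numRange T K) = 2) {v : E}
    (hv : IsRankOneVec T K v) (hpt : (numRange T (K ⊓ (ℂ ∙ v)ᗮ)).Subsingleton) :
    IsEllipticDisk (numRange T K) := by
  obtain ⟨a, ha, hK, h1⟩ := exists_smul_mem_norm_eq_one hv.1 hv.2.1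
  have hspan : (ℂ ∙ (a • v)) = ℂ ∙ v := Submodule.span_singleton_smul_eq ha.isUnit v
  have hbot : K ⊓ (ℂ ∙ (a • v))ᗮ ≠ ⊥ := fun hbot => by
    have hfin := finrank_inf_orthogonal_singleton hK (smul_ne_zero ha hv.2.1)
    rw [hbot, finrank_bot] at hfin
    have := convDim_eq_zero_iff.2 (subsingleton_numRange (T := T) (K := K) (by omega))
    omega
  obtain ⟨p, g, b, h⟩ := (hv.smul ha).exists_hasConeForm hT hdim hbot (by rwa [hspan])
  exact h.isEllipticDisk hK h1 hdim

lemma isCompact_image_quadMap (T : Fin d → E →ₗ[ℂ] E) (K : Submodule ℂ E) :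
    IsCompact (quadMap T '' {x | x ∈ K ∧ ‖x‖ = 1}) := by
  have : ProperSpace E := FiniteDimensional.proper ℂ E
  have hcompact : IsCompact {x | x ∈ K ∧ ‖x‖ = 1} := by
    convert (isCompact_sphere (0 : E) 1).inter_left K.closed_of_finiteDimensional using 1
    ext
    simp
  have hTc : ∀ i, Continuous (T i) := fun i => (T i).continuous_of_finiteDimensional
  refine hcompact.image ?_
  unfold quadMap
  fun_prop

lemma exists_isMinOn_dotProduct_quadMap (T : Fin d → E →ₗ[ℂ] E) (hK : K ≠ ⊥) (u : Fin d → ℝ) :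
    ∃ x ∈ K, ‖x‖ = 1 ∧ ∀ w ∈ numRange T K, u ⬝ᵥ quadMap T x ≤ u ⬝ᵥ w := by
  obtain ⟨y, hy, hy0⟩ := K.exists_mem_ne_zero_of_ne_bot hK
  obtain ⟨a, -, hay, ha1⟩ := exists_smul_mem_norm_eq_one hy hy0
  obtain ⟨_, ⟨x, ⟨hx, hx1⟩, rfl⟩, hmin⟩ := (isCompact_image_quadMap T K).exists_isMinOn
    ⟨_, _, ⟨hay, ha1⟩, rfl⟩ (continuous_const.dotProduct continuous_id).continuousOn
  refine ⟨x, hx, hx1, fun w hw => convexHull_min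
    (t := {w | u ⬝ᵥ quadMap T x ≤ dotProductEquiv ℝ (Fin d) u w}) ?_
    (convex_halfSpace_ge (dotProductEquiv ℝ (Fin d) u).isLinear _) hw⟩
  exact fun z hz => hmin hz

lemma isEllipticDisk_numRange_of_finrank_eq_two {T : Fin 3 → E →ₗ[ℂ] E}
    (hT : ∀ i, (T i).IsSymmetric) (hK : Module.finrank ℂ K = 2)
    (hdim : convDim (numRange T K) = 2) : IsEllipticDisk (numRange T K) := by
  obtain ⟨u, hu⟩ : ∃ u, u ∉ constFunctionals (numRange T K) := by
    by_contra! htop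
    have h := convDim_add_finrank_constFunctionals (numRange T K)
    rw [(Submodule.eq_top_iff').2 htop, finrank_top, Module.finrank_fin_fun] at h
    omega
  obtain ⟨x, hx, hx1, hmin⟩ := exists_isMinOn_dotProduct_quadMap T (K := K)
    (by rintro rfl; simp at hK) u
  have hpos := forall_le_dotProduct_numRange_iff.1 hmin
  set p := (u, u ⬝ᵥ quadMap T x)
  have hlt : compressionKer (pencil T p) K < K := lt_of_le_of_ne inf_le_left fun h =>
    hu <| (mem_constFunctionals_numRange_iff hT).2 ⟨_, fun y hy => by
      rw [← h] at hy
      exact (mem_compressionKer.1 hy).2⟩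
  have hmem : x ∈ compressionKer (pencil T p) K := by
    refine mem_compressionKer_of_re_inner_eq_zero (isSymmetric_pencil hT p) hpos hx ?_
    rw [re_inner_pencil, hx1]
    ring
  have hne : compressionKer (pencil T p) K ≠ ⊥ := fun h => by
    rw [h, Submodule.mem_bot] at hmem
    simp [hmem] at hx1
  have hfin := Submodule.finrank_lt_finrank_of_lt hlt
  have hfin' := Submodule.one_le_finrank_iff.2 hne
  obtain ⟨v, hv, -⟩ := exists_isRankOneVec_of_finrank_compressionKer hT hpos (by omega)
  have hfin'' := finrank_inf_orthogonal_singleton hv.1 hv.2.1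
  exact hv.isEllipticDisk_numRange hT hdim (subsingleton_numRange (by omega))

lemma exists_isRankOneVec_of_isNonEllipticFace {T : Fin 3 → E →ₗ[ℂ] E}
    (hT : ∀ i, (T i).IsSymmetric) (hK : Module.finrank ℂ K = 4)
    (hdim : convDim (numRange T K) = 3) {F : Set (Fin 3 → ℝ)}
    (hF : IsNonEllipticFace (numRange T K) F) :
    ∃ v, IsRankOneVec T K v ∧ F = numRange T (K ⊓ (ℂ ∙ v)ᗮ) := by
  obtain ⟨hface, hF2, hne⟩ := hF
  have hFne : F.Nonempty := (Set.not_subsingleton_iff.1 fun h => by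
    rw [convDim_eq_zero_iff.2 h] at hF2
    omega).nonempty
  obtain ⟨N, hlt, rfl, hrank⟩ := exists_lt_eq_numRange_of_isFaceOf hT hface hFne (by omega)
  have hN1 : ¬ Module.finrank ℂ N ≤ 1 := fun h => by
    rw [convDim_eq_zero_iff.2 (subsingleton_numRange h)] at hF2
    omega
  have hN2 : Module.finrank ℂ N ≠ 2 := fun h =>
    hne (isEllipticDisk_numRange_of_finrank_eq_two hT h hF2)
  have hN4 := Submodule.finrank_lt_finrank_of_lt hlt
  obtain ⟨v, hv, rfl⟩ := hrank (by omega)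
  exact ⟨v, hv, rfl⟩

end EllipticFaces

section PencilForms

variable {E : Type*} [NormedAddCommGroup E] [InnerProductSpace ℂ E] {d : ℕ}
  {T : Fin d → E →ₗ[ℂ] E} {K K' : Submodule ℂ E} {p : (Fin d → ℝ) × ℝ} {v w x z : E}

/-- The sesquilinear form on `K` given by an element of the pencil; the rank of this map exceeds
the dimension of `numRange T K` by one. -/
def pencilForm (T : Fin d → E →ₗ[ℂ] E) (K : Submodule ℂ E) :
    (Fin d → ℝ) × ℝ →ₗ[ℝ] K → K → ℂ where
  toFun p y x := ⟪(y : E), pencil T p x⟫_ℂ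
  map_add' p q := by
    ext
    simp
  map_smul' r p := by
    ext
    simp [inner_smul_right_eq_smul]

lemma mem_ker_pencilForm :
    p ∈ LinearMap.ker (pencilForm T K) ↔ ∀ x ∈ K, ∀ y ∈ K, ⟪y, pencil T p x⟫_ℂ = 0 := by
  simp only [LinearMap.mem_ker, funext_iff, Subtype.forall]
  exact ⟨fun h x hx y hy => h y hy x hx, fun h y hy x hx => h x hx y hy⟩

lemma convDim_add_finrank_ker_pencilForm (hT : ∀ i, (T i).IsSymmetric) (hK : K ≠ ⊥) :
    convDim (numRange T K) + Module.finrank ℝ (LinearMap.ker (pencilForm T K)) = d := by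
  obtain ⟨y, hy, hy0⟩ := K.exists_mem_ne_zero_of_ne_bot hK
  let f := (LinearMap.fst ℝ (Fin d → ℝ) ℝ).domRestrict (LinearMap.ker (pencilForm T K))
  have hinj : Function.Injective f := by
    refine (injective_iff_map_eq_zero f).2 ?_
    rintro ⟨⟨u, c⟩, hp⟩ (rfl : u = 0)
    obtain rfl : c = 0 := by simpa [pencil_apply, hy0] using mem_ker_pencilForm.1 hp y hy y hy
    rfl
  have hrange : LinearMap.range f = constFunctionals (numRange T K) := by
    refine (LinearMap.range_domRestrict _ _).trans (Submodule.ext fun u => ?_)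
    simp only [mem_constFunctionals_numRange_iff hT, Submodule.mem_map, mem_ker_pencilForm,
      Prod.exists, LinearMap.fst_apply, exists_and_right, exists_eq_right]
  rw [← LinearMap.finrank_range_of_inj hinj, hrange, convDim_add_finrank_constFunctionals]

namespace IsRankOneVec

lemma convDim_numRange_lt (hT : ∀ i, (T i).IsSymmetric) (hv : IsRankOneVec T K v)
    (hK : K ⊓ (ℂ ∙ v)ᗮ ≠ ⊥) :
    convDim (numRange T (K ⊓ (ℂ ∙ v)ᗮ)) < convDim (numRange T K) := by
  obtain ⟨hvK, hv0, p, hp⟩ := hv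
  have hlt : LinearMap.ker (pencilForm T K) < LinearMap.ker (pencilForm T (K ⊓ (ℂ ∙ v)ᗮ)) := by
    refine SetLike.lt_iff_le_and_exists.2 ⟨fun q hq => ?_, p, ?_, fun hmem => ?_⟩
    · rw [mem_ker_pencilForm] at hq ⊢
      exact fun x hx y hy => hq x hx.1 y hy.1
    · refine mem_ker_pencilForm.2 fun x hx y hy => ?_
      rw [hp x hx.1 y hy.1, (mem_inf_orthogonal_singleton.1 hx).2, mul_zero]
    · have h := mem_ker_pencilForm.1 hmem v hvK v hvK
      rw [hp v hvK v hvK, mul_self_eq_zero, inner_self_eq_zero] at h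
      exact hv0 h
  have h := convDim_add_finrank_ker_pencilForm hT hK
  have h' := convDim_add_finrank_ker_pencilForm (K := K) hT (by rintro rfl; simp at hK)
  have := Submodule.finrank_lt_finrank_of_lt hlt
  omega

lemma quadMap_mem_numRange_inf_iff (hT : ∀ i, (T i).IsSymmetric) (hv : IsRankOneVec T K v)
    (hK : K' ≤ K) (hx : x ∈ K) (hx1 : ‖x‖ = 1) :
    quadMap T x ∈ numRange T (K' ⊓ (ℂ ∙ v)ᗮ) ↔ quadMap T x ∈ numRange T K' ∧ ⟪v, x⟫_ℂ = 0 := by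
  obtain ⟨u, c, hp, -, hlevel⟩ := hv.exists_supporting hT
  have hre := re_inner_pencil T u c x
  rw [hp x hx x hx, ← inner_conj_symm x v, Complex.conj_mul', ← Complex.ofReal_pow,
    Complex.ofReal_re, hx1, one_pow, mul_one] at hre
  rw [← hlevel K' hK, Set.mem_sep_iff, ← sub_eq_zero (b := c), ← hre,
    pow_eq_zero_iff two_ne_zero, norm_eq_zero]

end IsRankOneVec

lemma span_singleton_eq_of_inf_orthogonal_le (hw : w ∈ K) (hw0 : w ≠ 0) (hz : z ∈ K)
    (h : K ⊓ (ℂ ∙ z)ᗮ ≤ (ℂ ∙ w)ᗮ) : ℂ ∙ w = ℂ ∙ z := by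
  have hmem : w - (ℂ ∙ z).starProjection w ∈ K ⊓ (ℂ ∙ z)ᗮ :=
    ⟨K.sub_mem hw ((Submodule.span_singleton_le_iff_mem z K).2 hz
      (Submodule.starProjection_apply_mem _ w)), Submodule.sub_starProjection_mem_orthogonal w⟩
  have hproj := Submodule.inner_right_of_mem_orthogonal
    (Submodule.starProjection_apply_mem (ℂ ∙ z) w) hmem.2
  have hself := Submodule.mem_orthogonal_singleton_iff_inner_right.1 (h hmem)
  rw [← hproj, ← sub_eq_zero, ← inner_sub_left, inner_self_eq_zero, sub_eq_zero] at hself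
  have hwz : w ∈ ℂ ∙ z := hself ▸ Submodule.starProjection_apply_mem (ℂ ∙ z) w
  obtain ⟨a, rfl⟩ := Submodule.mem_span_singleton.1 hwz
  exact Submodule.span_singleton_smul_eq (left_ne_zero_of_smul hw0).isUnit z

lemma IsRankOneVec.span_eq_of_numRange_subset (hT : ∀ i, (T i).IsSymmetric)
    (hw : IsRankOneVec T K w) (hz : z ∈ K)
    (h : numRange T (K ⊓ (ℂ ∙ z)ᗮ) ⊆ numRange T (K ⊓ (ℂ ∙ w)ᗮ)) : ℂ ∙ w = ℂ ∙ z := by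
  refine span_singleton_eq_of_inf_orthogonal_le hw.1 hw.2.1 hz fun x hx => ?_
  rcases eq_or_ne x 0 with rfl | hx0
  · exact zero_mem _
  obtain ⟨a, ha, hax, ha1⟩ := exists_smul_mem_norm_eq_one hx hx0
  have h0 := ((hw.quadMap_mem_numRange_inf_iff hT le_rfl hax.1 ha1).1
    (h (quadMap_mem_numRange hax ha1))).2
  rw [inner_smul_right, mul_eq_zero] at h0
  exact Submodule.mem_orthogonal_singleton_iff_inner_right.2 (h0.resolve_left ha)

end PencilForms

section Edges

/-- The edges of a convex set, that is, its one-dimensional faces. -/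
def edges {V : Type*} [AddCommGroup V] [Module ℝ V] (C : Set V) : Set (Set V) :=
  {G | IsFaceOf C G ∧ convDim G = 1}

variable {E : Type*} [NormedAddCommGroup E] [InnerProductSpace ℂ E]

/-- The lines spanned by the rank-one vectors of `T` on `K`. -/
def rankOneLines {d : ℕ} (T : Fin d → E →ₗ[ℂ] E) (K : Submodule ℂ E) : Set (Submodule ℂ E) :=
  {L | ∃ v, IsRankOneVec T K v ∧ L = ℂ ∙ v}

variable [FiniteDimensional ℂ E] {T : Fin 3 → E →ₗ[ℂ] E} {K : Submodule ℂ E}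

lemma edges_numRange_eq_image (hT : ∀ i, (T i).IsSymmetric) (hK : Module.finrank ℂ K = 3)
    (hdim : convDim (numRange T K) = 2) (hne : ¬IsEllipticDisk (numRange T K)) :
    edges (numRange T K) = (fun L => numRange T (K ⊓ Lᗮ)) '' rankOneLines T K := by
  ext G
  constructor
  · rintro ⟨hface, hG⟩
    have hns : ¬G.Subsingleton := fun h => by
      rw [convDim_eq_zero_iff.2 h] at hG
      omega
    obtain ⟨N, hlt, rfl, hrank⟩ := exists_lt_eq_numRange_of_isFaceOf hT hface
      (Set.not_subsingleton_iff.1 hns).nonempty (by omega)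
    have hN : ¬Module.finrank ℂ N ≤ 1 := fun h => hns (subsingleton_numRange h)
    have hlt' := Submodule.finrank_lt_finrank_of_lt hlt
    obtain ⟨v, hv, rfl⟩ := hrank (by omega)
    exact ⟨_, ⟨v, hv, rfl⟩, rfl⟩
  · rintro ⟨_, ⟨v, hv, rfl⟩, rfl⟩
    have hpos := mt (fun h => hv.isEllipticDisk_numRange hT hdim (convDim_eq_zero_iff.1 h)) hne
    have hbot : K ⊓ (ℂ ∙ v)ᗮ ≠ ⊥ := fun h => by
      have hfin := finrank_inf_orthogonal_singleton hv.1 hv.2.1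
      rw [h, finrank_bot] at hfin
      omega
    have hlt := hv.convDim_numRange_lt hT hbot
    exact ⟨hv.isFaceOf_numRange hT, by dsimp only; omega⟩

lemma encard_edges_numRange (hT : ∀ i, (T i).IsSymmetric) (hK : Module.finrank ℂ K = 3)
    (hdim : convDim (numRange T K) = 2) (hne : ¬IsEllipticDisk (numRange T K)) :
    (edges (numRange T K)).encard = (rankOneLines T K).encard := by
  rw [edges_numRange_eq_image hT hK hdim hne]
  refine Set.InjOn.encard_image ?_
  rintro _ ⟨v, hv, rfl⟩ _ ⟨w, hw, rfl⟩ h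
  exact hv.span_eq_of_numRange_subset hT hw.1 h.ge

end Edges

section Frames

variable {E : Type*} [NormedAddCommGroup E] [InnerProductSpace ℂ E] {K : Submodule ℂ E} {m : ℕ}
  {w : Fin m → E} {e y : E}

lemma span_singleton_ne_of_inner_eq_zero {x y : E} (hy0 : y ≠ 0) (h : ⟪x, y⟫_ℂ = 0) :
    ℂ ∙ x ≠ ℂ ∙ y := fun heq => by
  have hy : y ∈ (ℂ ∙ y)ᗮ := heq ▸ Submodule.mem_orthogonal_singleton_iff_inner_right.2 h
  exact hy0 (inner_self_eq_zero.1 (Submodule.mem_orthogonal_singleton_iff_inner_right.1 hy))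

lemma eq_of_mem_of_forall_inner_eq {x y : E} (hx : x ∈ K) (hy : y ∈ K)
    (h : ∀ u ∈ K, ⟪u, x⟫_ℂ = ⟪u, y⟫_ℂ) : x = y := by
  have hself := h _ (K.sub_mem hx hy)
  rwa [← sub_eq_zero, ← inner_sub_right, inner_self_eq_zero, sub_eq_zero] at hself

lemma exists_span_singleton_eq_of_smul_eq_sum (hw : LinearIndependent ℂ w)
    (hwK : ∀ i, w i ∈ K) (hy : y ∈ K) (hy0 : y ≠ 0) {t : Fin m → ℂ}
    (h : ∀ x ∈ K, ⟪y, x⟫_ℂ • y = ∑ i, (t i * ⟪w i, x⟫_ℂ) • w i) : ∃ i, ℂ ∙ y = ℂ ∙ w i := by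
  obtain ⟨s, hs⟩ : ∃ s : Fin m → ℂ, ∑ i, s i • w i = y := by
    refine (Submodule.mem_span_range_iff_exists_fun ℂ).1 ?_
    rw [← Submodule.smul_mem_iff _ ((inner_self_ne_zero (𝕜 := ℂ)).2 hy0), h y hy]
    exact sum_mem fun i _ => Submodule.smul_mem _ _ (Submodule.subset_span ⟨i, rfl⟩)
  obtain ⟨i, hi⟩ : ∃ i, s i ≠ 0 := by
    by_contra! hs0
    simp [← hs, hs0] at hy0
  refine ⟨i, span_singleton_eq_of_inf_orthogonal_le hy hy0 (hwK i) fun x hx => ?_⟩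
  rw [mem_inf_orthogonal_singleton] at hx
  have hsum : ∑ j, (⟪y, x⟫_ℂ * s j) • w j = ∑ j, (t j * ⟪w j, x⟫_ℂ) • w j := by
    rw [← h x hx.1]
    simp only [mul_smul, ← Finset.smul_sum, hs]
  have hcoeff := Fintype.linearIndependent_iffₛ.1 hw _ _ hsum i
  rw [hx.2, mul_zero, mul_eq_zero] at hcoeff
  exact Submodule.mem_orthogonal_singleton_iff_inner_right.2 (hcoeff.resolve_right hi)

/-- The real span, as forms on `K`, of the inner product and of the squares of the `w i`. -/
def frameForm (K : Submodule ℂ E) (w : Fin m → E) : ℝ × (Fin m → ℝ) →ₗ[ℝ] K → K → ℂ :=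
  (LinearMap.toSpanSingleton ℝ (K → K → ℂ) fun y x => ⟪(y : E), x⟫_ℂ).coprod
    (Fintype.linearCombination ℝ fun i y x => ⟪(y : E), w i⟫_ℂ * ⟪w i, x⟫_ℂ)

lemma frameForm_apply (K : Submodule ℂ E) (w : Fin m → E) (q : ℝ × (Fin m → ℝ)) (y x : K) :
    frameForm K w q y x = ⟪(y : E), q.1 • (x : E) + ∑ i, (q.2 i * ⟪w i, x⟫_ℂ) • w i⟫_ℂ := by
  simp only [frameForm, LinearMap.coprod_apply, LinearMap.toSpanSingleton_apply,
    Fintype.linearCombination_apply, Pi.add_apply, Pi.smul_apply, Finset.sum_apply,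
    inner_add_right, inner_sum, inner_smul_right, inner_smul_right_eq_smul, Complex.real_smul]
  congr! 2
  ring

lemma frameForm_injective (hw : LinearIndependent ℂ w) (hwK : ∀ i, w i ∈ K) (he : e ∈ K)
    (he0 : e ≠ 0) (hew : ∀ i, ⟪w i, e⟫_ℂ = 0) : Function.Injective (frameForm K w) := by
  refine (injective_iff_map_eq_zero _).2 fun ⟨a, t⟩ h => ?_
  have hvec : ∀ x ∈ K, a • x + ∑ i, (t i * ⟪w i, x⟫_ℂ) • w i = 0 := fun x hx =>
    eq_of_mem_of_forall_inner_eq (K.add_mem (K.smul_of_tower_mem a hx)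
      (sum_mem fun i _ => K.smul_mem _ (hwK i))) K.zero_mem fun u hu => by
        rw [inner_zero_right, ← frameForm_apply K w (a, t) ⟨u, hu⟩ ⟨x, hx⟩, h]
        rfl
  obtain rfl : a = 0 := by simpa [hew, he0] using hvec e he
  refine Prod.ext rfl (funext fun i => ?_)
  have hi := hvec (w i) (hwK i)
  rw [zero_smul, zero_add] at hi
  simpa [hw.ne_zero i] using Fintype.linearIndependent_iff.1 hw _ hi i

variable {d : ℕ} {T : Fin d → E →ₗ[ℂ] E}

/-- Linearly independent rank-one vectors, one fewer than the dimension of `K`, such that the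
compressions of the pencil to `K` are the combinations of the identity and of the rank-one
operators of the frame: the latter is what the condition on `convDim` amounts to. -/
structure IsFrame_s4 (T : Fin d → E →ₗ[ℂ] E) (K : Submodule ℂ E) (w : Fin m → E) : Prop where
  linearIndependent : LinearIndependent ℂ w
  isRankOneVec : ∀ i, IsRankOneVec T K (w i)
  finrank_eq : Module.finrank ℂ K = m + 1
  convDim_eq : convDim (numRange T K) = m

lemma pencilForm_sum_smul {p : Fin m → (Fin d → ℝ) × ℝ}
    (hp : ∀ i, ∀ x ∈ K, ∀ y ∈ K, ⟪y, pencil T (p i) x⟫_ℂ = ⟪y, w i⟫_ℂ * ⟪w i, x⟫_ℂ)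
    (t : Fin m → ℝ) : pencilForm T K (∑ i, t i • p i) = frameForm K w (0, t) := by
  ext u x
  simp [frameForm, Fintype.linearCombination_apply, pencilForm, hp _ x x.2 u u.2]

lemma span_range_eq_ker_pencilForm (hT : ∀ i, (T i).IsSymmetric) (hw : LinearIndependent ℂ w)
    (hwK : ∀ i, w i ∈ K) {p : Fin m → (Fin d → ℝ) × ℝ}
    (hp : ∀ i, ∀ x ∈ K, ∀ y ∈ K, ⟪y, pencil T (p i) x⟫_ℂ = ⟪y, w i⟫_ℂ * ⟪w i, x⟫_ℂ)
    (hL : K ⊓ (Submodule.span ℂ (Set.range w))ᗮ ≠ ⊥)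
    (hdim : d ≤ convDim (numRange T (K ⊓ (Submodule.span ℂ (Set.range w))ᗮ)) + m) :
    Submodule.span ℝ (Set.range p) =
      LinearMap.ker (pencilForm T (K ⊓ (Submodule.span ℂ (Set.range w))ᗮ)) := by
  obtain ⟨e, ⟨he, hew⟩, he0⟩ := Submodule.exists_mem_ne_zero_of_ne_bot hL
  have horth : ∀ {x}, x ∈ (Submodule.span ℂ (Set.range w))ᗮ → ∀ i, ⟪w i, x⟫_ℂ = 0 :=
    fun hx i => Submodule.inner_right_of_mem_orthogonal
      (Submodule.subset_span (Set.mem_range_self i)) hx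
  have hp_li : LinearIndependent ℝ p := Fintype.linearIndependent_iff.2 fun t ht => by
    have h0 := pencilForm_sum_smul hp t
    rw [ht, map_zero, eq_comm,
      map_eq_zero_iff _ (frameForm_injective hw hwK he he0 (horth hew))] at h0
    exact congrFun (congrArg Prod.snd h0)
  refine Submodule.eq_of_le_of_finrank_le (Submodule.span_le.2 ?_) ?_
  · rintro _ ⟨i, rfl⟩
    exact mem_ker_pencilForm.2 fun x hx u hu => by
      rw [hp i x hx.1 u hu.1, horth hx.2, mul_zero]
  · have := convDim_add_finrank_ker_pencilForm hT hL
    rw [finrank_span_eq_card hp_li, Fintype.card_fin]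
    omega

lemma exists_span_singleton_eq_of_mem_span (hT : ∀ i, (T i).IsSymmetric)
    (hw : LinearIndependent ℂ w) (hwK : ∀ i, IsRankOneVec T K (w i))
    (hL : K ⊓ (Submodule.span ℂ (Set.range w))ᗮ ≠ ⊥)
    (hdim : d ≤ convDim (numRange T (K ⊓ (Submodule.span ℂ (Set.range w))ᗮ)) + m)
    (hy : IsRankOneVec T K y) (hyw : y ∈ Submodule.span ℂ (Set.range w)) :
    ∃ i, ℂ ∙ y = ℂ ∙ w i := by
  choose hwK _ p hp using hwK
  obtain ⟨hyK, hy0, q, hq⟩ := hy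
  have hqL : q ∈ Submodule.span ℝ (Set.range p) :=
    (span_range_eq_ker_pencilForm hT hw hwK hp hL hdim).ge <| mem_ker_pencilForm.2
      fun x hx u hu => by
        rw [hq x hx.1 u hu.1, Submodule.inner_right_of_mem_orthogonal hyw hx.2, mul_zero]
  obtain ⟨t, rfl⟩ := (Submodule.mem_span_range_iff_exists_fun ℝ).1 hqL
  refine exists_span_singleton_eq_of_smul_eq_sum hw hwK hyK hy0 (t := fun i => t i) fun x hx =>
    eq_of_mem_of_forall_inner_eq (K.smul_mem _ hyK) (sum_mem fun i _ => K.smul_mem _ (hwK i))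
      fun u hu => ?_
  have h := congrFun (congrFun (pencilForm_sum_smul hp t) ⟨u, hu⟩) ⟨x, hx⟩
  rw [frameForm_apply, zero_smul, zero_add] at h
  rw [inner_smul_right, mul_comm, ← hq x hx u hu]
  exact h

namespace IsFrame_s4

lemma exists_unit_orthogonal [FiniteDimensional ℂ E] (hw : IsFrame_s4 T K w) :
    ∃ e ∈ K, ‖e‖ = 1 ∧ (∀ i, ⟪w i, e⟫_ℂ = 0) ∧
      ∀ x ∈ K, x - ⟪e, x⟫_ℂ • e ∈ Submodule.span ℂ (Set.range w) := by
  obtain ⟨e, he, he1, heN, hspan⟩ :=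
    exists_unit_orthogonal_of_finrank_add_one (N := Submodule.span ℂ (Set.range w)) (K := K)
      (Submodule.span_le.2 (Set.range_subset_iff.2 fun i => (hw.isRankOneVec i).1))
      (by rw [finrank_span_eq_card hw.linearIndependent, Fintype.card_fin, hw.finrank_eq])
  exact ⟨e, he, he1, fun i => Submodule.inner_right_of_mem_orthogonal
    (Submodule.subset_span (Set.mem_range_self i)) heN, hspan⟩

lemma encard_range_span_singleton (hw : IsFrame_s4 T K w) :
    (Set.range fun i => ℂ ∙ w i).encard = m := by
  have hinj : Function.Injective fun i => ℂ ∙ w i :=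
    hw.linearIndependent.iSupIndep_span_singleton.injective fun i =>
      mt Submodule.span_singleton_eq_bot.1 (hw.isRankOneVec i).2.1
  rw [← Set.image_univ, hinj.encard_image, Set.encard_univ, ENat.card_eq_coe_fintype_card,
    Fintype.card_fin]

variable [FiniteDimensional ℂ E]

lemma range_frameForm (hT : ∀ i, (T i).IsSymmetric) (hw : IsFrame_s4 T K w) :
    LinearMap.range (frameForm K w) = LinearMap.range (pencilForm T K) := by
  obtain ⟨e, he, he1, hew, -⟩ := hw.exists_unit_orthogonal
  have hK : K ≠ ⊥ := by
    rintro rfl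
    simpa using hw.finrank_eq
  refine Submodule.eq_of_le_of_finrank_eq ?_ ?_
  · rw [frameForm, LinearMap.range_coprod, LinearMap.range_toSpanSingleton,
      Fintype.range_linearCombination, sup_le_iff, Submodule.span_le, Submodule.span_le,
      Set.singleton_subset_iff, Set.range_subset_iff]
    refine ⟨⟨(0, -1), funext fun y => funext fun x => ?_⟩, fun i => ?_⟩
    · simp [pencilForm, pencil_apply]
    · obtain ⟨-, -, p, hp⟩ := hw.isRankOneVec i
      exact ⟨p, funext fun y => funext fun x => hp x x.2 y y.2⟩
  · have hrank := (pencilForm T K).finrank_range_add_finrank_ker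
    have hker := convDim_add_finrank_ker_pencilForm hT hK
    rw [LinearMap.finrank_range_of_inj (frameForm_injective hw.linearIndependent
      (fun i => (hw.isRankOneVec i).1) he (norm_ne_zero_iff.1 (by simp [he1])) hew)]
    simp only [Module.finrank_prod, Module.finrank_fin_fun, Module.finrank_self] at hrank ⊢
    rw [hw.convDim_eq] at hker
    omega

lemma exists_inner_pencil_eq (hT : ∀ i, (T i).IsSymmetric) (hw : IsFrame_s4 T K w)
    (p : (Fin d → ℝ) × ℝ) : ∃ (a : ℝ) (t : Fin m → ℝ), ∀ x ∈ K, ∀ y ∈ K,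
      ⟪y, pencil T p x⟫_ℂ = ⟪y, a • x + ∑ i, (t i * ⟪w i, x⟫_ℂ) • w i⟫_ℂ := by
  obtain ⟨⟨a, t⟩, h⟩ := (hw.range_frameForm hT).ge ⟨p, rfl⟩
  refine ⟨a, t, fun x hx y hy => ?_⟩
  rw [← frameForm_apply K w (a, t) ⟨y, hy⟩ ⟨x, hx⟩, h]
  rfl

lemma exists_inner_smul_eq (hT : ∀ i, (T i).IsSymmetric) (hw : IsFrame_s4 T K w)
    (hy : IsRankOneVec T K y) : ∃ (a : ℝ) (t : Fin m → ℝ), ∀ x ∈ K,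
      ⟪y, x⟫_ℂ • y = a • x + ∑ i, (t i * ⟪w i, x⟫_ℂ) • w i := by
  obtain ⟨hyK, -, p, hp⟩ := hy
  obtain ⟨a, t, h⟩ := hw.exists_inner_pencil_eq hT p
  refine ⟨a, t, fun x hx => eq_of_mem_of_forall_inner_eq (K.smul_mem _ hyK)
    (K.add_mem (K.smul_of_tower_mem a hx)
      (sum_mem fun i _ => K.smul_mem _ (hw.isRankOneVec i).1)) fun u hu => ?_⟩
  rw [← h x hx u hu, hp x hx u hu, inner_smul_right, mul_comm]

lemma span_singleton_eq_or (hT : ∀ i, (T i).IsSymmetric) (hw : IsFrame_s4 T K w) (he : e ∈ K)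
    (he0 : e ≠ 0) (hew : ∀ i, ⟪w i, e⟫_ℂ = 0) (hy : IsRankOneVec T K y) :
    (∃ i, ℂ ∙ y = ℂ ∙ w i) ∨ ℂ ∙ y = ℂ ∙ e ∧ Pairwise fun i j => ⟪w i, w j⟫_ℂ = 0 := by
  obtain ⟨a, t, h⟩ := hw.exists_inner_smul_eq hT hy
  rcases eq_or_ne a 0 with rfl | ha
  · simp only [zero_smul, zero_add] at h
    exact .inl (exists_span_singleton_eq_of_smul_eq_sum hw.linearIndependent
      (fun i => (hw.isRankOneVec i).1) hy.1 hy.2.1 h)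
  have hye : ⟪y, e⟫_ℂ • y = a • e := by simpa [hew] using h e he
  have hcoeff : ⟪y, e⟫_ℂ ≠ 0 := fun h0 =>
    smul_ne_zero ha he0 (by rw [← hye, h0, zero_smul])
  have hspan : ℂ ∙ y = ℂ ∙ e := by
    rw [← Submodule.span_singleton_smul_eq hcoeff.isUnit, hye,
      ← Submodule.span_singleton_smul_eq (Complex.ofReal_ne_zero.2 ha).isUnit e, Complex.coe_smul]
  refine .inr ⟨hspan, fun i j hij => ?_⟩
  obtain ⟨b, hb⟩ := Submodule.mem_span_singleton.1 (hspan ▸ Submodule.mem_span_singleton_self y)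
  have hcoeffs : ∀ i j, (Pi.single j (-a : ℂ) : Fin m → ℂ) i = t i * ⟪w i, w j⟫_ℂ := by
    refine fun i j => Fintype.linearIndependent_iffₛ.1 hw.linearIndependent _
      (fun i => t i * ⟪w i, w j⟫_ℂ) ?_ i
    have hyw : ⟪y, w j⟫_ℂ = 0 := by
      rw [← hb, inner_smul_left, inner_eq_zero_symm.1 (hew j), mul_zero]
    have hwj := h (w j) (hw.isRankOneVec j).1
    rw [hyw, zero_smul, add_comm] at hwj
    simpa [Pi.single_apply] using (eq_neg_of_add_eq_zero_left hwj.symm).symm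
  have hti : t i ≠ 0 := fun h0 => ha (by simpa [h0] using hcoeffs i i)
  simpa [hij, hti] using hcoeffs i j

lemma exists_isRankOneVec_orthogonal (hT : ∀ i, (T i).IsSymmetric) (hw : IsFrame_s4 T K w)
    (horth : Pairwise fun i j => ⟪w i, w j⟫_ℂ = 0) :
    ∃ e, IsRankOneVec T K e ∧ ‖e‖ = 1 ∧ ∀ i, ⟪w i, e⟫_ℂ = 0 := by
  obtain ⟨e, he, he1, hew, hspan⟩ := hw.exists_unit_orthogonal
  obtain ⟨p, hp⟩ := (hw.range_frameForm hT).le ⟨(1, fun i => -(‖w i‖ ^ 2)⁻¹), rfl⟩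
  refine ⟨e, ⟨he, norm_ne_zero_iff.1 (by simp [he1]), p, fun x hx y hy => ?_⟩, he1, hew⟩
  have hform := congrFun (congrFun hp ⟨y, hy⟩) ⟨x, hx⟩
  rw [frameForm_apply, pencilForm] at hform
  refine hform.trans ?_
  obtain ⟨c, hc⟩ := (Submodule.mem_span_range_iff_exists_fun ℂ).1 (hspan x hx)
  have hcoeff : ∀ i, ((-(‖w i‖ ^ 2)⁻¹ : ℝ) : ℂ) * ⟪w i, x⟫_ℂ = -c i := fun i => by
    have hi : ⟪w i, x - ⟪e, x⟫_ℂ • e⟫_ℂ = c i * ‖w i‖ ^ 2 := by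
      rw [← hc, inner_sum, Finset.sum_eq_single i
        (fun j _ hj => by rw [inner_smul_right, horth hj.symm, mul_zero]) (by simp),
        inner_smul_right, inner_self_eq_norm_sq_to_K]
      rfl
    rw [inner_sub_right, inner_smul_right, hew, mul_zero, sub_zero] at hi
    have hwi : (‖w i‖ : ℂ) ≠ 0 := by simpa using (hw.isRankOneVec i).2.1
    rw [hi]
    push_cast
    field_simp
  simp only [hcoeff, neg_smul, Finset.sum_neg_distrib, hc, one_smul]
  rw [neg_sub, add_sub_cancel, inner_smul_right, mul_comm]

lemma encard_rankOneLines_of_not_pairwise (hT : ∀ i, (T i).IsSymmetric) (hw : IsFrame_s4 T K w)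
    (horth : ¬Pairwise fun i j => ⟪w i, w j⟫_ℂ = 0) : (rankOneLines T K).encard = m := by
  obtain ⟨e, he, he1, hew, -⟩ := hw.exists_unit_orthogonal
  have he0 : e ≠ 0 := norm_ne_zero_iff.1 (by simp [he1])
  have heq : rankOneLines T K = Set.range fun i => ℂ ∙ w i := by
    ext L
    constructor
    · rintro ⟨y, hy, rfl⟩
      obtain ⟨i, hi⟩ | ⟨-, h⟩ := hw.span_singleton_eq_or hT he he0 hew hy
      · exact ⟨i, hi.symm⟩
      · exact absurd h horth
    · rintro ⟨i, rfl⟩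
      exact ⟨_, hw.isRankOneVec i, rfl⟩
  rw [heq, hw.encard_range_span_singleton]

lemma encard_rankOneLines_of_pairwise (hT : ∀ i, (T i).IsSymmetric) (hw : IsFrame_s4 T K w)
    (horth : Pairwise fun i j => ⟪w i, w j⟫_ℂ = 0) : (rankOneLines T K).encard = m + 1 := by
  obtain ⟨e, he, -, hew⟩ := hw.exists_isRankOneVec_orthogonal hT horth
  have heq : rankOneLines T K = insert (ℂ ∙ e) (Set.range fun i => ℂ ∙ w i) := by
    ext L
    constructor
    · rintro ⟨y, hy, rfl⟩
      obtain ⟨i, hi⟩ | ⟨h, -⟩ := hw.span_singleton_eq_or hT he.1 he.2.1 hew hy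
      · exact .inr ⟨i, hi.symm⟩
      · exact .inl h
    · rintro (rfl | ⟨i, rfl⟩)
      · exact ⟨e, he, rfl⟩
      · exact ⟨_, hw.isRankOneVec i, rfl⟩
  have hnotMem : ℂ ∙ e ∉ Set.range fun i => ℂ ∙ w i := by
    rintro ⟨i, hi⟩
    exact span_singleton_ne_of_inner_eq_zero he.2.1 (hew i) hi
  rw [heq, Set.encard_insert_of_notMem hnotMem, hw.encard_range_span_singleton]

end IsFrame_s4

end Frames

section OrthogonalProjections

variable {E : Type*} [NormedAddCommGroup E] [InnerProductSpace ℂ E] {d m : ℕ}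
  {T : Fin d → E →ₗ[ℂ] E} {K : Submodule ℂ E} {u v w : E}

lemma inner_starProjection_orthogonal_left {x : E} (hx : x ∈ (ℂ ∙ v)ᗮ) :
    ⟪(ℂ ∙ v)ᗮ.starProjection w, x⟫_ℂ = ⟪w, x⟫_ℂ := by
  rw [Submodule.inner_starProjection_left_eq_right, Submodule.starProjection_eq_self_iff.2 hx]

lemma inner_starProjection_orthogonal (hv : ‖v‖ = 1) :
    ⟪(ℂ ∙ v)ᗮ.starProjection u, (ℂ ∙ v)ᗮ.starProjection w⟫_ℂ =
      ⟪u, w⟫_ℂ - ⟪u, v⟫_ℂ * ⟪v, w⟫_ℂ := by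
  rw [inner_starProjection_orthogonal_left (Submodule.starProjection_apply_mem _ w),
    Submodule.starProjection_orthogonal_val, Submodule.starProjection_unit_singleton ℂ hv,
    inner_sub_right, inner_smul_right, mul_comm]

lemma starProjection_orthogonal_mem (hv : v ∈ K) (hw : w ∈ K) :
    (ℂ ∙ v)ᗮ.starProjection w ∈ K ⊓ (ℂ ∙ v)ᗮ := by
  refine ⟨?_, Submodule.starProjection_apply_mem _ w⟩
  rw [SetLike.mem_coe, Submodule.starProjection_orthogonal_val]
  exact K.sub_mem hw ((Submodule.span_singleton_le_iff_mem v K).2 hv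
    (Submodule.starProjection_apply_mem _ w))

lemma IsRankOneVec.starProjection_orthogonal (hw : IsRankOneVec T K w) (hv : v ∈ K)
    (hne : (ℂ ∙ v)ᗮ.starProjection w ≠ 0) :
    IsRankOneVec T (K ⊓ (ℂ ∙ v)ᗮ) ((ℂ ∙ v)ᗮ.starProjection w) :=
  hw.restrict inf_le_left (starProjection_orthogonal_mem hv hw.1) hne fun _ hx =>
    inner_starProjection_orthogonal_left hx.2

lemma inf_orthogonal_starProjection (K : Submodule ℂ E) (v w : E) :
    K ⊓ (ℂ ∙ v)ᗮ ⊓ (ℂ ∙ (ℂ ∙ v)ᗮ.starProjection w)ᗮ = K ⊓ (ℂ ∙ v)ᗮ ⊓ (ℂ ∙ w)ᗮ := by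
  ext x
  rw [mem_inf_orthogonal_singleton (K := K ⊓ _), mem_inf_orthogonal_singleton (K := K ⊓ _)]
  exact and_congr_right fun hx => by rw [inner_starProjection_orthogonal_left hx.2]

lemma span_singleton_eq_of_mem (hw0 : w ≠ 0) (h : w ∈ ℂ ∙ v) : ℂ ∙ v = ℂ ∙ w := by
  obtain ⟨c, rfl⟩ := Submodule.mem_span_singleton.1 h
  exact (Submodule.span_singleton_smul_eq (left_ne_zero_of_smul hw0).isUnit v).symm

lemma starProjection_orthogonal_ne_zero (hw0 : w ≠ 0) (hne : ℂ ∙ v ≠ ℂ ∙ w) :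
    (ℂ ∙ v)ᗮ.starProjection w ≠ 0 := by
  rw [Ne, Submodule.starProjection_apply_eq_zero_iff, Submodule.orthogonal_orthogonal]
  exact mt (span_singleton_eq_of_mem hw0) hne

lemma linearIndependent_pair_of_span_singleton_ne (hv0 : v ≠ 0) (hw0 : w ≠ 0)
    (hne : ℂ ∙ v ≠ ℂ ∙ w) : LinearIndependent ℂ ![v, w] :=
  (LinearIndependent.pair_iff' hv0).2 fun a ha =>
    hne (span_singleton_eq_of_mem hw0 (Submodule.mem_span_singleton.2 ⟨a, ha⟩))

lemma linearIndependent_starProjection_orthogonal {v : Fin (m + 1) → E}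
    (hv : LinearIndependent ℂ v) (k : Fin (m + 1)) :
    LinearIndependent ℂ fun i => (ℂ ∙ v k)ᗮ.starProjection (v (k.succAbove i)) := by
  refine (hv.comp k.succAbove k.succAbove_right_injective).map
    (f := ((ℂ ∙ v k)ᗮ.starProjection : E →ₗ[ℂ] E)) ?_
  have hdisj := hv.disjoint_span_image (disjoint_compl_left (a := {k}))
  rwa [Set.image_singleton, ← Fin.range_succAbove, ← Set.range_comp,
    ← (ℂ ∙ v k).orthogonal_orthogonal, ← Submodule.ker_starProjection] at hdisj

lemma isFrame_starProjection_orthogonal [FiniteDimensional ℂ E] {v : Fin (m + 1) → E}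
    (hv : LinearIndependent ℂ v) (hrank : ∀ i, IsRankOneVec T K (v i))
    (hK : Module.finrank ℂ K = m + 2) (k : Fin (m + 1))
    (hdim : convDim (numRange T (K ⊓ (ℂ ∙ v k)ᗮ)) = m) :
    IsFrame_s4 T (K ⊓ (ℂ ∙ v k)ᗮ) fun i => (ℂ ∙ v k)ᗮ.starProjection (v (k.succAbove i)) where
  linearIndependent := linearIndependent_starProjection_orthogonal hv k
  isRankOneVec i := (hrank _).starProjection_orthogonal (hrank k).1
    ((linearIndependent_starProjection_orthogonal hv k).ne_zero i)
  finrank_eq := by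
    have := finrank_inf_orthogonal_singleton (hrank k).1 (hrank k).2.1
    omega
  convDim_eq := hdim

lemma pairwise_starProjection_orthogonal_iff {v : Fin (m + 1) → E} (k : Fin (m + 1))
    (hk : ‖v k‖ = 1) :
    (Pairwise fun i j => ⟪(ℂ ∙ v k)ᗮ.starProjection (v (k.succAbove i)),
      (ℂ ∙ v k)ᗮ.starProjection (v (k.succAbove j))⟫_ℂ = 0) ↔
    ∀ i j, i ≠ k → j ≠ k → i ≠ j → ⟪v i, v j⟫_ℂ = ⟪v i, v k⟫_ℂ * ⟪v k, v j⟫_ℂ := by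
  simp only [inner_starProjection_orthogonal hk, sub_eq_zero]
  refine ⟨fun h i j hi hj hij => ?_, fun h i j hij => h _ _ (k.succAbove_ne i) (k.succAbove_ne j)
    (k.succAbove_right_injective.ne hij)⟩
  obtain ⟨i, rfl⟩ := Fin.exists_succAbove_eq hi
  obtain ⟨j, rfl⟩ := Fin.exists_succAbove_eq hj
  exact h (ne_of_apply_ne _ hij)

lemma pairwise_inner_eq_zero_of_forall_inner_eq_mul {v : Fin 3 → E} (hv1 : ∀ i, ‖v i‖ = 1)
    (hinj : Function.Injective fun i => ℂ ∙ v i)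
    (h : ∀ k i j, i ≠ k → j ≠ k → i ≠ j → ⟪v i, v j⟫_ℂ = ⟪v i, v k⟫_ℂ * ⟪v k, v j⟫_ℂ) :
    Pairwise fun i j => ⟪v i, v j⟫_ℂ = 0 := by
  intro i j hij
  obtain ⟨k, hik, hjk⟩ : ∃ k, i ≠ k ∧ j ≠ k := by decide +revert
  by_contra hne
  have hcs : ⟪v j, v k⟫_ℂ * ⟪v k, v j⟫_ℂ = 1 := by
    refine mul_left_cancel₀ hne ?_
    rw [mul_one, ← mul_assoc, ← h j i k hij hjk.symm hik, ← h k i j hik hjk hij]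
  have hnorm : ‖⟪v j, v k⟫_ℂ‖ = ‖v j‖ * ‖v k‖ := by
    rw [hv1, hv1, mul_one, ← pow_eq_one_iff_of_nonneg (norm_nonneg _) two_ne_zero, sq]
    nth_rw 2 [norm_inner_symm]
    rw [← norm_mul, hcs, norm_one]
  have hv0 : ∀ i, v i ≠ 0 := fun i => norm_ne_zero_iff.1 (by simp [hv1])
  obtain ⟨r, -, hr⟩ := (norm_inner_eq_norm_iff (hv0 j) (hv0 k)).1 hnorm
  exact hinj.ne hjk (span_singleton_eq_of_mem (hv0 k) (Submodule.mem_span_singleton.2 ⟨r, hr.symm⟩))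

end OrthogonalProjections

section NonEllipticFaces

variable {E : Type*} [NormedAddCommGroup E] [InnerProductSpace ℂ E]

/-- The unit rank-one vectors `v` whose facet `numRange T (K ⊓ (ℂ ∙ v)ᗮ)` is a non-elliptic
face. -/
structure IsNonEllipticNormal (T : Fin 3 → E →ₗ[ℂ] E) (K : Submodule ℂ E) (v : E) : Prop where
  isRankOneVec : IsRankOneVec T K v
  norm_eq_one : ‖v‖ = 1
  convDim_eq : convDim (numRange T (K ⊓ (ℂ ∙ v)ᗮ)) = 2
  not_isEllipticDisk : ¬IsEllipticDisk (numRange T (K ⊓ (ℂ ∙ v)ᗮ))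

variable {T : Fin 3 → E →ₗ[ℂ] E} {K : Submodule ℂ E} {F : Set (Fin 3 → ℝ)} {v w e : E}

lemma exists_isNonEllipticNormal [FiniteDimensional ℂ E] (hT : ∀ i, (T i).IsSymmetric)
    (hK : Module.finrank ℂ K = 4)
    (hdim : convDim (numRange T K) = 3) (hF : IsNonEllipticFace (numRange T K) F) :
    ∃ v, IsNonEllipticNormal T K v ∧ F = numRange T (K ⊓ (ℂ ∙ v)ᗮ) := by
  obtain ⟨v, hv, rfl⟩ := exists_isRankOneVec_of_isNonEllipticFace hT hK hdim hF
  obtain ⟨a, ha, -, hnorm⟩ := exists_smul_mem_norm_eq_one hv.1 hv.2.1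
  have hspan : ℂ ∙ (a • v) = ℂ ∙ v := Submodule.span_singleton_smul_eq ha.isUnit v
  exact ⟨a • v, ⟨hv.smul ha, hnorm, by rw [hspan, hF.2.1], by rw [hspan]; exact hF.2.2⟩,
    by rw [hspan]⟩

namespace IsNonEllipticNormal

lemma isNonEllipticFace (hT : ∀ i, (T i).IsSymmetric) (hv : IsNonEllipticNormal T K v) :
    IsNonEllipticFace (numRange T K) (numRange T (K ⊓ (ℂ ∙ v)ᗮ)) :=
  ⟨hv.isRankOneVec.isFaceOf_numRange hT, hv.convDim_eq, hv.not_isEllipticDisk⟩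

variable [FiniteDimensional ℂ E] (hT : ∀ i, (T i).IsSymmetric) (hK : Module.finrank ℂ K = 4)

include hK

lemma finrank_eq (hv : IsNonEllipticNormal T K v) : Module.finrank ℂ ↥(K ⊓ (ℂ ∙ v)ᗮ) = 3 := by
  have := finrank_inf_orthogonal_singleton hv.isRankOneVec.1 hv.isRankOneVec.2.1
  omega

include hT

lemma encard_edges (hv : IsNonEllipticNormal T K v) :
    (edges (numRange T (K ⊓ (ℂ ∙ v)ᗮ))).encard = (rankOneLines T (K ⊓ (ℂ ∙ v)ᗮ)).encard :=
  encard_edges_numRange hT (hv.finrank_eq hK) hv.convDim_eq hv.not_isEllipticDisk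

lemma numRange_inf_mem_edges (hv : IsNonEllipticNormal T K v) (hw : IsRankOneVec T K w)
    (hne : ℂ ∙ v ≠ ℂ ∙ w) :
    numRange T (K ⊓ (ℂ ∙ v)ᗮ ⊓ (ℂ ∙ w)ᗮ) ∈ edges (numRange T (K ⊓ (ℂ ∙ v)ᗮ)) := by
  rw [edges_numRange_eq_image hT (hv.finrank_eq hK) hv.convDim_eq hv.not_isEllipticDisk]
  have hproj := hw.starProjection_orthogonal hv.isRankOneVec.1
    (starProjection_orthogonal_ne_zero hw.2.1 hne)
  exact ⟨_, ⟨_, hproj, rfl⟩, by dsimp only; rw [inf_orthogonal_starProjection]⟩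

lemma of_inner_eq_zero (hdim : convDim (numRange T K) = 3) (hv : IsNonEllipticNormal T K v)
    (he : IsRankOneVec T K e) (he1 : ‖e‖ = 1) (hve : ⟪v, e⟫_ℂ = 0) :
    IsNonEllipticNormal T K e := by
  have hedge : convDim (numRange T (K ⊓ (ℂ ∙ e)ᗮ ⊓ (ℂ ∙ v)ᗮ)) = 1 := by
    rw [inf_right_comm]
    exact (hv.numRange_inf_mem_edges hT hK he
      (span_singleton_ne_of_inner_eq_zero he.2.1 hve)).2
  have hbot : K ⊓ (ℂ ∙ e)ᗮ ⊓ (ℂ ∙ v)ᗮ ≠ ⊥ := fun h => by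
    rw [h, convDim_eq_zero_iff.2 (subsingleton_numRange (by simp))] at hedge
    omega
  have hvK : IsRankOneVec T (K ⊓ (ℂ ∙ e)ᗮ) v := hv.isRankOneVec.restrict inf_le_left
    (mem_inf_orthogonal_singleton.2 ⟨hv.isRankOneVec.1, inner_eq_zero_symm.1 hve⟩)
    hv.isRankOneVec.2.1 fun _ _ => rfl
  have hlt := hvK.convDim_numRange_lt hT hbot
  have hlt' := he.convDim_numRange_lt hT (ne_bot_of_le_ne_bot hbot inf_le_left)
  have hdim2 : convDim (numRange T (K ⊓ (ℂ ∙ e)ᗮ)) = 2 := by omega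
  exact ⟨he, he1, hdim2, fun hell =>
    convDim_ne_one_of_isFaceOf_isEllipticDisk hell hdim2 (hvK.isFaceOf_numRange hT) hedge⟩

variable {v : Fin 3 → E}

lemma linearIndependent (hv : ∀ i, IsNonEllipticNormal T K (v i))
    (hinj : Function.Injective fun i => ℂ ∙ v i) : LinearIndependent ℂ v := by
  have hL : K ⊓ (Submodule.span ℂ (Set.range (Fin.init v)))ᗮ = K ⊓ (ℂ ∙ v 0)ᗮ ⊓ (ℂ ∙ v 1)ᗮ := by
    have hrange : Set.range (Fin.init v) = {v 0, v 1} := by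
      ext x
      simp [Fin.init, Fin.exists_fin_two, eq_comm]
    rw [hrange, Submodule.span_insert, ← Submodule.inf_orthogonal, inf_assoc]
  have hne : ∀ {i j}, i ≠ j → ℂ ∙ v i ≠ ℂ ∙ v j := fun h => hinj.ne h
  have hdim := ((hv 0).numRange_inf_mem_edges hT hK (hv 1).isRankOneVec (hne (by decide))).2
  have hli : LinearIndependent ℂ (Fin.init v) := by
    rw [show Fin.init v = ![v 0, v 1] from (FinVec.etaExpand_eq _).symm]
    exact linearIndependent_pair_of_span_singleton_ne (hv 0).isRankOneVec.2.1
      (hv 1).isRankOneVec.2.1 (hne (by decide))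
  refine linearIndependent_finSucc'.2 ⟨hli, fun hmem => ?_⟩
  obtain ⟨i, hi⟩ := exists_span_singleton_eq_of_mem_span hT hli (fun i => (hv _).isRankOneVec)
    (fun h => by
      rw [← hL, h, convDim_eq_zero_iff.2 (subsingleton_numRange (by simp))] at hdim
      omega) (by rw [hL, hdim]) (hv _).isRankOneVec hmem
  exact hne (Fin.castSucc_lt_last i).ne' hi

lemma isFrame (hdim : convDim (numRange T K) = 3) (hv : ∀ i, IsNonEllipticNormal T K (v i))
    (hinj : Function.Injective fun i => ℂ ∙ v i) : IsFrame_s4 T K v :=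
  ⟨linearIndependent hT hK hv hinj, fun i => (hv i).isRankOneVec, hK, hdim⟩

lemma encard_edges_eq_three (hv : ∀ i, IsNonEllipticNormal T K (v i))
    (hinj : Function.Injective fun i => ℂ ∙ v i) {k : Fin 3}
    (h : ∀ i j, i ≠ k → j ≠ k → i ≠ j → ⟪v i, v j⟫_ℂ = ⟪v i, v k⟫_ℂ * ⟪v k, v j⟫_ℂ) :
    (edges (numRange T (K ⊓ (ℂ ∙ v k)ᗮ))).encard = 3 := by
  have hframe := isFrame_starProjection_orthogonal (linearIndependent hT hK hv hinj)
    (fun i => (hv i).isRankOneVec) hK k (hv k).convDim_eq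
  rw [(hv k).encard_edges hT hK, hframe.encard_rankOneLines_of_pairwise hT
    ((pairwise_starProjection_orthogonal_iff k (hv k).norm_eq_one).2 h)]
  norm_num

lemma encard_edges_eq_two (hv : ∀ i, IsNonEllipticNormal T K (v i))
    (hinj : Function.Injective fun i => ℂ ∙ v i) {k : Fin 3}
    (h : ¬∀ i j, i ≠ k → j ≠ k → i ≠ j → ⟪v i, v j⟫_ℂ = ⟪v i, v k⟫_ℂ * ⟪v k, v j⟫_ℂ) :
    (edges (numRange T (K ⊓ (ℂ ∙ v k)ᗮ))).encard = 2 := by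
  have hframe := isFrame_starProjection_orthogonal (linearIndependent hT hK hv hinj)
    (fun i => (hv i).isRankOneVec) hK k (hv k).convDim_eq
  rw [(hv k).encard_edges hT hK, hframe.encard_rankOneLines_of_not_pairwise hT
    (mt (pairwise_starProjection_orthogonal_iff k (hv k).norm_eq_one).1 h)]
  norm_num

lemma pairwise_of_forall_encard_edges_eq_three (hv : ∀ i, IsNonEllipticNormal T K (v i))
    (hinj : Function.Injective fun i => ℂ ∙ v i)
    (h : ∀ k, (edges (numRange T (K ⊓ (ℂ ∙ v k)ᗮ))).encard = 3) :
    Pairwise fun i j => ⟪v i, v j⟫_ℂ = 0 :=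
  pairwise_inner_eq_zero_of_forall_inner_eq_mul (fun i => (hv i).norm_eq_one) hinj fun k => by
    by_contra hk
    have := (encard_edges_eq_two hT hK hv hinj hk).symm.trans (h k)
    norm_num at this

lemma exists_ne_of_forall_encard_edges_eq_three (hdim : convDim (numRange T K) = 3)
    (hv : ∀ i, IsNonEllipticNormal T K (v i)) (hinj : Function.Injective fun i => ℂ ∙ v i)
    (h : ∀ k, (edges (numRange T (K ⊓ (ℂ ∙ v k)ᗮ))).encard = 3) :
    ∃ e, IsNonEllipticNormal T K e ∧ ∀ i, ℂ ∙ v i ≠ ℂ ∙ e := by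
  obtain ⟨e, he, he1, hve⟩ := (isFrame hT hK hdim hv hinj).exists_isRankOneVec_orthogonal hT
    (pairwise_of_forall_encard_edges_eq_three hT hK hv hinj h)
  exact ⟨e, (hv 0).of_inner_eq_zero hT hK hdim he he1 (hve 0),
    fun i => span_singleton_ne_of_inner_eq_zero he.2.1 (hve i)⟩

lemma encard_rankOneLines_le (hdim : convDim (numRange T K) = 3)
    (hv : ∀ i, IsNonEllipticNormal T K (v i)) (hinj : Function.Injective fun i => ℂ ∙ v i) :
    (rankOneLines T K).encard ≤ 4 := by
  have hframe := isFrame hT hK hdim hv hinj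
  by_cases h : Pairwise fun i j => ⟪v i, v j⟫_ℂ = 0
  · exact (hframe.encard_rankOneLines_of_pairwise hT h).trans_le (by norm_num)
  · exact (hframe.encard_rankOneLines_of_not_pairwise hT h).trans_le (by norm_num)

lemma encard_edges_eq_three_of_ne (hdim : convDim (numRange T K) = 3)
    (hv : ∀ i, IsNonEllipticNormal T K (v i)) (hinj : Function.Injective fun i => ℂ ∙ v i)
    (he : IsNonEllipticNormal T K e) (hne : ∀ i, ℂ ∙ v i ≠ ℂ ∙ e) (k : Fin 3) :
    (edges (numRange T (K ⊓ (ℂ ∙ v k)ᗮ))).encard = 3 := by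
  obtain ⟨x, hx, hx1, hvx, -⟩ := (isFrame hT hK hdim hv hinj).exists_unit_orthogonal
  obtain ⟨i, hi⟩ | ⟨-, horth⟩ := (isFrame hT hK hdim hv hinj).span_singleton_eq_or hT hx
    (norm_ne_zero_iff.1 (by simp [hx1])) hvx he.isRankOneVec
  · exact absurd hi.symm (hne i)
  · refine encard_edges_eq_three hT hK hv hinj fun i j hi _ hij => ?_
    rw [horth hij, horth hi, zero_mul]

end IsNonEllipticNormal

end NonEllipticFaces

section Corners

variable {V : Type*} [NormedAddCommGroup V] [NormedSpace ℝ V] [FiniteDimensional ℝ V]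

lemma isCompact_convexHull {s : Set V} (hs : IsCompact s) : IsCompact (convexHull ℝ s) := by
  let hull (k : ℕ) : Set V := (fun q : (Fin k → ℝ) × (Fin k → V) => ∑ i, q.1 i • q.2 i) ''
    (stdSimplex ℝ (Fin k) ×ˢ Set.univ.pi fun _ => s)
  have hhull : ∀ k, IsCompact (hull k) := fun k =>
    ((isCompact_stdSimplex ℝ (Fin k)).prod (isCompact_univ_pi fun _ => hs)).image (by fun_prop)
  have heq : convexHull ℝ s = ⋃ k ∈ Finset.range (Module.finrank ℝ V + 2), hull k := by
    refine Set.Subset.antisymm (fun x hx => ?_) (Set.iUnion₂_subset fun k _ => ?_)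
    · obtain ⟨ι, _, z, w, hz, hind, hw, hw1, rfl⟩ := eq_pos_convex_span_of_mem_convexHull hx
      refine Set.mem_biUnion (x := Fintype.card ι) (Finset.mem_range.2
        (Nat.lt_succ_of_le (hind.card_le_finrank_succ.trans (Nat.succ_le_succ
          (Submodule.finrank_le _))))) ?_
      let f := (Fintype.equivFin ι).symm
      exact ⟨(w ∘ f, z ∘ f), ⟨⟨fun i => (hw _).le, (f.sum_comp w).trans hw1⟩,
        fun i _ => hz ⟨_, rfl⟩⟩, f.sum_comp fun i => w i • z i⟩
    · rintro _ ⟨⟨w, z⟩, ⟨⟨hw, hw1⟩, hz⟩, rfl⟩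
      exact (convex_convexHull ℝ s).sum_mem (fun i _ => hw i) hw1 fun i _ =>
        subset_convexHull ℝ s (hz i trivial)
  rw [heq]
  exact Finset.isCompact_biUnion _ fun k _ => hhull k

variable {d : ℕ}

lemma mem_normalConeAt_iff {C : Set (Fin d → ℝ)} {p u : Fin d → ℝ} :
    u ∈ normalConeAt C p ↔ ∀ y ∈ C, u ⬝ᵥ p ≤ u ⬝ᵥ y := by
  refine forall₂_congr fun y _ => ?_
  rw [← sub_nonneg (a := u ⬝ᵥ y), ← dotProduct_sub, dotProduct_comm]
  rfl

lemma isCornerPoint_of_forall_le {C C' : Set (Fin d → ℝ)} {p : Fin d → ℝ} (hp : p ∈ C)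
    (hC' : IsCompact C') (hconv : Convex ℝ C') (hpC' : p ∉ C')
    (h : ∀ u, (∀ y ∈ C', u ⬝ᵥ p ≤ u ⬝ᵥ y) → ∀ y ∈ C, u ⬝ᵥ p ≤ u ⬝ᵥ y) : IsCornerPoint C p := by
  obtain ⟨f, c, hfp, hf⟩ := geometric_hahn_banach_point_closed hconv hC'.isClosed hpC'
  obtain ⟨u, hu⟩ := (dotProductEquiv ℝ (Fin d)).surjective (f : (Fin d → ℝ) →ₗ[ℝ] ℝ)
  have hfu : ∀ y, f y = u ⬝ᵥ y := fun y => (LinearMap.congr_fun hu y).symm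
  have hnhds : ∀ᶠ v in nhds u, ∀ y ∈ C', v ⬝ᵥ p < v ⬝ᵥ y :=
    hC'.eventually_forall_of_forall_eventually fun y hy =>
      ((continuous_fst.dotProduct continuous_const).continuousAt).eventually_lt
        ((continuous_fst.dotProduct continuous_snd).continuousAt) (by
          rw [← hfu, ← hfu]
          exact hfp.trans (hf y hy))
  refine ⟨hp, Submodule.eq_top_of_nonempty_interior' _ ⟨u, mem_interior_iff_mem_nhds.2 ?_⟩⟩
  filter_upwards [hnhds] with v hv
  exact Submodule.subset_span (mem_normalConeAt_iff.2 (h v fun y hy => (hv y hy).le))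

end Corners

section CommonEigenvectors

variable {E : Type*} [NormedAddCommGroup E] [InnerProductSpace ℂ E] {d m : ℕ}

/-- `e ∈ K` is an eigenvector of all compressions of the pencil to `K`. -/
def IsCommonEigenvec (T : Fin d → E →ₗ[ℂ] E) (K : Submodule ℂ E) (e : E) : Prop :=
  e ∈ K ∧ ∀ p, ∀ x ∈ K, ⟪x, e⟫_ℂ = 0 → ⟪x, pencil T p e⟫_ℂ = 0

variable {T : Fin d → E →ₗ[ℂ] E} {K L : Submodule ℂ E} {u : Fin d → ℝ}
  {v w z e : E}

namespace IsCommonEigenvec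

lemma mono (he : IsCommonEigenvec T K e) (hL : L ≤ K) (heL : e ∈ L) : IsCommonEigenvec T L e :=
  ⟨heL, fun p x hx => he.2 p x (hL hx)⟩

lemma forall_le_dotProduct (hT : ∀ i, (T i).IsSymmetric) (he : IsCommonEigenvec T K e)
    (he1 : ‖e‖ = 1) (h : ∀ y ∈ numRange T (K ⊓ (ℂ ∙ e)ᗮ), u ⬝ᵥ quadMap T e ≤ u ⬝ᵥ y) :
    ∀ y ∈ numRange T K, u ⬝ᵥ quadMap T e ≤ u ⬝ᵥ y := by
  rw [forall_le_dotProduct_numRange_iff] at h ⊢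
  intro x hx
  obtain ⟨α, y, hy, rfl⟩ := exists_eq_smul_add he.1 he1 hx
  have hye := mem_inf_orthogonal_singleton.1 hy
  have hee := re_inner_pencil T u (u ⬝ᵥ quadMap T e) (α • e)
  rw [quadMap_smul, norm_smul, he1, mul_one, dotProduct_smul, smul_eq_mul, mul_comm, sub_self]
    at hee
  rw [re_inner_add_map_add (isSymmetric_pencil hT _), hee, map_smul, inner_smul_right,
    he.2 _ y hye.1 (inner_eq_zero_symm.1 hye.2)]
  simpa using h y hy

lemma isCornerPoint [FiniteDimensional ℂ E] (hT : ∀ i, (T i).IsSymmetric)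
    (he : IsCommonEigenvec T K e) (he1 : ‖e‖ = 1)
    (hne : quadMap T e ∉ numRange T (K ⊓ (ℂ ∙ e)ᗮ)) :
    IsCornerPoint (numRange T K) (quadMap T e) :=
  isCornerPoint_of_forall_le (quadMap_mem_numRange he.1 he1)
    (isCompact_convexHull (isCompact_image_quadMap T _)) (convex_numRange T _) hne
    fun _ => he.forall_le_dotProduct hT he1

lemma subsingleton_numRange (hT : ∀ i, (T i).IsSymmetric) (he : IsCommonEigenvec T K e)
    (he1 : ‖e‖ = 1) (h : numRange T (K ⊓ (ℂ ∙ e)ᗮ) ⊆ {quadMap T e}) :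
    (numRange T K).Subsingleton := by
  have hle : ∀ u, ∀ y ∈ numRange T K, u ⬝ᵥ quadMap T e ≤ u ⬝ᵥ y := fun u =>
    he.forall_le_dotProduct hT he1 fun y hy => by rw [h hy]
  refine (Set.subsingleton_singleton (a := quadMap T e)).anti fun y hy =>
    dotProduct_eq _ _ fun u => ?_
  have hneg := hle (-u) y hy
  rw [neg_dotProduct, neg_dotProduct, neg_le_neg_iff] at hneg
  rw [dotProduct_comm, dotProduct_comm _ u]
  exact hneg.antisymm (hle u y hy)

lemma inner_eq_zero_or_span_eq (he : IsCommonEigenvec T K e)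
    (hz : IsRankOneVec T K z) : ⟪z, e⟫_ℂ = 0 ∨ ℂ ∙ e = ℂ ∙ z := by
  obtain ⟨hzK, hz0, p, hp⟩ := hz
  refine or_iff_not_imp_left.2 fun hze =>
    (span_singleton_eq_of_inf_orthogonal_le hzK hz0 he.1 fun x hx => ?_).symm
  obtain ⟨hxK, hex⟩ := mem_inf_orthogonal_singleton.1 hx
  have h0 := he.2 p x hxK (inner_eq_zero_symm.1 hex)
  rw [hp e he.1 x hxK] at h0
  exact Submodule.mem_orthogonal_singleton_iff_inner_left.2
    ((mul_eq_zero.1 h0).resolve_right hze)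

lemma of_inf_orthogonal (he : IsCommonEigenvec T (K ⊓ (ℂ ∙ v)ᗮ) e) (hw : w ∈ K)
    (hvw : ⟪v, w⟫_ℂ ≠ 0) (hwe : ⟪w, e⟫_ℂ = 0) (h : ∀ p, ⟪w, pencil T p e⟫_ℂ = 0) :
    IsCommonEigenvec T K e := by
  refine ⟨he.1.1, fun p x hx hxe => ?_⟩
  have hx' : x - (⟪v, x⟫_ℂ / ⟪v, w⟫_ℂ) • w ∈ K ⊓ (ℂ ∙ v)ᗮ := mem_inf_orthogonal_singleton.2
    ⟨K.sub_mem hx (K.smul_mem _ hw), by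
      rw [inner_sub_right, inner_smul_right, div_mul_cancel₀ _ hvw, sub_self]⟩
  have hxp := he.2 p _ hx' (by
    rw [inner_sub_left, inner_smul_left, hxe, hwe, mul_zero, sub_zero])
  rwa [inner_sub_left, inner_smul_left, h, mul_zero, sub_zero] at hxp

end IsCommonEigenvec

lemma IsFrame_s4.isCommonEigenvec [FiniteDimensional ℂ E] (hT : ∀ i, (T i).IsSymmetric)
    {w : Fin m → E} (hw : IsFrame_s4 T K w) (he : e ∈ K)
    (h : ∀ i, ⟪w i, e⟫_ℂ = 0 ∨ ℂ ∙ e = ℂ ∙ w i) : IsCommonEigenvec T K e := by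
  refine ⟨he, fun p x hx hxe => ?_⟩
  obtain ⟨a, t, hp⟩ := hw.exists_inner_pencil_eq hT p
  rw [hp e he x hx, inner_add_right, inner_smul_right_eq_smul, hxe, smul_zero, zero_add,
    inner_sum]
  refine Finset.sum_eq_zero fun i _ => ?_
  obtain hi | hi := h i
  · rw [hi, mul_zero, zero_smul, inner_zero_right]
  · obtain ⟨c, hc⟩ := Submodule.mem_span_singleton.1 (hi ▸ Submodule.mem_span_singleton_self (w i))
    rw [inner_smul_right, ← hc, inner_smul_right, hxe, mul_zero, mul_zero]

end CommonEigenvectors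

namespace IsNonEllipticNormal

variable {E : Type*} [NormedAddCommGroup E] [InnerProductSpace ℂ E] [FiniteDimensional ℂ E]
  {T : Fin 3 → E →ₗ[ℂ] E} {K : Submodule ℂ E} {v v₁ v₂ w z e : E}
  (hT : ∀ i, (T i).IsSymmetric) (hK : Module.finrank ℂ K = 4)

include hK

lemma finrank_inf_eq_two (hv : IsNonEllipticNormal T K v) (hw : IsRankOneVec T K w)
    (hne : ℂ ∙ v ≠ ℂ ∙ w) : Module.finrank ℂ ↥(K ⊓ (ℂ ∙ v)ᗮ ⊓ (ℂ ∙ w)ᗮ) = 2 := by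
  have hPw := starProjection_orthogonal_ne_zero hw.2.1 hne
  have h := finrank_inf_orthogonal_singleton
    (starProjection_orthogonal_mem hv.isRankOneVec.1 hw.1) hPw
  rw [inf_orthogonal_starProjection, hv.finrank_eq hK] at h
  omega

include hT

lemma isCornerPoint (hv₁ : IsNonEllipticNormal T K v₁) (hv₂ : IsRankOneVec T K v₂)
    (hne : ℂ ∙ v₁ ≠ ℂ ∙ v₂) (he : IsCommonEigenvec T K e) (he1 : ‖e‖ = 1) (h₁ : ⟪v₁, e⟫_ℂ = 0)
    (h₂ : ⟪v₂, e⟫_ℂ = 0) : IsCornerPoint (numRange T K) (quadMap T e) := by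
  refine he.isCornerPoint hT he1 fun hmem => ?_
  have heL : e ∈ K ⊓ (ℂ ∙ v₁)ᗮ ⊓ (ℂ ∙ v₂)ᗮ := mem_inf_orthogonal_singleton.2
    ⟨mem_inf_orthogonal_singleton.2 ⟨he.1, h₁⟩, h₂⟩
  have hN : quadMap T e ∈ numRange T (K ⊓ (ℂ ∙ v₁)ᗮ ⊓ (ℂ ∙ v₂)ᗮ ⊓ (ℂ ∙ e)ᗮ) := by
    rw [inf_right_comm _ _ (ℂ ∙ e)ᗮ, inf_right_comm _ _ (ℂ ∙ e)ᗮ,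
      hv₂.quadMap_mem_numRange_inf_iff hT (inf_le_left.trans inf_le_left) he.1 he1,
      hv₁.isRankOneVec.quadMap_mem_numRange_inf_iff hT inf_le_left he.1 he1]
    exact ⟨⟨hmem, h₁⟩, h₂⟩
  have hsub : (numRange T (K ⊓ (ℂ ∙ v₁)ᗮ ⊓ (ℂ ∙ v₂)ᗮ ⊓ (ℂ ∙ e)ᗮ)).Subsingleton := by
    refine _root_.subsingleton_numRange ?_
    have := finrank_inf_orthogonal_singleton heL (norm_ne_zero_iff.1 (by simp [he1]))
    have := hv₁.finrank_inf_eq_two hK hv₂ hne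
    omega
  have hdim := (hv₁.numRange_inf_mem_edges hT hK hv₂ hne).2
  rw [convDim_eq_zero_iff.2 ((he.mono (inf_le_left.trans inf_le_left) heL).subsingleton_numRange hT
    he1 fun y hy => hsub hy hN)] at hdim
  omega

lemma exists_isFrame_pair (hv : IsNonEllipticNormal T K v)
    (hw : IsRankOneVec T (K ⊓ (ℂ ∙ v)ᗮ) w)
    (h : 1 < (edges (numRange T (K ⊓ (ℂ ∙ v)ᗮ))).encard) :
    ∃ z, IsFrame_s4 T (K ⊓ (ℂ ∙ v)ᗮ) ![w, z] := by
  rw [hv.encard_edges hT hK, Set.one_lt_encard_iff_nontrivial] at h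
  obtain ⟨_, ⟨z, hz, rfl⟩, hne⟩ := h.exists_ne (ℂ ∙ w)
  exact ⟨z, linearIndependent_pair_of_span_singleton_ne hw.2.1 hz.2.1 hne.symm,
    Fin.forall_fin_two.2 ⟨hw, hz⟩, hv.finrank_eq hK, hv.convDim_eq⟩

lemma inner_eq_zero_of_isFrame_pair (hv : IsNonEllipticNormal T K v)
    (hwz : IsFrame_s4 T (K ⊓ (ℂ ∙ v)ᗮ) ![w, z])
    (h : (edges (numRange T (K ⊓ (ℂ ∙ v)ᗮ))).encard = 3) : ⟪w, z⟫_ℂ = 0 := by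
  by_contra hne
  rw [hv.encard_edges hT hK, hwz.encard_rankOneLines_of_not_pairwise hT
    fun hp => hne (hp zero_ne_one)] at h
  norm_num at h

lemma exists_isCornerPoint (hdim : convDim (numRange T K) = 3) {v : Fin 3 → E}
    (hv : ∀ i, IsNonEllipticNormal T K (v i)) (hinj : Function.Injective fun i => ℂ ∙ v i) :
    ∃ p, IsCornerPoint (numRange T K) p := by
  have hframe := isFrame hT hK hdim hv hinj
  obtain ⟨e, he, he1, hve, -⟩ := hframe.exists_unit_orthogonal
  exact ⟨_, (hv 0).isCornerPoint hT hK (hv 1).isRankOneVec (hinj.ne zero_ne_one)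
    (hframe.isCommonEigenvec hT he fun i => .inl (hve i)) he1 (hve 0) (hve 1)⟩

lemma isCommonEigenvec_inf_of_encard_edges_eq_three (hv₁ : IsNonEllipticNormal T K v₁)
    (hv₂ : IsRankOneVec T K v₂) (hne : ℂ ∙ v₁ ≠ ℂ ∙ v₂)
    (h : (edges (numRange T (K ⊓ (ℂ ∙ v₁)ᗮ))).encard = 3)
    (he : IsCommonEigenvec T (K ⊓ (ℂ ∙ v₁)ᗮ ⊓ (ℂ ∙ v₂)ᗮ) e) :
    IsCommonEigenvec T (K ⊓ (ℂ ∙ v₁)ᗮ) e := by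
  have hw := hv₂.starProjection_orthogonal hv₁.isRankOneVec.1
    (starProjection_orthogonal_ne_zero hv₂.2.1 hne)
  obtain ⟨z, hwz⟩ := hv₁.exists_isFrame_pair hT hK hw (by rw [h]; norm_num)
  have hz : IsRankOneVec T (K ⊓ (ℂ ∙ v₁)ᗮ) z := hwz.isRankOneVec 1
  rw [← inf_orthogonal_starProjection] at he
  have hzL : IsRankOneVec T (K ⊓ (ℂ ∙ v₁)ᗮ ⊓ (ℂ ∙ (ℂ ∙ v₁)ᗮ.starProjection v₂)ᗮ) z :=
    hz.restrict inf_le_left (mem_inf_orthogonal_singleton.2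
      ⟨hz.1, hv₁.inner_eq_zero_of_isFrame_pair hT hK hwz h⟩) hz.2.1 fun _ _ => rfl
  exact hwz.isCommonEigenvec hT he.1.1 (Fin.forall_fin_two.2
    ⟨.inl (mem_inf_orthogonal_singleton.1 he.1).2, he.inner_eq_zero_or_span_eq hzL⟩)

lemma exists_isCornerPoint_of_encard_edges_eq_three (hv₁ : IsNonEllipticNormal T K v₁)
    (hv₂ : IsNonEllipticNormal T K v₂) (hne : ℂ ∙ v₁ ≠ ℂ ∙ v₂)
    (h₁ : (edges (numRange T (K ⊓ (ℂ ∙ v₁)ᗮ))).encard = 3)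
    (h₂ : 1 < (edges (numRange T (K ⊓ (ℂ ∙ v₂)ᗮ))).encard) :
    ∃ p, IsCornerPoint (numRange T K) p := by
  set w := (ℂ ∙ v₂)ᗮ.starProjection v₁
  have hw0 : w ≠ 0 := starProjection_orthogonal_ne_zero hv₁.isRankOneVec.2.1 hne.symm
  have hw := hv₁.isRankOneVec.starProjection_orthogonal hv₂.isRankOneVec.1 hw0
  have hv₁w : ⟪v₁, w⟫_ℂ ≠ 0 := by
    rw [← inner_starProjection_orthogonal_left hw.1.2]
    exact inner_self_ne_zero.2 hw0
  obtain ⟨z, hwz⟩ := hv₂.exists_isFrame_pair hT hK hw h₂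
  obtain ⟨e, he, he1, hwze, -⟩ := hwz.exists_unit_orthogonal
  have hwe : ⟪w, e⟫_ℂ = 0 := hwze 0
  have he₂ := hwz.isCommonEigenvec hT he fun i => .inl (hwze i)
  have hve : ⟪v₁, e⟫_ℂ = 0 := by rwa [← inner_starProjection_orthogonal_left he.2]
  have he₁ := hv₁.isCommonEigenvec_inf_of_encard_edges_eq_three hT hK hv₂.isRankOneVec hne h₁
    (e := e) <| he₂.mono (inf_right_comm K _ _ ▸ inf_le_left)
      (mem_inf_orthogonal_singleton.2 ⟨mem_inf_orthogonal_singleton.2 ⟨he.1, hve⟩,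
        (mem_inf_orthogonal_singleton.1 he).2⟩)
  exact ⟨_, hv₁.isCornerPoint hT hK hv₂.isRankOneVec hne
    (he₁.of_inf_orthogonal hw.1.1 hv₁w hwe fun p => he₂.2 p w hw.1 hwe) he1 hve
    (mem_inf_orthogonal_singleton.1 he).2⟩

end IsNonEllipticNormal

section SumQuadMap

variable {E : Type*} [NormedAddCommGroup E] [InnerProductSpace ℂ E] {d : ℕ}
  {T : Fin d → E →ₗ[ℂ] E} {K : Submodule ℂ E}

lemma sum_quadMap_mem_numRange {ι : Type*} [Fintype ι] {x : ι → E} (hx : ∀ i, x i ∈ K)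
    (h : ∑ i, ‖x i‖ ^ 2 = 1) : ∑ i, quadMap T (x i) ∈ numRange T K := by
  have hunit : ∀ i, ∃ z, (‖x i‖ ^ 2 ≠ 0 → z ∈ numRange T K) ∧
      quadMap T (x i) = ‖x i‖ ^ 2 • z := fun i => by
    rcases eq_or_ne (x i) 0 with hi | hi
    · exact ⟨0, by simp [hi], by ext; simp [hi, quadMap]⟩
    · obtain ⟨a, -, hmem, hnorm⟩ := exists_smul_mem_norm_eq_one (hx i) hi
      refine ⟨quadMap T (a • x i), fun _ => quadMap_mem_numRange hmem hnorm, ?_⟩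
      rw [quadMap_smul, smul_smul, ← mul_pow, mul_comm, ← norm_smul, hnorm, one_pow, one_smul]
  choose z hz hquad using hunit
  simp only [hquad]
  rw [← finsum_eq_sum_of_fintype] at h ⊢
  exact (convex_numRange T K).finsum_mem (fun i => by positivity) h hz

end SumQuadMap

section Matrices

variable {n : Type*} [Fintype n] {d : ℕ}

lemma trace_vecMulVec_ofLp (x : EuclideanSpace ℂ n) :
    (vecMulVec x.ofLp (star x.ofLp)).trace = (‖x‖ ^ 2 : ℝ) := by
  rw [trace_vecMulVec, ← EuclideanSpace.inner_eq_star_dotProduct, inner_self_eq_norm_sq_to_K,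
    Complex.ofReal_pow]
  rfl

lemma isLinearMap_wpt (A : Fin d → Matrix n n ℂ) : IsLinearMap ℝ (wpt A) where
  map_add ρ σ := by
    ext
    simp [wpt, add_mul]
  map_smul c ρ := by
    ext
    simp [wpt]

lemma convex_setOf_isDensity : Convex ℝ {ρ : Matrix n n ℂ | IsDensity ρ} := by
  rintro ρ ⟨hρ, hρ1⟩ σ ⟨hσ, hσ1⟩ a b ha hb hab
  refine ⟨(hρ.smul ha).add (hσ.smul hb), ?_⟩
  rw [trace_add, trace_smul, trace_smul, hρ1, hσ1, ← add_smul, hab, one_smul]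

variable [DecidableEq n]

lemma wpt_vecMulVec_ofLp (A : Fin d → Matrix n n ℂ) (x : EuclideanSpace ℂ n) :
    wpt A (vecMulVec x.ofLp (star x.ofLp)) = quadMap (fun i => toEuclideanLin (A i)) x := by
  ext i
  simp only [wpt, quadMap]
  rw [vecMulVec_mul, trace_vecMulVec, EuclideanSpace.inner_eq_star_dotProduct,
    ofLp_toLpLin, dotProduct_comm, ← dotProduct_mulVec, dotProduct_comm, toLin'_apply]

lemma JNR_eq_numRange (A : Fin d → Matrix n n ℂ) :
    JNR A = numRange (fun i => toEuclideanLin (A i)) ⊤ := by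
  refine Set.Subset.antisymm ?_ (convexHull_min ?_
    (convex_setOf_isDensity.is_linear_image (isLinearMap_wpt A)))
  · rintro _ ⟨ρ, ⟨hρ, hρ1⟩, rfl⟩
    obtain ⟨m, x, rfl⟩ := posSemidef_iff_eq_sum_vecMulVec.1 hρ
    have hnorm : ∑ k, ‖WithLp.toLp 2 (x k)‖ ^ 2 = 1 := by
      rw [trace_sum, Finset.sum_congr rfl fun k _ => trace_vecMulVec_ofLp (WithLp.toLp 2 (x k)),
        ← Complex.ofReal_sum] at hρ1
      exact_mod_cast hρ1
    have hsum : wpt A (∑ k, vecMulVec (x k) (star (x k))) =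
        ∑ k, quadMap (fun i => toEuclideanLin (A i)) (WithLp.toLp 2 (x k)) :=
      (map_sum (isLinearMap_wpt A).mk' _ _).trans
        (Finset.sum_congr rfl fun k _ => wpt_vecMulVec_ofLp A _)
    rw [hsum]
    exact sum_quadMap_mem_numRange (fun _ => Submodule.mem_top) hnorm
  · rintro _ ⟨x, ⟨-, hx1⟩, rfl⟩
    exact ⟨_, ⟨posSemidef_vecMulVec_self_star _, (trace_vecMulVec_ofLp x).trans (by simp [hx1])⟩,
      wpt_vecMulVec_ofLp A x⟩

end Matrices

section Counting

lemma exists_injective_range_eq_of_encard_eq {α : Type*} {s : Set α} {n : ℕ}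
    (h : s.encard = n) : ∃ f : Fin n → α, Function.Injective f ∧ Set.range f = s := by
  have hfin : s.Finite := Set.finite_of_encard_eq_coe h
  have := hfin.to_subtype
  let f := (Finite.equivFinOfCardEq (α := s) (n := n) (by
    rw [Nat.card_coe_set_eq, Set.ncard, h, ENat.toNat_natCast])).symm
  exact ⟨fun i => f i, Subtype.val_injective.comp f.injective, by
    rw [← Function.comp_def, Set.range_comp, f.range_eq_univ, Set.image_univ, Subtype.range_coe]⟩

variable {W : Set (Fin 3 → ℝ)}

/-- The set of non-elliptic faces of `W`, of any type. -/
def nonEllipticFaces (W : Set (Fin 3 → ℝ)) : Set (Set (Fin 3 → ℝ)) :=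
  {F | IsNonEllipticFace W F}

/-- The number `aₘ` of non-elliptic faces of type `m`. -/
def typeCount (W : Set (Fin 3 → ℝ)) (m : ℕ) : ℕ :=
  {F | IsNonEllFaceOfType W m F}.ncard

lemma setOf_isNonEllFaceOfType (W : Set (Fin 3 → ℝ)) (m : ℕ) :
    {F | IsNonEllFaceOfType W m F} = {F ∈ nonEllipticFaces W | (edges F).encard = m} := by
  ext F
  refine and_congr_right fun _ => ⟨fun h => ?_, fun h => ?_⟩
  · rw [← h.2]
    exact h.1.cast_ncard_eq.symm
  · exact ⟨Set.finite_of_encard_eq_coe h, by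
      rw [Set.ncard]
      exact (congrArg ENat.toNat h).trans (ENat.toNat_natCast m)⟩

lemma sum_typeCount (hfin : (nonEllipticFaces W).Finite) (t : Finset ℕ) :
    ∑ m ∈ t, typeCount W m =
      {F ∈ nonEllipticFaces W | ∃ m ∈ t, (edges F).encard = m}.ncard := by
  classical
  have h := Finset.sum_card_fiberwise_eq_card_filter hfin.toFinset (t.map Nat.castEmbedding)
    fun F => (edges F).encard
  rw [Finset.sum_map] at h
  convert h using 1
  · refine Finset.sum_congr rfl fun m _ => ?_
    rw [typeCount, setOf_isNonEllFaceOfType, ← Set.ncard_coe_finset]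
    simp
  · rw [← Set.ncard_coe_finset]
    simp [eq_comm]

variable {E : Type*} [NormedAddCommGroup E] [InnerProductSpace ℂ E] [FiniteDimensional ℂ E]
  {T : Fin 3 → E →ₗ[ℂ] E} {K : Submodule ℂ E} {F F' : Set (Fin 3 → ℝ)}
  (hT : ∀ i, (T i).IsSymmetric) (hK : Module.finrank ℂ K = 4) (hdim : convDim (numRange T K) = 3)

include hT hK hdim

lemma exists_isNonEllipticNormal_range_eq {𝓖 : Set (Set (Fin 3 → ℝ))} {n : ℕ}
    (h𝓖 : 𝓖 ⊆ nonEllipticFaces (numRange T K)) (h : 𝓖.encard = n) :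
    ∃ v : Fin n → E, (∀ i, IsNonEllipticNormal T K (v i)) ∧ (Function.Injective fun i => ℂ ∙ v i) ∧
      Set.range (fun i => numRange T (K ⊓ (ℂ ∙ v i)ᗮ)) = 𝓖 := by
  obtain ⟨f, hf, rfl⟩ := exists_injective_range_eq_of_encard_eq h
  choose v hv hfv using fun i =>
    exists_isNonEllipticNormal hT hK hdim (h𝓖 (Set.mem_range_self i))
  refine ⟨v, hv, fun i j hij => hf ?_, by simp only [← hfv]⟩
  rw [hfv i, hfv j, show ℂ ∙ v i = ℂ ∙ v j from hij]

lemma nonempty_edges_of_one_lt (h : 1 < (nonEllipticFaces (numRange T K)).encard)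
    (hF : F ∈ nonEllipticFaces (numRange T K)) : (edges F).Nonempty := by
  obtain ⟨F', hF', hne⟩ := Set.exists_ne_of_one_lt_encard h F
  obtain ⟨v, hv, rfl⟩ := exists_isNonEllipticNormal hT hK hdim hF
  obtain ⟨v', hv', rfl⟩ := exists_isNonEllipticNormal hT hK hdim hF'
  exact ⟨_, hv.numRange_inf_mem_edges hT hK hv'.isRankOneVec fun h => hne (by rw [h])⟩

lemma encard_nonEllipticFaces_le : (nonEllipticFaces (numRange T K)).encard ≤ 4 := by
  by_contra! hlt
  obtain ⟨𝓖, h𝓖, hcard⟩ := Set.exists_subset_encard_eq (k := 3) (le_trans (by norm_num) hlt.le)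
  obtain ⟨v, hv, hinj, -⟩ := exists_isNonEllipticNormal_range_eq hT hK hdim h𝓖 hcard
  have hsub : nonEllipticFaces (numRange T K) ⊆
      (fun L => numRange T (K ⊓ Lᗮ)) '' rankOneLines T K := fun F hF => by
    obtain ⟨v, hv, rfl⟩ := exists_isNonEllipticNormal hT hK hdim hF
    exact ⟨_, ⟨v, hv.isRankOneVec, rfl⟩, rfl⟩
  exact hlt.not_ge <| (Set.encard_le_encard hsub).trans <| (Set.encard_image_le _ _).trans <|
    IsNonEllipticNormal.encard_rankOneLines_le hT hK hdim hv hinj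

lemma encard_edges_eq_two_or_three (h : 3 ≤ (nonEllipticFaces (numRange T K)).encard)
    (hF : F ∈ nonEllipticFaces (numRange T K)) :
    (edges F).encard = 2 ∨ (edges F).encard = 3 := by
  obtain ⟨𝓖, hF𝓖, h𝓖, hcard⟩ := Set.exists_superset_subset_encard_eq (k := 3)
    (Set.singleton_subset_iff.2 hF) (by simp) h
  obtain ⟨v, hv, hinj, rfl⟩ := exists_isNonEllipticNormal_range_eq hT hK hdim h𝓖 hcard
  obtain ⟨k, rfl⟩ := Set.singleton_subset_iff.1 hF𝓖
  by_cases hk : ∀ i j, i ≠ k → j ≠ k → i ≠ j → ⟪v i, v j⟫_ℂ = ⟪v i, v k⟫_ℂ * ⟪v k, v j⟫_ℂ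
  · exact .inr (IsNonEllipticNormal.encard_edges_eq_three hT hK hv hinj hk)
  · exact .inl (IsNonEllipticNormal.encard_edges_eq_two hT hK hv hinj hk)

lemma exists_encard_edges_ne_three (h : (nonEllipticFaces (numRange T K)).encard = 3) :
    ∃ F ∈ nonEllipticFaces (numRange T K), (edges F).encard ≠ 3 := by
  obtain ⟨v, hv, hinj, hrange⟩ := exists_isNonEllipticNormal_range_eq hT hK hdim le_rfl h
  by_contra! hall
  obtain ⟨e, he, hne⟩ := IsNonEllipticNormal.exists_ne_of_forall_encard_edges_eq_three hT hK hdim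
    hv hinj fun k => hall _ ((hv k).isNonEllipticFace hT)
  obtain ⟨i, hi⟩ := hrange.ge (he.isNonEllipticFace hT)
  exact hne i ((hv i).isRankOneVec.span_eq_of_numRange_subset hT he.isRankOneVec.1 hi.ge)

lemma encard_edges_eq_three_of_encard_eq_four
    (h : (nonEllipticFaces (numRange T K)).encard = 4)
    (hF : F ∈ nonEllipticFaces (numRange T K)) : (edges F).encard = 3 := by
  obtain ⟨v, hv, hinj, hrange⟩ := exists_isNonEllipticNormal_range_eq hT hK hdim le_rfl h
  obtain ⟨k, rfl⟩ := hrange.ge hF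
  obtain ⟨j, hj⟩ := exists_ne k
  obtain ⟨i, rfl⟩ := Fin.exists_succAbove_eq hj.symm
  exact IsNonEllipticNormal.encard_edges_eq_three_of_ne hT hK hdim
    (v := v ∘ j.succAbove) (fun i => hv _) (hinj.comp Fin.succAbove_right_injective) (hv j)
    (fun i => hinj.ne (Fin.succAbove_ne j i)) i

lemma exists_isCornerPoint_of_three_le (h : 3 ≤ (nonEllipticFaces (numRange T K)).encard) :
    ∃ p, IsCornerPoint (numRange T K) p := by
  obtain ⟨𝓖, h𝓖, hcard⟩ := Set.exists_subset_encard_eq h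
  obtain ⟨v, hv, hinj, -⟩ := exists_isNonEllipticNormal_range_eq hT hK hdim h𝓖 hcard
  exact IsNonEllipticNormal.exists_isCornerPoint hT hK hdim hv hinj

lemma exists_isCornerPoint_of_ne (hF : F ∈ nonEllipticFaces (numRange T K))
    (hF' : F' ∈ nonEllipticFaces (numRange T K)) (hne : F ≠ F') (h : (edges F).encard = 3)
    (h' : 1 < (edges F').encard) : ∃ p, IsCornerPoint (numRange T K) p := by
  obtain ⟨v, hv, rfl⟩ := exists_isNonEllipticNormal hT hK hdim hF
  obtain ⟨v', hv', rfl⟩ := exists_isNonEllipticNormal hT hK hdim hF'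
  exact hv.exists_isCornerPoint_of_encard_edges_eq_three hT hK hv' (fun h => hne (by rw [h])) h h'

lemma finite_nonEllipticFaces : (nonEllipticFaces (numRange T K)).Finite :=
  Set.finite_of_encard_le_coe (encard_nonEllipticFaces_le hT hK hdim)

lemma ncard_nonEllipticFaces_le : (nonEllipticFaces (numRange T K)).ncard ≤ 4 :=
  ENat.toNat_le_of_le_natCast (encard_nonEllipticFaces_le hT hK hdim)

lemma typeCount_zero_eq_zero (h : 1 < (nonEllipticFaces (numRange T K)).ncard) :
    typeCount (numRange T K) 0 = 0 := by
  rw [typeCount, setOf_isNonEllFaceOfType, Set.sep_eq_empty_iff_mem_false.2, Set.ncard_empty]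
  intro F hF h0
  rw [← Nat.cast_lt (α := ℕ∞), (finite_nonEllipticFaces hT hK hdim).cast_ncard_eq] at h
  exact (nonempty_edges_of_one_lt hT hK hdim h hF).ne_empty (Set.encard_eq_zero.1 h0)

lemma cast_ncard_nonEllipticFaces :
    ((nonEllipticFaces (numRange T K)).ncard : ℕ∞) = (nonEllipticFaces (numRange T K)).encard :=
  (finite_nonEllipticFaces hT hK hdim).cast_ncard_eq

lemma sum_typeCount_le :
    typeCount (numRange T K) 0 + typeCount (numRange T K) 1 + typeCount (numRange T K) 2 +
      typeCount (numRange T K) 3 ≤ (nonEllipticFaces (numRange T K)).ncard := by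
  have hfin := finite_nonEllipticFaces hT hK hdim
  calc _ = ∑ m ∈ Finset.range 4, typeCount (numRange T K) m := by simp [Finset.sum_range_succ]
    _ ≤ _ := sum_typeCount hfin _ ▸ Set.ncard_le_ncard (Set.sep_subset _ _) hfin

lemma typeCount_two_add_typeCount_three :
    typeCount (numRange T K) 2 + typeCount (numRange T K) 3 =
      {F ∈ nonEllipticFaces (numRange T K) |
        (edges F).encard = 2 ∨ (edges F).encard = 3}.ncard := by
  simpa using sum_typeCount (finite_nonEllipticFaces hT hK hdim) {2, 3}

lemma typeCount_two_add_typeCount_three_of_three_le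
    (h : 3 ≤ (nonEllipticFaces (numRange T K)).ncard) :
    typeCount (numRange T K) 2 + typeCount (numRange T K) 3 =
      (nonEllipticFaces (numRange T K)).ncard := by
  have h' : 3 ≤ (nonEllipticFaces (numRange T K)).encard := by
    rw [← cast_ncard_nonEllipticFaces hT hK hdim]
    exact_mod_cast h
  rw [typeCount_two_add_typeCount_three hT hK hdim, Set.sep_eq_self_iff_mem_true.2]
  exact fun F => encard_edges_eq_two_or_three hT hK hdim h'

lemma typeCount_three_eq_ncard_iff :
    typeCount (numRange T K) 3 = (nonEllipticFaces (numRange T K)).ncard ↔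
      ∀ F ∈ nonEllipticFaces (numRange T K), (edges F).encard = 3 := by
  rw [typeCount, setOf_isNonEllFaceOfType, ← Set.sep_eq_self_iff_mem_true]
  exact ⟨fun h => Set.eq_of_subset_of_ncard_le (Set.sep_subset _ _) h.ge
    (finite_nonEllipticFaces hT hK hdim), congrArg Set.ncard⟩

lemma typeCount_three_ne_three (h : (nonEllipticFaces (numRange T K)).ncard = 3) :
    typeCount (numRange T K) 3 ≠ 3 := by
  obtain ⟨F, hF, hne⟩ := exists_encard_edges_ne_three hT hK hdim
    (by rw [← cast_ncard_nonEllipticFaces hT hK hdim, h]; rfl)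
  exact fun h₃ => hne ((typeCount_three_eq_ncard_iff hT hK hdim).1 (h₃.trans h.symm) F hF)

lemma typeCount_three_eq_four (h : (nonEllipticFaces (numRange T K)).ncard = 4) :
    typeCount (numRange T K) 3 = 4 := by
  refine ((typeCount_three_eq_ncard_iff hT hK hdim).2 ?_).trans h
  exact fun F => encard_edges_eq_three_of_encard_eq_four hT hK hdim
    (by rw [← cast_ncard_nonEllipticFaces hT hK hdim, h]; rfl)

lemma exists_isCornerPoint_of_three_le_ncard
    (h : 3 ≤ (nonEllipticFaces (numRange T K)).ncard) : ∃ p, IsCornerPoint (numRange T K) p :=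
  exists_isCornerPoint_of_three_le hT hK hdim (by
    rw [← cast_ncard_nonEllipticFaces hT hK hdim]
    exact_mod_cast h)

lemma exists_isCornerPoint_of_typeCount_three_pos (h₃ : typeCount (numRange T K) 3 ≠ 0)
    (h : 1 < typeCount (numRange T K) 2 + typeCount (numRange T K) 3) :
    ∃ p, IsCornerPoint (numRange T K) p := by
  rw [typeCount, setOf_isNonEllFaceOfType] at h₃
  obtain ⟨F, hF, hF3⟩ := Set.nonempty_of_ncard_ne_zero h₃
  rw [typeCount_two_add_typeCount_three hT hK hdim] at h
  obtain ⟨F', ⟨hF', h'⟩, hne⟩ := Set.exists_ne_of_one_lt_ncard h F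
  refine exists_isCornerPoint_of_ne hT hK hdim hF hF' hne.symm hF3 ?_
  rcases h' with h' | h' <;> rw [h'] <;> norm_num

end Counting

/-- classification of the possible numbers of non-elliptic faces
of each type, and existence of corner points in six of the classes. -/
theorem stmt4 (A : Fin 3 → Matrix (Fin 4) (Fin 4) ℂ)
    (hA : ∀ i, (A i).IsHermitian)
    (hdim : convDim (JNR A) = 3) :
    (∀ m, {F | IsNonEllFaceOfType (JNR A) m F}.Finite) ∧
    (({F | IsNonEllFaceOfType (JNR A) 0 F}.ncard,
      {F | IsNonEllFaceOfType (JNR A) 1 F}.ncard,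
      {F | IsNonEllFaceOfType (JNR A) 2 F}.ncard,
      {F | IsNonEllFaceOfType (JNR A) 3 F}.ncard) ∈
      ({(0,0,0,0),(1,0,0,0),(0,1,0,0),(0,2,0,0),(0,1,1,0),(0,1,0,1),(0,0,1,0),
        (0,0,2,0),(0,0,3,0),(0,0,1,1),(0,0,1,2),(0,0,2,1),(0,0,0,1),(0,0,0,2),
        (0,0,0,4)} : Set (ℕ × ℕ × ℕ × ℕ))) ∧
    ((({F | IsNonEllFaceOfType (JNR A) 0 F}.ncard,
       {F | IsNonEllFaceOfType (JNR A) 1 F}.ncard,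
       {F | IsNonEllFaceOfType (JNR A) 2 F}.ncard,
       {F | IsNonEllFaceOfType (JNR A) 3 F}.ncard) ∈
      ({(0,0,3,0),(0,0,1,1),(0,0,1,2),(0,0,2,1),(0,0,0,2),(0,0,0,4)} :
        Set (ℕ × ℕ × ℕ × ℕ))) →
      ∃ p, IsCornerPoint (JNR A) p) := by
  have hT (i) : (toEuclideanLin (A i)).IsSymmetric :=
    Matrix.isSymmetric_toEuclideanLin_iff.2 (hA i)
  have hK : Module.finrank ℂ (⊤ : Submodule ℂ (EuclideanSpace ℂ (Fin 4))) = 4 := by simp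
  rw [JNR_eq_numRange] at hdim
  have hfin := finite_nonEllipticFaces hT hK hdim
  have hle := ncard_nonEllipticFaces_le hT hK hdim
  have hsum := sum_typeCount_le hT hK hdim
  have h₀ := typeCount_zero_eq_zero hT hK hdim
  have h₂₃ := typeCount_two_add_typeCount_three_of_three_le hT hK hdim
  have h₃ := typeCount_three_ne_three hT hK hdim
  have h₄ := typeCount_three_eq_four hT hK hdim
  have hcorner := exists_isCornerPoint_of_three_le_ncard hT hK hdim
  have hcorner₃ := exists_isCornerPoint_of_typeCount_three_pos hT hK hdim
  rw [← JNR_eq_numRange] at hfin hle hsum h₀ h₂₃ h₃ h₄ hcorner hcorner₃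
  simp only [← typeCount.eq_1, Set.mem_insert_iff, Set.mem_singleton_iff, Prod.mk.injEq]
  refine ⟨fun m => hfin.subset fun F hF => hF.1, by grind (splits := 30), fun h => ?_⟩
  by_cases h₃' : typeCount (JNR A) 3 = 0
  · exact hcorner (by omega)
  · exact hcorner₃ h₃' (by omega)
end
end
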